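/- Fix n ≥ 2. For a natural number B, let T(B) be the (finite) set of matrices M : Matrix (Fin n) (Fin n) ℤ with det M = 1 and |M i j| ≤ B for all i, j, and let R(B) ⊆ T(B) be the subset of those M for which the characteristic polynomial of M, mapped to ℚ[X], is not irreducible. Then the ratio |R(B)| / |T(B)| tends to 0 as B tends to infinity. -/

import Mathlib

section PartA1

open Polynomial

theorem aux_fac (a b : ℕ) (e e' : ℤ) :
    ∃ P : MvPolynomial (Fin (a+b+1)) ℚ, P ≠ 0 ∧ ∀ g h : ℤ[X], g.Monic → h.Monic →
      g.natDegree = a+1 → h.natDegree = b+1 → g.coeff 0 = e → h.coeff 0 = e' →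
      MvPolynomial.eval (fun i : Fin (a+b+1) => ((g*h).coeff (i+1) : ℚ)) P = 0 := by
  classical
  let R := MvPolynomial (Fin a ⊕ Fin b) ℚ
  let G : R[X] := X^(a+1) + (∑ i : Fin a, C (MvPolynomial.X (Sum.inl i)) * X^((i:ℕ)+1) + C (algebraMap ℚ R (e:ℚ)))
  let H : R[X] := X^(b+1) + (∑ i : Fin b, C (MvPolynomial.X (Sum.inr i)) * X^((i:ℕ)+1) + C (algebraMap ℚ R (e':ℚ)))
  let x : Fin (a+b+1) → R := fun i => (G*H).coeff (i+1)
  have hx : ¬ AlgebraicIndependent ℚ x := by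
    intro h
    have := h.cardinalMk_le_trdeg
    rw [MvPolynomial.trdeg_of_isDomain] at this
    simp only [Cardinal.mk_fintype, Fintype.card_fin, Fintype.card_sum, Cardinal.lift_natCast] at this
    have := Nat.cast_le.1 this
    omega
  rw [algebraicIndependent_iff] at hx
  push Not at hx
  obtain ⟨P, hP, hP0⟩ := hx
  refine ⟨P, hP0, ?_⟩
  intro g h hg hh dg dh cg ch
  let φ : R →ₐ[ℚ] ℚ := MvPolynomial.aeval (Sum.elim (fun i => (g.coeff (i+1) : ℚ)) (fun i => (h.coeff (i+1):ℚ)))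
  have hG : G.map (φ : R →+* ℚ) = g.map (Int.castRingHom ℚ) := by
    conv_rhs => rw [hg.as_sum, dg, Finset.sum_range_succ', cg]
    have hφ : ∀ i : Fin a, φ (MvPolynomial.X (Sum.inl i)) = (g.coeff (i+1) : ℚ) := fun i =>
      MvPolynomial.aeval_X _ _
    simp [G, Polynomial.map_sum, Finset.sum_range, hφ]
  have hH : H.map (φ : R →+* ℚ) = h.map (Int.castRingHom ℚ) := by
    conv_rhs => rw [hh.as_sum, dh, Finset.sum_range_succ', ch]
    have hφ : ∀ i : Fin b, φ (MvPolynomial.X (Sum.inr i)) = (h.coeff (i+1) : ℚ) := fun i =>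
      MvPolynomial.aeval_X _ _
    simp [H, Polynomial.map_sum, Finset.sum_range, hφ]
  have hGH : ∀ i, φ ((G*H).coeff i) = ((g*h).coeff i : ℚ) := by
    intro i
    have : ((G*H).map (φ : R →+* ℚ)).coeff i = ((g*h).map (Int.castRingHom ℚ)).coeff i := by
      rw [Polynomial.map_mul, Polynomial.map_mul, hG, hH]
    rw [coeff_map, coeff_map] at this
    exact this
  have h3 : φ (MvPolynomial.aeval x P) = 0 := by rw [hP, map_zero]
  rw [MvPolynomial.comp_aeval_apply] at h3
  have hfun : (fun i : Fin (a+b+1) => ((g*h).coeff (i+1) : ℚ)) = fun i => φ (x i) :=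
    funext fun i => (hGH _).symm
  rw [hfun]
  exact h3

theorem exists_P (d : ℕ) :
    ∃ P : MvPolynomial (Fin d) ℚ, P ≠ 0 ∧ ∀ f : ℤ[X], f.Monic → f.natDegree = d+1 →
      f.coeff 0 * f.coeff 0 = 1 → ¬ Irreducible (f.map (algebraMap ℤ ℚ)) →
      MvPolynomial.eval (fun i : Fin d => (f.coeff (i+1) : ℚ)) P = 0 := by
  classical
  have key : ∀ k : Fin d, ∀ e e' : ℤ, ∃ P : MvPolynomial (Fin d) ℚ, P ≠ 0 ∧ ∀ g h : ℤ[X], g.Monic → h.Monic →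
      g.natDegree = k+1 → h.natDegree = d-k → g.coeff 0 = e → h.coeff 0 = e' →
      MvPolynomial.eval (fun i : Fin d => ((g*h).coeff (i+1) : ℚ)) P = 0 := by
    rintro ⟨kk, hk⟩ e e'
    obtain ⟨b, rfl⟩ : ∃ b, d = kk + b + 1 := ⟨d - kk - 1, by omega⟩
    have := aux_fac kk b e e'
    rw [show kk + b + 1 - kk = b + 1 by omega]
    exact this
  choose P hP0 hP using key
  refine ⟨∏ k, P k 1 1 * P k 1 (-1) * P k (-1) 1 * P k (-1) (-1), ?_, ?_⟩
  · rw [Finset.prod_ne_zero_iff]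
    intro k _
    simp [hP0]
  · intro f hf hd hc hirr
    rw [← hf.irreducible_iff_irreducible_map_fraction_map, hf.irreducible_iff_natDegree] at hirr
    have hf1 : f ≠ 1 := by
      rintro rfl
      simp at hd
    push Not at hirr
    obtain ⟨g, h, hg, hh, rfl, dg, dh⟩ := hirr hf1
    rw [hg.natDegree_mul hh] at hd
    rw [mul_coeff_zero] at hc
    have u1 : IsUnit (g.coeff 0) := IsUnit.of_mul_eq_one (h.coeff 0 * (g.coeff 0 * h.coeff 0)) (by linarith)
    have u2 : IsUnit (h.coeff 0) := IsUnit.of_mul_eq_one (g.coeff 0 * (g.coeff 0 * h.coeff 0)) (by linarith)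
    rw [MvPolynomial.eval_prod]
    apply Finset.prod_eq_zero (Finset.mem_univ (⟨g.natDegree - 1, by omega⟩ : Fin d))
    have := fun e e' => hP ⟨g.natDegree - 1, by omega⟩ e e' g h hg hh (by simp; omega) (by simp; omega)
    simp only [map_mul, mul_eq_zero]
    rcases Int.isUnit_iff.1 u1 with h1 | h1 <;> rcases Int.isUnit_iff.1 u2 with h2 | h2
    · exact Or.inl (Or.inl (Or.inl (this _ _ h1 h2)))
    · exact Or.inl (Or.inl (Or.inr (this _ _ h1 h2)))
    · exact Or.inl (Or.inr (this _ _ h1 h2))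
    · exact Or.inr (this _ _ h1 h2)

theorem top_coeff {d : ℕ} (P : MvPolynomial (Fin d) ℚ) (D : ℕ) (hD : P.totalDegree ≤ D) (b c : Fin d → ℚ) :
    (MvPolynomial.aeval (fun i => C (b i) + C (c i) * X : Fin d → ℚ[X]) P).natDegree ≤ D ∧
    (MvPolynomial.aeval (fun i => C (b i) + C (c i) * X : Fin d → ℚ[X]) P).coeff D =
      MvPolynomial.eval c (MvPolynomial.homogeneousComponent D P) := by
  classical
  have hlin : ∀ i, (C (b i) + C (c i) * X : ℚ[X]).natDegree ≤ 1 := by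
    intro i
    rw [add_comm]
    exact natDegree_linear_le
  have hpow : ∀ i k, ((C (b i) + C (c i) * X : ℚ[X])^k).natDegree ≤ k := by
    intro i k
    simpa using natDegree_pow_le_of_le k (hlin i)
  have hmon : ∀ s : Fin d →₀ ℕ, (∏ i, (C (b i) + C (c i) * X : ℚ[X])^(s i)).natDegree ≤ ∑ i, s i := by
    intro s
    exact (natDegree_prod_le _ _).trans (Finset.sum_le_sum fun i _ => hpow i _)
  have hmonc : ∀ s : Fin d →₀ ℕ, (∏ i, (C (b i) + C (c i) * X : ℚ[X])^(s i)).coeff (∑ i, s i) = ∏ i, c i ^ s i := by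
    intro s
    have : ∀ t : Finset (Fin d), (∏ i ∈ t, (C (b i) + C (c i) * X : ℚ[X])^(s i)).coeff (∑ i ∈ t, s i) = ∏ i ∈ t, c i ^ s i := by
      intro t
      induction t using Finset.induction_on with
      | empty => simp
      | insert i t hi ih =>
        rw [Finset.prod_insert hi, Finset.sum_insert hi, Finset.prod_insert hi]
        rw [coeff_mul_add_eq_of_natDegree_le (hpow i _) ((natDegree_prod_le _ _).trans (Finset.sum_le_sum fun i _ => hpow i _)), ih]
        have := coeff_pow_of_natDegree_le (hlin i) (m := s i)
        rw [mul_one] at this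
        rw [this]; simp
    exact this _
  have hdeg : ∀ s ∈ P.support, ∑ i, s i ≤ D := by
    intro s hs
    have := MvPolynomial.le_totalDegree hs
    rw [Finsupp.sum_fintype _ _ (by simp)] at this
    omega
  rw [MvPolynomial.aeval_def, MvPolynomial.eval₂_eq']
  constructor
  · refine natDegree_sum_le_of_forall_le _ _ fun s hs => ?_
    refine (natDegree_C_mul_le _ _).trans ((hmon s).trans (hdeg s hs))
  · rw [finsetSum_coeff, MvPolynomial.homogeneousComponent_apply, map_sum, Finset.sum_filter]
    refine Finset.sum_congr rfl fun s hs => ?_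
    rw [MvPolynomial.eval_monomial, Finsupp.prod_fintype _ _ (by simp)]
    have hsd : s.degree = ∑ i, s i := Finsupp.degree_eq_sum s
    rw [hsd]
    change (C _ * _).coeff D = _
    rw [coeff_C_mul]
    split_ifs with h
    · rw [← h, hmonc]
    · rw [coeff_eq_zero_of_natDegree_lt, mul_zero]
      exact (hmon s).trans_lt (lt_of_le_of_ne (hdeg s hs) h)

/-- few zeros on a line in a good direction -/
theorem few_zeros {d : ℕ} (P : MvPolynomial (Fin d) ℚ) (b c : Fin d → ℚ)
    (h : MvPolynomial.eval c (MvPolynomial.homogeneousComponent P.totalDegree P) ≠ 0) (Q : ℕ) :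
    ((Finset.range Q).filter (fun a : ℕ => MvPolynomial.eval (fun i => b i + (a:ℚ) * c i) P = 0)).card
      ≤ P.totalDegree := by
  classical
  obtain ⟨h1, h2⟩ := top_coeff P P.totalDegree le_rfl b c
  set f := (MvPolynomial.aeval (fun i => C (b i) + C (c i) * X : Fin d → ℚ[X]) P) with hf
  have hf0 : f ≠ 0 := by
    intro h0
    rw [h0] at h2
    exact h (by rw [← h2]; simp)
  have hev : ∀ a : ℚ, f.eval a = MvPolynomial.eval (fun i => b i + a * c i) P := by
    intro a
    have := MvPolynomial.comp_aeval_apply (fun i => C (b i) + C (c i) * X : Fin d → ℚ[X]) (Polynomial.aeval a) P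
    rw [← hf] at this
    have hfun : (fun i => b i + a * c i) = fun i => (Polynomial.aeval a) (C (b i) + C (c i) * X : ℚ[X]) := by
      funext i
      rw [mul_comm a]; simp
    rw [hfun, ← Polynomial.coe_aeval_eq_eval]
    exact this
  refine le_trans ?_ h1
  refine le_trans ?_ f.card_roots'
  refine le_trans ?_ (Multiset.toFinset_card_le _)
  refine Finset.card_le_card_of_injOn (fun a : ℕ => (a:ℚ)) ?_ ?_
  · intro a ha
    simp only [Finset.coe_filter] at ha
    simp [hf0, hev, ha.2]
  · intro a _ b _ hab
    exact Nat.cast_injective hab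

theorem top_ne_zero {d : ℕ} (P : MvPolynomial (Fin d) ℚ) (hP : P ≠ 0) :
    MvPolynomial.homogeneousComponent P.totalDegree P ≠ 0 := by
  classical
  intro h
  have hne : P.support.Nonempty := MvPolynomial.support_nonempty.2 hP
  obtain ⟨s, hs, hs'⟩ := Finset.exists_mem_eq_sup P.support hne (fun s => s.sum fun _ e => e)
  have h1 := congrArg (MvPolynomial.coeff s) h
  rw [MvPolynomial.coeff_homogeneousComponent, if_pos] at h1
  · exact MvPolynomial.mem_support_iff.1 hs h1
  · exact hs'.symm

end PartA1

section PartA2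

open Polynomial Matrix

/-- the linear term of the characteristic polynomial along a transvection line -/
noncomputable def F1 {R : Type*} [CommRing R] {n : ℕ} (m ξ : Fin n → R) (N : Matrix (Fin n) (Fin n) R) : R[X] :=
  (fun i => C (m i)) ⬝ᵥ ((charmatrix N).adjugate *ᵥ (fun i => C (ξ i)))

theorem det_add_rank_one_field {K : Type*} [Field K] {n : ℕ} (A : Matrix (Fin n) (Fin n) K) (hA : A.det ≠ 0)
    (u v : Fin n → K) : (A + vecMulVec u v).det = A.det + v ⬝ᵥ (A.adjugate *ᵥ u) := by
  have h := det_add_replicateCol_mul_replicateRow (ι := Unit) (A := A) (isUnit_iff_ne_zero.2 hA) u v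
  rw [← vecMulVec_eq] at h
  rw [h, det_unique (n := Unit)]
  simp only [Matrix.add_apply, Matrix.one_apply_eq, mul_add, mul_one]
  congr 1
  rw [Matrix.mul_assoc, inv_def, Ring.inverse_eq_inv']
  simp only [Matrix.mul_apply, replicateRow_apply, replicateCol_apply, Matrix.smul_apply, smul_eq_mul, dotProduct, mulVec,
    Finset.mul_sum]
  refine Finset.sum_congr rfl fun i _ => Finset.sum_congr rfl fun j _ => ?_
  field_simp

theorem det_add_rank_one {R : Type*} [CommRing R] [IsDomain R] {n : ℕ} (A : Matrix (Fin n) (Fin n) R) (hA : A.det ≠ 0)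
    (u v : Fin n → R) : (A + vecMulVec u v).det = A.det + v ⬝ᵥ (A.adjugate *ᵥ u) := by
  let f := algebraMap R (FractionRing R)
  have hf : Function.Injective f := IsFractionRing.injective R (FractionRing R)
  apply hf
  have h := det_add_rank_one_field (f.mapMatrix A) (by rw [← RingHom.map_det]; exact fun h => hA (hf (by rw [h, map_zero])))
    (fun i => f (u i)) (fun i => f (v i))
  rw [map_add, RingHom.map_det, RingHom.map_det]
  have h1 : f.mapMatrix (A + vecMulVec u v) = f.mapMatrix A + vecMulVec (fun i => f (u i)) (fun i => f (v i)) := by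
    ext i j
    simp [vecMulVec_apply]
  rw [h1, h, ← RingHom.map_adjugate]
  simp [dotProduct, mulVec]

theorem charpoly_move {R : Type*} [CommRing R] [IsDomain R] {n : ℕ} (m ξ : Fin n → R) (h0 : m ⬝ᵥ ξ = 0) (a : R)
    (N : Matrix (Fin n) (Fin n) R) :
    ((1 - a • vecMulVec ξ m) * N).charpoly = N.charpoly + C a * X * F1 m ξ N := by
  have h1 : charmatrix ((1 - a • vecMulVec ξ m) * N) = charmatrix N + vecMulVec (fun i => C (a * ξ i)) (fun j => C ((m ᵥ* N) j)) := by
    have : (1 - a • vecMulVec ξ m) * N = N - vecMulVec (fun i => a * ξ i) (m ᵥ* N) := by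
      ext i j
      rw [Matrix.sub_mul, Matrix.one_mul]
      simp only [Matrix.sub_apply, Matrix.smul_apply, smul_eq_mul, Matrix.mul_apply, vecMulVec_apply, vecMul, dotProduct, Finset.mul_sum]
      congr 1
      refine Finset.sum_congr rfl fun i _ => by ring
    rw [this]
    ext i j : 1
    simp only [charmatrix_apply, Matrix.sub_apply, Matrix.add_apply, vecMulVec_apply, map_sub, map_mul]
    ring
  have hne : (charmatrix N).det ≠ 0 := (charpoly_monic N).ne_zero
  rw [Matrix.charpoly, h1, det_add_rank_one _ hne]
  change N.charpoly + _ = _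
  congr 1
  have h2 : (fun j => C ((m ᵥ* N) j)) = (fun j => X * C (m j)) - (fun j => C (m j)) ᵥ* charmatrix N := by
    ext j : 1
    simp only [vecMul, dotProduct, charmatrix_apply, Pi.sub_apply, map_sum, map_mul, mul_sub, Finset.sum_sub_distrib]
    have : ∑ x, C (m x) * diagonal (fun _ : Fin n => (X:R[X])) x j = X * C (m j) := by
      rw [Finset.sum_eq_single j]
      · rw [diagonal_apply_eq, mul_comm]
      · intro b _ hb; simp [diagonal_apply_ne _ hb]
      · simp
    rw [this]; ring
  have h3 : (fun i => C (a * ξ i)) = C a • (fun i => C (ξ i)) := by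
    ext i : 1; simp
  have h4 : (fun j => X * C (m j)) = (X : R[X]) • (fun j => C (m j)) := by
    ext i : 1; simp
  rw [h2, h3, h4, sub_dotProduct, mulVec_smul, dotProduct_smul, dotProduct_smul, ← dotProduct_mulVec, mulVec_mulVec, mul_adjugate, smul_mulVec, one_mulVec,
    dotProduct_smul, smul_dotProduct]
  have h5 : (fun j => C (m j)) ⬝ᵥ (fun i => C (ξ i)) = 0 := by
    have := congrArg C h0
    simpa [dotProduct] using this
  rw [h5, F1]
  simp only [smul_eq_mul, mul_zero, sub_zero]
  ring

theorem det_move {R : Type*} [CommRing R] {n : ℕ} (m ξ : Fin n → R) (h0 : m ⬝ᵥ ξ = 0) (a : R)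
    (N : Matrix (Fin n) (Fin n) R) : ((1 - a • vecMulVec ξ m) * N).det = N.det := by
  have : (1 - a • vecMulVec ξ m).det = 1 := by
    have h := det_one_add_mul_comm (replicateCol Unit (-(a • ξ))) (replicateRow Unit m)
    rw [← vecMulVec_eq] at h
    have e : (1 - a • vecMulVec ξ m) = 1 + vecMulVec (-(a • ξ)) m := by
      rw [neg_vecMulVec, smul_vecMulVec, sub_eq_add_neg]
    rw [e, h, det_unique (n := Unit)]
    simp [Matrix.mul_apply]
    have : ∑ x, m x * (a * ξ x) = a * (m ⬝ᵥ ξ) := by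
      rw [dotProduct, Finset.mul_sum]; exact Finset.sum_congr rfl fun i _ => by ring
    rw [this, h0, mul_zero]
  rw [det_mul, this, one_mul]

theorem vecMul_move {R : Type*} [CommRing R] {n : ℕ} (m ξ : Fin n → R) (h0 : m ⬝ᵥ ξ = 0) (a : R)
    (N : Matrix (Fin n) (Fin n) R) : m ᵥ* ((1 - a • vecMulVec ξ m) * N) = m ᵥ* N := by
  rw [← vecMul_vecMul, vecMul_sub, vecMul_one, vecMul_smul, vecMul_vecMulVec, h0]
  simp

theorem F1_inv {R : Type*} [CommRing R] {n : ℕ} (m ξ v : Fin n → R) (N : Matrix (Fin n) (Fin n) R) :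
    F1 m ξ (N + vecMulVec v m) = F1 m ξ N := by
  have key : ∀ (S : Type _) [CommRing S] (A : Matrix (Fin n) (Fin n) S) (u w : Fin n → S),
      w ᵥ* (A + vecMulVec u w).adjugate = w ᵥ* A.adjugate := by
    intro S _ A u w
    have h : ∀ A : Matrix (Fin n) (Fin n) S, ∀ i, (w ᵥ* A.adjugate) i = (A.updateRow i w).det := by
      intro A i
      rw [← mulVec_transpose, adjugate_transpose, ← cramer_eq_adjugate_mulVec, cramer_transpose_apply]
    ext i
    rw [h, h]
    refine det_eq_of_forall_row_eq_smul_add_const (fun j => if j = i then 0 else u j) i (by simp) ?_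
    intro j k
    by_cases hj : j = i
    · subst hj; simp
    · simp [hj, updateRow_ne hj, vecMulVec_apply]
  unfold F1
  rw [dotProduct_mulVec, dotProduct_mulVec]
  congr 1
  have : charmatrix (N + vecMulVec v m) = charmatrix N + vecMulVec (fun i => - C (v i)) (fun i => C (m i)) := by
    ext i j : 1
    simp only [charmatrix_apply, Matrix.add_apply, vecMulVec_apply, map_add, map_mul]
    ring
  rw [this, key]

theorem F1_map {R S : Type*} [CommRing R] [CommRing S] (f : R →+* S) {n : ℕ} (m ξ : Fin n → R) (N : Matrix (Fin n) (Fin n) R) :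
    (F1 m ξ N).map f = F1 (fun i => f (m i)) (fun i => f (ξ i)) (N.map f) := by
  unfold F1
  rw [charmatrix_map]
  have h := RingHom.map_adjugate (mapRingHom f) (charmatrix N)
  have h2 : (charmatrix N).map (Polynomial.map f) = (mapRingHom f).mapMatrix (charmatrix N) := rfl
  rw [h2, ← h]
  simp [dotProduct, mulVec, Polynomial.map_sum]

end PartA2

section PartA3

open Polynomial Matrix

theorem exists_eval_ne {d : ℕ} (P : MvPolynomial (Fin d) ℚ) (hP : P ≠ 0) :
    ∃ c : Fin d → ℚ, MvPolynomial.eval c P ≠ 0 := by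
  by_contra! h
  exact hP (MvPolynomial.funext fun x => by rw [h x, map_zero])

theorem F1_shift {d : ℕ} (m ξ : Fin (d+1) → ℚ) (α : Fin (d+1) → ℚ) (g : Matrix (Fin (d+1)) (Fin (d+1)) ℚ)
    (hg : IsUnit g.det) (h1 : g *ᵥ (Pi.single 0 1) = ξ) (h2 : m ᵥ* g = α) :
    ∃ N, F1 m ξ N = ∑ i : Fin (d+1), C (α i) * X^(d - (i:ℕ)) := by
  let S : Matrix (Fin (d+1)) (Fin (d+1)) ℚ := fun i j => if (i:ℕ) = j + 1 then 1 else 0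
  have hSdet : (charmatrix S).det = X^(d+1) := by
    rw [det_of_isLowerTriangular]
    · have : ∀ x, charmatrix S x x = X := fun x => by rw [charmatrix_apply_eq]; simp [S]
      rw [Finset.prod_congr rfl fun x _ => this x]; simp
    · intro i j hij
      have hij' : i < j := hij
      rw [charmatrix_apply_ne _ _ _ hij'.ne]
      have : (i:ℕ) ≠ j + 1 := by have := Fin.lt_def.1 hij'; omega
      simp [S, this]
  let w : Fin (d+1) → ℚ[X] := fun i => X^(d - (i:ℕ))
  have hw : charmatrix S *ᵥ w = (X^(d+1) : ℚ[X]) • (Pi.single 0 1 : Fin (d+1) → ℚ[X]) := by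
    have e : charmatrix S = (X : ℚ[X]) • (1 : Matrix (Fin (d+1)) (Fin (d+1)) ℚ[X]) - C.mapMatrix S := by
      rw [charmatrix]; ext i j : 1; simp [Matrix.smul_apply, Matrix.one_apply, Matrix.diagonal_apply]
    have hS : ∀ i j, (C.mapMatrix S : Matrix (Fin (d+1)) (Fin (d+1)) ℚ[X]) i j = if (i:ℕ) = j + 1 then 1 else 0 := by
      intro i j
      rw [RingHom.mapMatrix_apply, Matrix.map_apply]
      simp only [S]
      split_ifs <;> simp
    rw [e, sub_mulVec, smul_mulVec, one_mulVec]
    ext i : 1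
    refine Fin.cases ?_ (fun i => ?_) i
    · have h0 : (C.mapMatrix S *ᵥ w) 0 = 0 := by
        rw [mulVec, dotProduct]
        refine Finset.sum_eq_zero fun j _ => ?_
        rw [hS, if_neg (by simp), zero_mul]
      rw [Pi.sub_apply, h0]
      simp [w, pow_succ']
    · have : (C.mapMatrix S *ᵥ w) i.succ = w i.castSucc := by
        rw [mulVec, dotProduct, Finset.sum_eq_single i.castSucc]
        · simp [hS]
        · intro b _ hb
          have : ¬ ((i:ℕ) = b) := fun h => hb (Fin.ext (by simp [h]))
          simp [hS, this]
        · simp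
      simp only [Pi.sub_apply, this, Pi.smul_apply, smul_eq_mul, w, Fin.val_succ, Fin.val_castSucc]
      have : d - (i:ℕ) = (d - (i+1)) + 1 := by omega
      rw [this, pow_succ']; simp
  refine ⟨g * S * g⁻¹, ?_⟩
  set N := g * S * g⁻¹ with hN
  let gC : Matrix (Fin (d+1)) (Fin (d+1)) ℚ[X] := C.mapMatrix g
  have hcomm : charmatrix N * gC = gC * charmatrix S := by
    have e : ∀ A : Matrix (Fin (d+1)) (Fin (d+1)) ℚ, charmatrix A = (X : ℚ[X]) • (1 : Matrix (Fin (d+1)) (Fin (d+1)) ℚ[X]) - C.mapMatrix A := by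
      intro A
      rw [charmatrix]; ext i j : 1; simp [Matrix.smul_apply, Matrix.one_apply, Matrix.diagonal_apply]
    rw [e, e, sub_mul, mul_sub, ← map_mul, ← map_mul]
    have : N * g = g * S := by
      rw [hN, Matrix.mul_assoc, Matrix.nonsing_inv_mul _ hg, Matrix.mul_one]
    rw [this]
    congr 1
    simp [gC]
  have hdetg : gC.det ≠ 0 := by
    rw [← RingHom.map_det]
    simpa using hg.ne_zero
  have hdetN : (charmatrix N).det = X^(d+1) := by
    have := congrArg det hcomm
    rw [det_mul, det_mul, hSdet, mul_comm] at this
    exact mul_left_cancel₀ hdetg this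
  have hgw : charmatrix N *ᵥ (gC *ᵥ w) = (X^(d+1) : ℚ[X]) • (fun i => C (ξ i)) := by
    rw [mulVec_mulVec, hcomm, ← mulVec_mulVec, hw, mulVec_smul]
    congr 1
    rw [← h1]
    ext i : 1
    simp [gC]
  have hadj : (charmatrix N).adjugate *ᵥ (fun i => C (ξ i)) = gC *ᵥ w := by
    have h3 := congrArg (fun v => (charmatrix N).adjugate *ᵥ v) hgw
    simp only [mulVec_mulVec] at h3
    rw [← Matrix.mul_assoc, adjugate_mul, hdetN, Matrix.smul_mul, Matrix.one_mul, smul_mulVec, mulVec_smul] at h3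
    have hX : (X:ℚ[X])^(d+1) ≠ 0 := pow_ne_zero _ X_ne_zero
    exact (smul_right_injective _ hX h3).symm
  rw [F1, hadj, dotProduct_mulVec]
  have h4 : (fun i => C (m i)) ᵥ* gC = fun i => C (α i) := by
    rw [← h2]
    ext i : 1
    simp [gC, vecMul, dotProduct]
  rw [h4]
  rfl

theorem exists_nonvanishing {d : ℕ} (P : MvPolynomial (Fin d) ℚ) (hP : P ≠ 0) (m ξ : Fin (d+1) → ℚ)
    (hm : m 0 ≠ 0) (hξ : ξ ≠ 0) (h0 : m ⬝ᵥ ξ = 0) :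
    ∃ N, MvPolynomial.eval (fun i : Fin d => (F1 m ξ N).coeff i) P ≠ 0 := by
  obtain ⟨i1, hi1⟩ : ∃ i : Fin d, ξ i.succ ≠ 0 := by
    by_contra! h
    rw [dotProduct, Fin.sum_univ_succ] at h0
    simp [h, hm] at h0
    apply hξ
    ext i
    exact Fin.cases h0 h i
  obtain ⟨c, hc⟩ := exists_eval_ne (P * ∏ i, MvPolynomial.X i) (mul_ne_zero hP (Finset.prod_ne_zero_iff.2 fun i _ => MvPolynomial.X_ne_zero i))
  rw [map_mul, MvPolynomial.eval_prod] at hc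
  have hcP := left_ne_zero_of_mul hc
  have hci : ∀ i, c i ≠ 0 := by
    have := Finset.prod_ne_zero_iff.1 (right_ne_zero_of_mul hc)
    intro i
    simpa using this i (Finset.mem_univ i)
  let t : Fin d → ℚ := fun j => c (Fin.rev j)
  let g : Matrix (Fin (d+1)) (Fin (d+1)) ℚ := fun i => Fin.cons (ξ i) (fun j =>
    (if i = j.succ ∧ j ≠ i1 then 1 else 0) + (if i = 0 then (t j - (if j = i1 then 0 else m j.succ)) / m 0 else 0))
  have hg : IsUnit g.det := by
    rw [isUnit_iff_ne_zero]
    intro hdet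
    obtain ⟨x, hx0, hx⟩ := Matrix.exists_mulVec_eq_zero_iff.2 hdet
    have hrow : ∀ i : Fin d, ξ i.succ * x 0 + (if i = i1 then 0 else x i.succ) = 0 := by
      intro i
      have := congrFun hx i.succ
      simp only [mulVec, dotProduct, Fin.sum_univ_succ, g, Fin.cons_zero, Fin.cons_succ, Fin.succ_ne_zero, if_false, add_zero, Pi.zero_apply, Fin.succ_inj] at this
      rw [Finset.sum_eq_single i] at this
      · by_cases h : i = i1
        · simpa [h] using this
        · simpa [h] using this
      · intro b _ hb
        simp [hb.symm]
      · simp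
    have hx00 : x 0 = 0 := by
      have := hrow i1
      simpa [hi1] using this
    have hxi : ∀ i, i ≠ i1 → x i.succ = 0 := by
      intro i hi
      have := hrow i
      simpa [hi, hx00] using this
    have := congrFun hx 0
    simp only [mulVec, dotProduct, Fin.sum_univ_succ, g, Fin.cons_zero, Fin.cons_succ, Pi.zero_apply, hx00] at this
    rw [Finset.sum_eq_single i1] at this
    · simp [hm, t, hci] at this
      apply hx0
      ext i
      refine Fin.cases hx00 (fun i => ?_) i
      by_cases h : i = i1
      · rw [h]; exact this
      · exact hxi i h
    · intro b _ hb
      rw [hxi b hb, mul_zero]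
    · simp
  obtain ⟨N, hN⟩ := F1_shift m ξ (Fin.cons 0 t) g hg (by rw [Matrix.mulVec_single_one]; ext i; rfl) (by
    ext j
    refine Fin.cases ?_ (fun j => ?_) j
    · simpa [vecMul, g] using h0
    · simp only [vecMul, dotProduct, g, Fin.cons_succ, mul_add, Finset.sum_add_distrib]
      have e1 : ∑ x, m x * (if x = 0 then (t j - if j = i1 then 0 else m j.succ) / m 0 else 0) = t j - if j = i1 then 0 else m j.succ := by
        simp; field_simp
      rw [e1]
      by_cases h : j = i1
      · simp [h]
      · simp [h])
  refine ⟨N, ?_⟩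
  rw [hN]
  have hfun : (fun i : Fin d => (∑ j : Fin (d+1), C ((Fin.cons 0 t : Fin (d+1) → ℚ) j) * X^(d - (j:ℕ))).coeff (i:ℕ)) = c := by
    funext i
    rw [finsetSum_coeff, Fin.sum_univ_succ, Finset.sum_eq_single (Fin.rev i)]
    · have : (i:ℕ) = d - ((d - (↑i+1)) + 1) := by omega
      simp [t, coeff_X_pow, ← this]
    · intro j _ hj
      have : ¬ ((i:ℕ) = d - (j + 1)) := by
        intro h
        apply hj
        ext
        rw [Fin.val_rev]
        omega
      simp [coeff_X_pow, this]
    · simp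
  rw [hfun]
  exact hcP

end PartA3

section PartA4

open Polynomial Matrix

theorem zippel_count {d : ℕ} (P : MvPolynomial (Fin d) ℚ) (hP : P ≠ 0) (m ξ : Fin (d+1) → ℚ)
    (hm : m 0 ≠ 0) (hξ : ξ ≠ 0) (h0 : m ⬝ᵥ ξ = 0) :
    ∃ K : ℕ, ∀ (S : Finset ℚ) (T : Finset (Fin (d+1) → Fin d → ℚ)),
      (∀ W ∈ T, (∀ i j, W i j ∈ S) ∧ MvPolynomial.eval (fun i : Fin d => (F1 m ξ (Matrix.of fun i => Fin.cons 0 (W i))).coeff i) P = 0) →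
      T.card * S.card ≤ K * S.card ^ ((d+1)*d) := by
  classical
  let R := MvPolynomial (Fin (d+1) × Fin d) ℚ
  let cm : Fin (d+1) → R := fun i => MvPolynomial.C (m i)
  let cξ : Fin (d+1) → R := fun i => MvPolynomial.C (ξ i)
  let Ng : Matrix (Fin (d+1)) (Fin (d+1)) R := Matrix.of fun i => Fin.cons 0 (fun j => MvPolynomial.X (i,j))
  let G : R := MvPolynomial.aeval (fun i : Fin d => (F1 cm cξ Ng).coeff i) P
  have hG : ∀ W : Fin (d+1) → Fin d → ℚ, MvPolynomial.eval (fun p : Fin (d+1) × Fin d => W p.1 p.2) G =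
      MvPolynomial.eval (fun i : Fin d => (F1 m ξ (Matrix.of fun i => Fin.cons 0 (W i))).coeff i) P := by
    intro W
    let φ : R →ₐ[ℚ] ℚ := MvPolynomial.aeval (fun p : Fin (d+1) × Fin d => W p.1 p.2)
    have h1 : φ G = MvPolynomial.aeval (fun i : Fin d => φ ((F1 cm cξ Ng).coeff i)) P :=
      MvPolynomial.comp_aeval_apply _ _ _
    have h2 : ∀ i, φ ((F1 cm cξ Ng).coeff i) = (F1 m ξ (Matrix.of fun i => Fin.cons 0 (W i))).coeff i := by
      intro i
      have h3 := F1_map (φ : R →+* ℚ) cm cξ Ng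
      have h4 := congrArg (fun p => coeff p i) h3
      simp only [coeff_map] at h4
      refine h4.trans ?_
      congr 2
      · funext i; exact MvPolynomial.aeval_C _ _
      · funext i; exact MvPolynomial.aeval_C _ _
      · ext i j
        refine Fin.cases ?_ (fun j => ?_) j
        · simp [Ng]
        · exact MvPolynomial.aeval_X _ _
    have h3 : (fun i : Fin d => φ ((F1 cm cξ Ng).coeff i)) = (fun i : Fin d => (F1 m ξ (Matrix.of fun i => Fin.cons 0 (W i))).coeff i) := by
      funext i; exact h2 i
    rw [h3] at h1
    exact h1
  have hG0 : G ≠ 0 := by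
    intro hG00
    obtain ⟨N, hN⟩ := exists_nonvanishing P hP m ξ hm hξ h0
    apply hN
    have h1 := F1_inv m ξ (fun i => - N i 0 / m 0) N
    rw [← h1]
    have h2 := hG (fun i j => N i j.succ + (- N i 0 / m 0) * m j.succ)
    rw [hG00, map_zero] at h2
    have h3 : (N + vecMulVec (fun i => - N i 0 / m 0) m) = (Matrix.of fun i => Fin.cons 0 ((fun i (j : Fin d) => N i j.succ + (- N i 0 / m 0) * m j.succ) i)) := by
      ext i j
      refine Fin.cases ?_ (fun j => ?_) j
      · simp [vecMulVec_apply, hm]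
      · simp [vecMulVec_apply]
    rw [h3]
    exact h2.symm
  let e : Fin (d+1) × Fin d ≃ Fin ((d+1)*d) := finProdFinEquiv
  let G' := MvPolynomial.rename e G
  have hG' : G' ≠ 0 := by
    intro h
    exact hG0 (MvPolynomial.rename_injective e e.injective (by rw [map_zero]; exact h))
  refine ⟨G'.totalDegree, fun S T hT => ?_⟩
  by_cases hS : S.card = 0
  · rw [hS, mul_zero]; exact Nat.zero_le _
  have hsz := MvPolynomial.schwartz_zippel_totalDegree hG' S
  have hSpos : (0 : ℚ≥0) < S.card := by exact_mod_cast Nat.pos_of_ne_zero hS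
  rw [div_le_div_iff₀ (pow_pos hSpos _) hSpos] at hsz
  have hle : T.card ≤ ((Fintype.piFinset fun _ : Fin ((d+1)*d) => S).filter (fun f => MvPolynomial.eval f G' = 0)).card := by
    refine Finset.card_le_card_of_injOn (fun W k => W (e.symm k).1 (e.symm k).2) ?_ ?_
    · intro W hW
      have := hT W hW
      simp only [Finset.coe_filter, Fintype.mem_piFinset]
      refine ⟨fun k => this.1 _ _, ?_⟩
      rw [MvPolynomial.eval_rename, ← this.2, ← hG]
      congr 2
      funext p
      simp
    · intro W _ W' _ h
      funext i j
      have := congrFun h (e (i,j))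
      simpa using this
  have : (T.card : ℚ≥0) * S.card ≤ G'.totalDegree * (S.card:ℚ≥0) ^ ((d+1)*d) := by
    refine le_trans ?_ hsz
    gcongr
  exact_mod_cast this

end PartA4

section PartB1

open Polynomial Matrix

theorem det_bound {n : ℕ} (A : Matrix (Fin n) (Fin n) ℝ) (r : Fin n → ℝ) (h : ∀ i j, |A i j| ≤ r i) :
    |A.det| ≤ (n.factorial : ℝ) * ∏ i, r i := by
  rw [← det_transpose, det_apply]
  refine (Finset.abs_sum_le_sum_abs _ _).trans ?_
  have : ∀ σ ∈ (Finset.univ : Finset (Equiv.Perm (Fin n))), |Equiv.Perm.sign σ • ∏ i, Aᵀ (σ i) i| ≤ ∏ i, r i := by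
    intro σ _
    have h1 : |Equiv.Perm.sign σ • ∏ i, Aᵀ (σ i) i| = |∏ i, Aᵀ (σ i) i| := by
      rcases Int.units_eq_one_or (Equiv.Perm.sign σ) with h | h <;> rw [h] <;> simp
    rw [h1, Finset.abs_prod]
    exact Finset.prod_le_prod (fun _ _ => abs_nonneg _) fun i _ => h _ _
  refine (Finset.sum_le_sum this).trans ?_
  simp [Finset.card_univ, Fintype.card_perm]

theorem cast_det {n : ℕ} (A : Matrix (Fin n) (Fin n) ℤ) : ((A.det : ℤ) : ℝ) = (A.map (fun x : ℤ => (x:ℝ))).det := by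
  exact (Int.castRingHom ℝ).map_det A

def InT (d B : ℕ) (N : Matrix (Fin (d+1)) (Fin (d+1)) ℤ) : Prop :=
  N.det = 1 ∧ ∀ i j, |N i j| ≤ (B:ℤ)

theorem fiber_bound {d : ℕ} (m : Fin (d+1) → ℤ) (hm : m 0 ≠ 0) (μ : ℕ) (hμ : ∀ i, |m i| ≤ μ) (η : ℝ) (hη : 0 < η)
    (B : ℕ) (hB : 1 ≤ B) (N N' : Matrix (Fin (d+1)) (Fin (d+1)) ℤ) (hN : InT d B N) (hN' : InT d B N')
    (hd : ∃ j, η * (B:ℝ)^d ≤ |(((N.updateRow j m).det : ℤ) : ℝ)|)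
    (h : ∀ i j, m 0 * N i j - N i 0 * m j = m 0 * N' i j - N' i 0 * m j) :
    ∃ y : Fin (d+1) → ℤ, (∀ l, (|y l| : ℝ) ≤ ((d+1).factorial * μ * 2^d) / η) ∧
      ∀ i j, m 0 * N' i j = m 0 * N i j + (N *ᵥ y) i * m j := by
  classical
  obtain ⟨j0, hj0⟩ := hd
  let z : Fin (d+1) → ℤ := fun i => N' i 0 - N i 0
  let y := N.adjugate *ᵥ z
  have hNy : N *ᵥ y = z := by
    rw [mulVec_mulVec, mul_adjugate, hN.1, one_smul, one_mulVec]
  have hrel : ∀ i j, m 0 * N' i j = m 0 * N i j + (N *ᵥ y) i * m j := by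
    intro i j
    rw [hNy]
    have := h i j
    simp only [z]
    linarith
  have hmat : m 0 • N' = N * (m 0 • (1 : Matrix (Fin (d+1)) (Fin (d+1)) ℤ) + vecMulVec y m) := by
    rw [Matrix.mul_add, mul_vecMulVec, Matrix.mul_smul, Matrix.mul_one]
    ext i j
    rw [Matrix.smul_apply, Matrix.add_apply, Matrix.smul_apply, vecMulVec_apply, smul_eq_mul, smul_eq_mul, hrel i j]
  have hmy : m ⬝ᵥ y = 0 := by
    have h1 := congrArg det hmat
    rw [det_mul, hN.1, det_smul, hN'.1, det_add_rank_one _ (by rw [det_smul, det_one, mul_one]; exact pow_ne_zero _ hm), det_smul, det_one, adjugate_smul, adjugate_one,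
      smul_mulVec, one_mulVec, dotProduct_smul] at h1
    simp [hm] at h1
    exact h1
  refine ⟨y, fun l => ?_, hrel⟩
  set W := N.updateRow j0 m with hW
  have hWy : W *ᵥ y = Function.update z j0 0 := by
    ext i
    by_cases hi : i = j0
    · subst hi
      simp only [Function.update_self, mulVec, hW, updateRow_self]
      exact hmy
    · simp only [Function.update_of_ne hi, mulVec, hW, updateRow_ne hi]
      rw [← hNy]; rfl
  have hcr : W.det * y l = (W.updateCol l (Function.update z j0 0)).det := by
    rw [← cramer_apply, cramer_eq_adjugate_mulVec, ← hWy, mulVec_mulVec, adjugate_mul, smul_mulVec, one_mulVec]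
    simp
  have hb := det_bound ((W.updateCol l (Function.update z j0 0)).map (fun x : ℤ => (x:ℝ)))
    (Function.update (fun _ => 2 * (B:ℝ)) j0 (μ:ℝ)) (by
      intro i j
      rw [Matrix.map_apply]
      by_cases hi : i = j0
      · subst hi
        rw [Function.update_self]
        by_cases hj : j = l
        · subst hj; simp
        · rw [updateCol_ne hj, hW, updateRow_self]
          exact_mod_cast hμ j
      · rw [Function.update_of_ne hi]
        by_cases hj : j = l
        · subst hj
          rw [updateCol_self, Function.update_of_ne hi]
          have h1 := hN.2 i 0
          have h2 := hN'.2 i 0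
          have : |z i| ≤ 2 * (B:ℤ) := by
            simp only [z]
            rw [abs_le] at *
            constructor <;> linarith
          exact_mod_cast this
        · rw [updateCol_ne hj, hW, updateRow_ne hi]
          have h1 : |N i j| ≤ 2 * (B:ℤ) := (hN.2 i j).trans (by omega)
          exact_mod_cast h1)
  rw [← cast_det, ← hcr, Finset.prod_update_of_mem (Finset.mem_univ _)] at hb
  simp only [Finset.prod_const, Finset.card_sdiff, Finset.card_univ, Fintype.card_fin] at hb
  simp at hb
  rw [le_div_iff₀ hη]
  have hBd : (0:ℝ) < (B:ℝ)^d := by positivity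
  refine le_of_mul_le_mul_right ?_ hBd
  have h5 : |(y l : ℝ)| * (η * (B:ℝ)^d) ≤ |(y l:ℝ)| * |(W.det:ℝ)| := by gcongr
  rw [mul_pow] at hb
  linarith

theorem count_nondeg {d : ℕ} (hd : 1 ≤ d) (P : MvPolynomial (Fin d) ℚ) (hP : P ≠ 0) (m ξ : Fin (d+1) → ℤ)
    (hm : m 0 ≠ 0) (hξ : ξ ≠ 0) (h0 : m ⬝ᵥ ξ = 0) (η : ℝ) (hη : 0 < η) :
    ∃ K : ℕ, ∀ B : ℕ, 1 ≤ B → ∀ A : Finset (Matrix (Fin (d+1)) (Fin (d+1)) ℤ),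
      (∀ N ∈ A, InT d B N ∧ (∃ j, η * (B:ℝ)^d ≤ |(((N.updateRow j m).det : ℤ) : ℝ)|) ∧
        MvPolynomial.eval (fun i : Fin d => (((F1 m ξ N).coeff i : ℤ) : ℚ)) P = 0) →
      A.card ≤ K * B^((d+1)*d-1) := by
  classical
  let mq : Fin (d+1) → ℚ := fun i => m i
  let ξq : Fin (d+1) → ℚ := fun i => ξ i
  have hmq : mq 0 ≠ 0 := by simpa [mq] using hm
  have hξq : ξq ≠ 0 := by
    intro h; apply hξ; funext i
    have := congrFun h i
    simpa [ξq] using this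
  have h0q : mq ⬝ᵥ ξq = 0 := by
    have := congrArg (fun x : ℤ => (x:ℚ)) h0
    simpa [dotProduct, mq, ξq] using this
  obtain ⟨K, hK⟩ := zippel_count P hP mq ξq hmq hξq h0q
  let μ : ℕ := ∑ i, (m i).natAbs
  have hμ : ∀ i, |m i| ≤ μ := by
    intro i
    have : (m i).natAbs ≤ μ := Finset.single_le_sum (f := fun i => (m i).natAbs) (fun _ _ => Nat.zero_le _) (Finset.mem_univ i)
    rw [Int.abs_eq_natAbs]; exact_mod_cast this
  let Y : ℕ := ⌊((d+1).factorial * μ * 2^d) / η⌋₊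
  refine ⟨(2*Y+1)^(d+1) * (K * (4 * μ+1)^((d+1)*d-1)), fun B hB A hA => ?_⟩
  let f : Matrix (Fin (d+1)) (Fin (d+1)) ℤ → (Fin (d+1) → Fin d → ℚ) := fun N i j =>
    (N i j.succ : ℚ) + (-N i 0 / m 0) * m j.succ
  have hfib : ∀ b ∈ A.image f, (A.filter (fun N => f N = b)).card ≤ (2*Y+1)^(d+1) := by
    intro b hb
    obtain ⟨N, hNA, rfl⟩ := Finset.mem_image.1 hb
    let box : Finset (Fin (d+1) → ℤ) := Fintype.piFinset fun _ => Finset.Icc (-(Y:ℤ)) Y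
    have hbox : box.card = (2*Y+1)^(d+1) := by
      simp [box, Fintype.card_piFinset]
      omega
    rw [← hbox]
    have hex : ∀ N' ∈ A.filter (fun N' => f N' = f N), ∃ y ∈ box, ∀ i j, m 0 * N' i j = m 0 * N i j + (N *ᵥ y) i * m j := by
      intro N' hN'
      rw [Finset.mem_filter] at hN'
      obtain ⟨y, hy1, hy2⟩ := fiber_bound m hm μ hμ η hη B hB N N' (hA N hNA).1 (hA N' hN'.1).1 (hA N hNA).2.1 (by
        intro i j
        refine Fin.cases ?_ (fun j => ?_) j
        · ring
        · have := congrFun (congrFun hN'.2 i) j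
          simp only [f] at this
          have hm' : (m 0 : ℚ) ≠ 0 := by exact_mod_cast hm
          field_simp at this
          have h3 : (m 0 : ℚ) * N i j.succ - N i 0 * m j.succ = m 0 * N' i j.succ - N' i 0 * m j.succ := by linarith
          exact_mod_cast h3)
      refine ⟨y, ?_, hy2⟩
      rw [Fintype.mem_piFinset]
      intro l
      have h4 : (y l).natAbs ≤ Y := by
        apply Nat.le_floor
        have := hy1 l
        rw [Nat.cast_natAbs]
        exact_mod_cast this
      rw [Finset.mem_Icc]
      omega
    choose! yy hy1 hy2 using hex
    refine Finset.card_le_card_of_injOn yy hy1 ?_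
    intro N1 h1 N2 h2 h12
    ext i j
    have e1 := hy2 N1 h1 i j
    have e2 := hy2 N2 h2 i j
    rw [h12, ← e2] at e1
    exact mul_left_cancel₀ hm e1
  have hcard := Finset.card_le_mul_card_image (f := f) A _ hfib
  let S : Finset ℚ := (Finset.Icc (-(2*μ*B : ℤ)) (2*μ*B)).image (fun k : ℤ => (k:ℚ) / m 0)
  have hScard : S.card ≤ (4*μ+1) * B := by
    refine Finset.card_image_le.trans ?_
    rw [Int.card_Icc]
    have : ((2*μ*B + 1 - -(2*μ*B) : ℤ)).toNat = 4*μ*B+1 := by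
      have : ((2*μ*B + 1 - -(2*μ*B) : ℤ)) = ((4*μ*B+1 : ℕ):ℤ) := by push_cast; ring
      rw [this, Int.toNat_natCast]
    rw [this]
    nlinarith
  have hT := hK S (A.image f) (by
    intro W hW
    obtain ⟨N, hNA, rfl⟩ := Finset.mem_image.1 hW
    obtain ⟨hN1, hN2, hN3⟩ := hA N hNA
    have hm' : (m 0 : ℚ) ≠ 0 := by exact_mod_cast hm
    constructor
    · intro i j
      rw [Finset.mem_image]
      refine ⟨m 0 * N i j.succ - N i 0 * m j.succ, ?_, ?_⟩
      · rw [Finset.mem_Icc, ← abs_le]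
        calc _ ≤ |m 0 * N i j.succ| + |N i 0 * m j.succ| := abs_sub _ _
          _ = |m 0| * |N i j.succ| + |N i 0| * |m j.succ| := by rw [abs_mul, abs_mul]
          _ ≤ μ * B + B * μ := by
            gcongr
            · exact hμ 0
            · exact hN1.2 _ _
            · exact hN1.2 _ _
            · exact hμ _
          _ = _ := by ring
      · simp only [f]; push_cast; field_simp; ring
    · refine Eq.trans ?_ hN3
      congr 2
      funext k
      have e1 := F1_map (Int.castRingHom ℚ) m ξ N
      have e2 := congrArg (fun p => coeff p (k:ℕ)) e1
      simp only [coeff_map] at e2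
      refine Eq.trans ?_ e2.symm
      have e3 := F1_inv mq ξq (fun i => - N i 0 / m 0) (N.map (Int.castRingHom ℚ))
      change _ = (F1 mq ξq _).coeff _
      rw [← e3]
      congr 2
      ext i j
      refine Fin.cases ?_ (fun j => ?_) j
      · simp [vecMulVec_apply, hm', mq]
      · simp [vecMulVec_apply, f, mq])
  have hSpos : 0 < S.card := Finset.card_pos.2 ⟨0, Finset.mem_image.2 ⟨0, by simp; positivity, by simp⟩⟩
  have hdd : (d+1)*d = ((d+1)*d-1) + 1 := by
    have : 1 ≤ (d+1)*d := by nlinarith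
    omega
  rw [hdd, pow_succ, ← mul_assoc] at hT
  have hT' := Nat.le_of_mul_le_mul_right hT hSpos
  calc A.card ≤ _ := hcard
    _ ≤ (2*Y+1)^(d+1) * (K * ((4*μ+1)*B)^((d+1)*d-1)) := by
      gcongr
      exact hT'.trans (by gcongr)
    _ = _ := by rw [mul_pow]; ring

end PartB1

section PartC1

open Polynomial Matrix
open MeasureTheory
open scoped Pointwise

section C1

/-- left multiplication on plain functions -/
def lm {n : ℕ} (A : Matrix (Fin n) (Fin n) ℝ) (Y : Fin n → Fin n → ℝ) : Fin n → Fin n → ℝ :=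
  fun i j => ∑ k, A i k * Y k j

theorem lm_eq {n : ℕ} (A : Matrix (Fin n) (Fin n) ℝ) (Y : Fin n → Fin n → ℝ) :
    Matrix.of (lm A Y) = A * Matrix.of Y := by
  ext i j; simp [lm, Matrix.mul_apply]

def trn (n : ℕ) : (Fin n → Fin n → ℝ) →ₗ[ℝ] (Fin n → Fin n → ℝ) where
  toFun Y := fun i j => Y j i
  map_add' := fun _ _ => rfl
  map_smul' := fun _ _ => rfl

theorem trn_mp (n : ℕ) : MeasurePreserving (trn n) := by
  have h1 : (trn n) ∘ₗ (trn n) = LinearMap.id := by ext; rfl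
  have h2 : LinearMap.det (trn n) * LinearMap.det (trn n) = 1 := by
    rw [← LinearMap.det_comp, h1, LinearMap.det_id]
  have h3 : LinearMap.det (trn n) ≠ 0 := by
    intro h; rw [h] at h2; simp at h2
  have h4 : |(LinearMap.det (trn n))⁻¹| = 1 := by
    rcases mul_self_eq_one_iff.1 h2 with h | h <;> rw [h] <;> simp
  refine ⟨(LinearMap.continuous_of_finiteDimensional _).measurable, ?_⟩
  rw [Measure.map_linearMap_addHaar_eq_smul_addHaar _ h3, h4]; simp

theorem lm_mp {n : ℕ} (A : Matrix (Fin n) (Fin n) ℝ) (hA : A.det = 1) :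
    MeasurePreserving (lm A) := by
  have h0 : MeasurePreserving (fun v : Fin n → ℝ => A *ᵥ v) := by
    have hm : Measurable (fun v : Fin n → ℝ => A *ᵥ v) :=
      (LinearMap.continuous_of_finiteDimensional (Matrix.toLin' A)).measurable
    refine ⟨hm, ?_⟩
    have := Real.map_matrix_volume_pi_eq_smul_volume_pi (M := A) (by rw [hA]; norm_num)
    rw [hA] at this
    rw [show (fun v : Fin n → ℝ => A *ᵥ v) = ⇑(toLin' A) from by ext v i; simp]
    simpa using this
  have h1 := volume_preserving_pi (fun _ : Fin n => h0)
  have h2 := (trn_mp n).comp (h1.comp (trn_mp n))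
  convert h2 using 1
  ext Y i j
  simp [lm, trn, Matrix.mulVec, dotProduct]

theorem lm_meas {n : ℕ} (A : Matrix (Fin n) (Fin n) ℝ) : Continuous (lm A) := by
  unfold lm; fun_prop

/-- entries -/
theorem ball_entry {n : ℕ} {r : ℝ} {a u : Fin n → Fin n → ℝ} (h : u ∈ Metric.ball a r) (i j) :
    |u i j - a i j| < r := by
  have h1 := (dist_le_pi_dist (u i) (a i) j).trans_lt ((dist_le_pi_dist u a i).trans_lt h)
  rwa [Real.dist_eq] at h1

def idf (n : ℕ) : Fin n → Fin n → ℝ := fun i j => (1 : Matrix (Fin n) (Fin n) ℝ) i j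

def Ub (n : ℕ) : Set (Fin n → Fin n → ℝ) := Metric.ball (idf n) (1 / (4 * n))

theorem mul_near {n : ℕ} (hn : 0 < n) (x : Fin n → ℝ) (b : ℝ) (hx : ∀ i, |x i| ≤ b)
    (u : Fin n → Fin n → ℝ) (hu : u ∈ Ub n) (j) : |∑ k, x k * u k j - x j| ≤ b / 4 := by
  have hb : 0 ≤ b := (abs_nonneg _).trans (hx ⟨0, hn⟩)
  have h1 : ∑ k, x k * u k j - x j = ∑ k, x k * (u k j - idf n k j) := by
    simp only [mul_sub, Finset.sum_sub_distrib]
    congr 1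
    simp [idf, Matrix.one_apply]
  rw [h1]
  calc _ ≤ ∑ k, |x k * (u k j - idf n k j)| := Finset.abs_sum_le_sum_abs _ _
    _ ≤ ∑ k : Fin n, b * (1 / (4 * n)) := by
        refine Finset.sum_le_sum fun k _ => ?_
        rw [abs_mul]
        exact mul_le_mul (hx k) (ball_entry hu k j).le (abs_nonneg _) hb
    _ = b / 4 := by
        have : (n : ℝ) ≠ 0 := by positivity
        simp; field_simp

theorem eq_one_of_near {n : ℕ} (hn : 0 < n) (G : Matrix (Fin n) (Fin n) ℤ)
    (u u' : Fin n → Fin n → ℝ) (hu : u ∈ Ub n) (hu' : u' ∈ Ub n)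
    (h : lm (G.map (fun x : ℤ => (x : ℝ))) u' = u) : G = 1 := by
  have hn1 : (1:ℝ) ≤ n := by exact_mod_cast hn
  have hr : (1 / (4 * n) : ℝ) ≤ 1 / 4 := by
    apply one_div_le_one_div_of_le <;> linarith
  have key : ∀ b : ℝ, (∀ i j, |(G i j : ℝ)| ≤ b) → ∀ i j, |(G i j : ℝ) - u i j| ≤ b / 4 := by
    intro b hb i j
    have := mul_near hn (fun k => (G i k : ℝ)) b (hb i) u' hu' j
    rw [← h, abs_sub_comm]
    simpa [lm] using this
  have hu1 : ∀ i j, |u i j - idf n i j| < 1 / 4 := fun i j => (ball_entry hu i j).trans_le hr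
  have hid : ∀ i j, |idf n i j| ≤ 1 := by
    intro i j; unfold idf; rw [Matrix.one_apply]; split_ifs <;> simp
  obtain ⟨p, -, hp⟩ := Finset.exists_max_image (Finset.univ : Finset (Fin n × Fin n))
    (fun p => |(G p.1 p.2 : ℝ)|) ⟨(⟨0, hn⟩, ⟨0, hn⟩), Finset.mem_univ _⟩
  set g := |(G p.1 p.2 : ℝ)| with hg
  have hb : ∀ i j, |(G i j : ℝ)| ≤ g := fun i j => hp (i, j) (Finset.mem_univ _)
  have hg2 : g < 2 := by
    have h1 := key g hb p.1 p.2
    have h2 := hu1 p.1 p.2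
    have h3 := hid p.1 p.2
    rw [abs_le] at h1 h3
    rw [abs_lt] at h2
    have : g ≤ 1 + 1/4 + g/4 := by
      rw [hg, abs_le]; constructor <;> linarith
    linarith
  ext i j
  have h1 := key g hb i j
  have h2 := hu1 i j
  have h4 : |(G i j : ℝ) - idf n i j| < 1 := by
    rw [abs_le] at h1
    rw [abs_lt] at h2 ⊢
    constructor <;> linarith
  have h5 : idf n i j = (((1 : Matrix (Fin n) (Fin n) ℤ) i j : ℤ) : ℝ) := by
    unfold idf; rw [Matrix.one_apply, Matrix.one_apply]; split_ifs <;> simp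
  rw [h5] at h4
  have h6 : |G i j - (1 : Matrix (Fin n) (Fin n) ℤ) i j| < 1 := by exact_mod_cast h4
  have := Int.abs_lt_one_iff.1 h6
  linarith

theorem lm_lm {n : ℕ} (A C : Matrix (Fin n) (Fin n) ℝ) (u) : lm A (lm C u) = lm (A * C) u := by
  apply Matrix.of.injective
  rw [lm_eq, lm_eq, lm_eq, Matrix.mul_assoc]

theorem lm_one {n : ℕ} (u) : lm (1 : Matrix (Fin n) (Fin n) ℝ) u = u := by
  apply Matrix.of.injective
  rw [lm_eq, Matrix.one_mul]

abbrev rc {n : ℕ} (M : Matrix (Fin n) (Fin n) ℤ) : Matrix (Fin n) (Fin n) ℝ :=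
  M.map (fun x : ℤ => (x : ℝ))

theorem rc_mul {n : ℕ} (M N : Matrix (Fin n) (Fin n) ℤ) : rc (M * N) = rc M * rc N := by
  ext i j; simp [rc, Matrix.mul_apply]

theorem rc_one {n : ℕ} : rc (1 : Matrix (Fin n) (Fin n) ℤ) = 1 := by
  ext i j; simp [rc, Matrix.one_apply, apply_ite]

theorem thicken {n : ℕ} (hn : 0 < n) (S : Finset (Matrix (Fin n) (Fin n) ℤ))
    (hS : ∀ M ∈ S, M.det = 1) (B : ℝ) (hB : 0 < B) (V : Set (Fin n → Fin n → ℝ))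
    (h : ∀ M ∈ S, ∀ u ∈ Ub n, B⁻¹ • lm (rc M) u ∈ V) :
    (S.card : ENNReal) * volume (Ub n) ≤ ENNReal.ofReal (B ^ (n * n)) * volume V := by
  -- the sets
  have hpre : ∀ M ∈ S, (lm (rc M)) '' (Ub n) = (lm (rc M.adjugate)) ⁻¹' (Ub n) := by
    intro M hM
    ext x
    constructor
    · rintro ⟨u, hu, rfl⟩
      show lm _ (lm _ u) ∈ Ub n
      rw [lm_lm, ← rc_mul, Matrix.adjugate_mul, hS M hM, one_smul, rc_one, lm_one]; exact hu
    · intro hx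
      refine ⟨_, hx, ?_⟩
      rw [lm_lm, ← rc_mul, Matrix.mul_adjugate, hS M hM, one_smul, rc_one, lm_one]
  have hadj : ∀ M ∈ S, (rc M.adjugate).det = 1 := by
    intro M hM
    rw [← cast_det, Matrix.det_adjugate, hS M hM]; simp
  have hopen : IsOpen (Ub n) := Metric.isOpen_ball
  have hvol : ∀ M ∈ S, volume ((lm (rc M)) '' (Ub n)) = volume (Ub n) := by
    intro M hM
    rw [hpre M hM, (lm_mp _ (hadj M hM)).measure_preimage hopen.measurableSet.nullMeasurableSet]
  have hdis : (S : Set (Matrix (Fin n) (Fin n) ℤ)).PairwiseDisjoint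
      (fun M => (lm (rc M)) '' (Ub n)) := by
    intro M hM M' hM' hne
    rw [Function.onFun, Set.disjoint_left]
    rintro x ⟨u, hu, rfl⟩ ⟨u', hu', he⟩
    apply hne
    have h1 : lm (rc (M.adjugate * M')) u' = u := by
      rw [rc_mul, ← lm_lm, he, lm_lm, ← rc_mul, Matrix.adjugate_mul, hS M hM, one_smul, rc_one,
        lm_one]
    have h2 := eq_one_of_near hn _ u u' hu hu' h1
    have h3 : M * (M.adjugate * M') = M' := by
      rw [← Matrix.mul_assoc, Matrix.mul_adjugate, hS M hM, one_smul, Matrix.one_mul]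
    rw [h2, Matrix.mul_one] at h3
    exact h3
  have hsub : (⋃ M ∈ S, (lm (rc M)) '' (Ub n)) ⊆ B • V := by
    intro x hx
    simp only [Set.mem_iUnion] at hx
    obtain ⟨M, hM, u, hu, rfl⟩ := hx
    rw [Set.mem_smul_set]
    exact ⟨_, h M hM u hu, by rw [smul_smul, mul_inv_cancel₀ hB.ne', one_smul]⟩
  have h1 := measure_mono (μ := volume) hsub
  rw [measure_biUnion_finset hdis (fun M hM => by
    rw [hpre M hM]; exact (hopen.preimage (lm_meas _)).measurableSet),
    Finset.sum_congr rfl hvol, Measure.addHaar_smul_of_nonneg _ hB.le] at h1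
  rw [Module.finrank_pi_fintype] at h1
  simpa using h1

end C1

end PartC1

section PartC2

open Polynomial Matrix
open MeasureTheory
open scoped Pointwise

section C2

theorem slice {k : ℕ} {E : Type} [MeasureSpace E] [SigmaFinite (volume : Measure E)]
    (T : Set (Fin (k+1) → E)) (hT : MeasurableSet T) (i : Fin (k+1)) (Bs : Set (Fin k → E))
    (v : ENNReal) (h1 : ∀ Z ∈ T, i.removeNth Z ∈ Bs)
    (h2 : ∀ w : Fin k → E, volume {y : E | (i.insertNth y w : Fin (k+1) → E) ∈ T} ≤ v) :
    volume T ≤ v * volume Bs := by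
  have hp := (volume_preserving_piFinSuccAbove (fun _ : Fin (k+1) => E) i).symm
  have hT' := (MeasurableEquiv.piFinSuccAbove (fun _ : Fin (k+1) => E) i).symm.measurable hT
  rw [← hp.measure_preimage hT.nullMeasurableSet, Measure.volume_eq_prod,
    Measure.prod_apply_symm hT']
  calc _ ≤ ∫⁻ w, (toMeasurable volume Bs).indicator (fun _ => v) w := by
        refine lintegral_mono fun w => ?_
        by_cases hw : w ∈ toMeasurable volume Bs
        · rw [Set.indicator_of_mem hw]
          exact h2 w
        · rw [Set.indicator_of_notMem hw]
          have : (fun x => (x, w)) ⁻¹'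
              ((MeasurableEquiv.piFinSuccAbove (fun _ : Fin (k+1) => E) i).symm ⁻¹' T) = ∅ := by
            ext y
            simp only [Set.mem_preimage, Set.mem_empty_iff_false, iff_false]
            intro hy
            apply hw
            apply subset_toMeasurable
            have h3 := h1 _ hy
            have h4 : i.removeNth (i.insertNth y w : Fin (k+1) → E) = w := by simp
            rw [← h4]
            exact h3
          rw [this]; simp
    _ = v * volume Bs := by
        rw [lintegral_indicator_const (measurableSet_toMeasurable _ _), measure_toMeasurable]

theorem exists_norm_eq_abs {k : ℕ} (c : Fin (k+1) → ℝ) : ∃ i, ‖c‖ = |c i| := by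
  obtain ⟨i, hi⟩ := Finite.exists_max (fun i => |c i|)
  refine ⟨i, le_antisymm ?_ ?_⟩
  · rw [pi_norm_le_iff_of_nonneg (abs_nonneg _)]
    exact hi
  · exact norm_le_pi_norm c i

theorem lemE {d : ℕ} (c b : Fin (d+1) → ℝ) (hc : 0 < ‖c‖) (s δ : ℝ) (hs : 0 ≤ s) (hδ : 0 ≤ δ) :
    volume {y : Fin (d+1) → ℝ | (∀ j, |y j - b j| ≤ s) ∧ |∑ j, y j * c j| ≤ δ} ≤
      ENNReal.ofReal ((2 * s) ^ d * (2 * δ)) * ENNReal.ofReal (‖c‖⁻¹) := by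
  obtain ⟨i, hi⟩ := exists_norm_eq_abs c
  have hci : c i ≠ 0 := by
    intro h; rw [hi, h] at hc; simp at hc
  have hcl : MeasurableSet {y : Fin (d+1) → ℝ | (∀ j, |y j - b j| ≤ s) ∧ |∑ j, y j * c j| ≤ δ} := by
    apply IsClosed.measurableSet
    rw [show {y : Fin (d+1) → ℝ | (∀ j, |y j - b j| ≤ s) ∧ |∑ j, y j * c j| ≤ δ} =
      (⋂ j, {y | |y j - b j| ≤ s}) ∩ {y | |∑ j, y j * c j| ≤ δ} by ext; simp]
    apply IsClosed.inter
    · exact isClosed_iInter fun j => isClosed_le (by fun_prop) (by fun_prop)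
    · exact isClosed_le (by fun_prop) (by fun_prop)
  have := slice _ hcl i (Metric.closedBall (i.removeNth b) s) (ENNReal.ofReal (2 * (δ / ‖c‖)))
    (by
      intro Z hZ
      rw [Metric.mem_closedBall, dist_pi_le_iff hs]
      intro j
      rw [Real.dist_eq]
      exact hZ.1 (i.succAbove j))
    (by
      intro w
      rw [← Real.volume_closedBall (-(∑ j, w j * c (i.succAbove j)) / c i) (δ / ‖c‖)]
      apply measure_mono
      intro y hy
      have h1 := hy.2
      rw [Fin.sum_univ_succAbove _ i] at h1
      simp only [Fin.insertNth_apply_same, Fin.insertNth_apply_succAbove] at h1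
      rw [Metric.mem_closedBall, Real.dist_eq, hi, le_div_iff₀ (by rwa [← hi]), ← abs_mul]
      rw [show (y - -(∑ j, w j * c (i.succAbove j)) / c i) * c i =
        y * c i + ∑ j, w j * c (i.succAbove j) by
          rw [sub_mul, div_mul_cancel₀ _ hci]; ring]
      exact h1)
  refine this.trans ?_
  rw [Real.volume_pi_closedBall _ hs, Fintype.card_fin, ← ENNReal.ofReal_mul (by positivity),
    ← ENNReal.ofReal_mul (by positivity)]
  apply ENNReal.ofReal_le_ofReal
  apply le_of_eq
  rw [div_eq_mul_inv]; ring

def gset (d : ℕ) (R S : ℝ) (θ : Fin d → ℝ) : Set (Fin d → Fin (d+1) → ℝ) :=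
  {Z | ‖Z‖ ≤ R ∧ ∀ j, |∑ i, θ i * Z i j| ≤ S}

theorem gset_closed (d : ℕ) (R S : ℝ) :
    IsClosed {p : (Fin d → ℝ) × (Fin d → Fin (d+1) → ℝ) | p.2 ∈ gset d R S p.1} := by
  rw [show {p : (Fin d → ℝ) × (Fin d → Fin (d+1) → ℝ) | p.2 ∈ gset d R S p.1} =
      {p | ‖p.2‖ ≤ R} ∩ ⋂ j, {p | |∑ i, p.1 i * p.2 i j| ≤ S} by ext; simp [gset]]
  apply IsClosed.inter
  · exact isClosed_le (by fun_prop) (by fun_prop)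
  · exact isClosed_iInter fun j => isClosed_le (by fun_prop) (by fun_prop)

theorem lemA (d : ℕ) (hd : 1 ≤ d) (R S : ℝ) (hS : 0 ≤ S) :
    ∃ C : ℝ, 0 ≤ C ∧ ∀ θ, volume (gset d R S θ) ≤
      ENNReal.ofReal (C) * ENNReal.ofReal ((1 + ‖θ‖) ^ (-((d:ℝ)+1))) := by
  obtain ⟨e, rfl⟩ : ∃ e, d = e + 1 := ⟨d - 1, by omega⟩
  set V0 := (volume (Metric.closedBall (0 : Fin (e+1) → Fin (e+1+1) → ℝ) R)).toReal with hV0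
  set V1 := (volume (Metric.closedBall (0 : Fin e → Fin (e+1+1) → ℝ) R)).toReal with hV1
  have h0 : volume (Metric.closedBall (0 : Fin (e+1) → Fin (e+1+1) → ℝ) R) = ENNReal.ofReal V0 :=
    (ENNReal.ofReal_toReal measure_closedBall_lt_top.ne).symm
  have h1 : volume (Metric.closedBall (0 : Fin e → Fin (e+1+1) → ℝ) R) = ENNReal.ofReal V1 :=
    (ENNReal.ofReal_toReal measure_closedBall_lt_top.ne).symm
  have hV0' : 0 ≤ V0 := ENNReal.toReal_nonneg
  have hV1' : 0 ≤ V1 := ENNReal.toReal_nonneg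
  refine ⟨2 ^ (e+1+1) * (V0 + (2 * S)^(e+1+1) * V1), by positivity, fun θ => ?_⟩
  have hpow : (1 + ‖θ‖) ^ (-(((e+1:ℕ):ℝ)+1)) = ((1 + ‖θ‖) ^ (e+1+1))⁻¹ := by
    rw [Real.rpow_neg (by positivity), ← Real.rpow_natCast]
    push_cast; rfl
  rw [hpow, ← ENNReal.ofReal_mul (by positivity)]
  by_cases hθ : ‖θ‖ ≤ 1
  · calc _ ≤ volume (Metric.closedBall (0 : Fin (e+1) → Fin (e+1+1) → ℝ) R) := by
          apply measure_mono
          intro Z hZ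
          rw [mem_closedBall_zero_iff]; exact hZ.1
      _ = ENNReal.ofReal V0 := h0
      _ ≤ _ := by
          apply ENNReal.ofReal_le_ofReal
          rw [← div_eq_mul_inv, le_div_iff₀ (by positivity)]
          have h2 : (1 + ‖θ‖) ^ (e+1+1) ≤ 2 ^ (e+1+1) :=
            pow_le_pow_left₀ (by positivity) (by linarith) _
          calc V0 * (1 + ‖θ‖) ^ (e+1+1) ≤ V0 * 2 ^ (e+1+1) := by gcongr
            _ ≤ 2 ^ (e+1+1) * (V0 + (2 * S)^(e+1+1) * V1) := by
              rw [mul_comm]; gcongr; linarith [show 0 ≤ (2 * S)^(e+1+1) * V1 by positivity]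
  · push Not at hθ
    obtain ⟨i, hi⟩ := exists_norm_eq_abs θ
    have hθ0 : 0 < ‖θ‖ := by linarith
    have hci : θ i ≠ 0 := by
      intro h; rw [hi, h] at hθ0; simp at hθ0
    have hcl : MeasurableSet (gset (e+1) R S θ) :=
      ((gset_closed (e+1) R S).preimage (f := fun Z => (θ, Z)) (by fun_prop)).measurableSet
    have := slice _ hcl i (Metric.closedBall 0 R)
      (ENNReal.ofReal ((2 * (S / ‖θ‖))^(e+1+1)))
      (by
        intro Z hZ
        rw [mem_closedBall_zero_iff]
        have hR : 0 ≤ R := (norm_nonneg _).trans hZ.1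
        rw [pi_norm_le_iff_of_nonneg hR]
        intro j
        exact (norm_le_pi_norm Z (i.succAbove j)).trans hZ.1)
      (by
        intro w
        have h3 := Real.volume_pi_closedBall (fun j => -(∑ l, θ (i.succAbove l) * w l j) / θ i)
          (r := S / ‖θ‖) (by positivity)
        rw [Fintype.card_fin] at h3
        rw [← h3]
        apply measure_mono
        intro y hy
        rw [Metric.mem_closedBall, dist_pi_le_iff (by positivity)]
        intro j
        have h1 := hy.2 j
        rw [Fin.sum_univ_succAbove _ i] at h1
        simp only [Fin.insertNth_apply_same, Fin.insertNth_apply_succAbove] at h1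
        rw [Real.dist_eq, hi, le_div_iff₀ (by rwa [← hi]), ← abs_mul]
        rw [show (y j - -(∑ l, θ (i.succAbove l) * w l j) / θ i) * θ i =
          θ i * y j + ∑ l, θ (i.succAbove l) * w l j by
            rw [sub_mul, div_mul_cancel₀ _ hci]; ring]
        exact h1)
    refine this.trans ?_
    rw [h1, ← ENNReal.ofReal_mul (by positivity)]
    apply ENNReal.ofReal_le_ofReal
    rw [← div_eq_mul_inv, le_div_iff₀ (by positivity), mul_div_assoc', div_pow]
    have h2 : (1 + ‖θ‖) ^ (e+1+1) ≤ 2 ^ (e+1+1) * ‖θ‖^(e+1+1) := by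
      rw [← mul_pow]
      exact pow_le_pow_left₀ (by positivity) (by linarith) _
    calc _ ≤ (2 * S) ^ (e+1+1) / ‖θ‖ ^ (e+1+1) * V1 * (2 ^ (e+1+1) * ‖θ‖^(e+1+1)) := by gcongr
      _ = 2 ^ (e+1+1) * ((2 * S)^(e+1+1) * V1) := by field_simp
      _ ≤ _ := by gcongr; linarith

/-- integrability of g -/
theorem g_int (d : ℕ) (hd : 1 ≤ d) (R S : ℝ) (hS : 0 ≤ S) :
    ∫⁻ θ, volume (gset d R S θ) < ⊤ := by
  obtain ⟨C, hC, h⟩ := lemA d hd R S hS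
  refine (lintegral_mono h).trans_lt ?_
  rw [lintegral_const_mul' _ _ ENNReal.ofReal_ne_top]
  refine ENNReal.mul_lt_top ENNReal.ofReal_lt_top ?_
  apply finite_integral_one_add_norm
  simp

theorem g_meas (d : ℕ) (R S : ℝ) : Measurable (fun θ => volume (gset d R S θ)) :=
  measurable_measure_prodMk_left (gset_closed d R S).measurableSet

end C2

end PartC2

section PartC3

open Polynomial Matrix
open MeasureTheory
open scoped Pointwise

section C3

def cv {d : ℕ} (Z : Fin d → Fin (d+1) → ℝ) : Fin (d+1) → ℝ :=
  fun k => (Matrix.of (Matrix.vecCons (Pi.single k 1) Z)).det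

theorem cv_eq {d : ℕ} (Z : Fin d → Fin (d+1) → ℝ) (k) :
    cv Z k = (-1) ^ (k:ℕ) * ((Matrix.of Z).submatrix id k.succAbove).det := by
  unfold cv
  rw [Matrix.det_succ_row_zero, Finset.sum_eq_single k]
  · simp
    rfl
  · intro b _ hb
    simp [hb]
  · simp

theorem det_cons {d : ℕ} (y : Fin (d+1) → ℝ) (Z : Fin d → Fin (d+1) → ℝ) :
    (Matrix.of (Matrix.vecCons y Z)).det = ∑ k, y k * cv Z k := by
  rw [Matrix.det_succ_row_zero]
  refine Finset.sum_congr rfl fun k _ => ?_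
  rw [cv_eq]
  simp only [Matrix.of_apply, Matrix.cons_val_zero]
  rw [mul_assoc, mul_left_comm]
  rfl

theorem cv_row {d : ℕ} (Z : Fin d → Fin (d+1) → ℝ) (i) : ∑ k, Z i k * cv Z k = 0 := by
  rw [← det_cons]
  apply Matrix.det_zero_of_row_eq (i := 0) (j := i.succ) (Fin.succ_ne_zero i).symm
  ext j; simp

theorem cv_cont {d : ℕ} : Continuous (cv : (Fin d → Fin (d+1) → ℝ) → _) := by
  refine continuous_pi fun k => ?_
  unfold cv
  apply Continuous.matrix_det
  refine continuous_pi fun i => continuous_pi fun j => ?_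
  refine Fin.cases ?_ (fun i => ?_) i
  · simp only [Matrix.of_apply, Matrix.cons_val_zero]; fun_prop
  · simp only [Matrix.of_apply, Matrix.cons_val_succ]; fun_prop

/-- the change of variables -/
def phi {d : ℕ} (Z : Fin d → Fin (d+1) → ℝ) (k : Fin (d+1)) (τ : ℝ) (θ : Fin d → ℝ) :
    Fin (d+1) → ℝ := fun j => τ * (Pi.single k 1 : Fin (d+1) → ℝ) j + ∑ i, θ i * Z i j

theorem phi_det {d : ℕ} (Z : Fin d → Fin (d+1) → ℝ) (k : Fin (d+1)) (τ : ℝ) (θ : Fin d → ℝ) :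
    ∑ j, phi Z k τ θ j * cv Z j = τ * cv Z k := by
  unfold phi
  simp only [add_mul, Finset.sum_add_distrib, Finset.sum_mul]
  rw [Finset.sum_comm, Finset.sum_eq_single k]
  · have : ∑ i, ∑ j, θ i * Z i j * cv Z j = 0 := by
      refine Finset.sum_eq_zero fun i _ => ?_
      simp only [mul_assoc]
      rw [← Finset.mul_sum, cv_row, mul_zero]
    rw [this]; simp
  · intro b _ hb; simp [hb]
  · simp

theorem phi_vol {d : ℕ} (Z : Fin d → Fin (d+1) → ℝ) (k : Fin (d+1)) (hk : cv Z k ≠ 0)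
    (S : Set (Fin (d+1) → ℝ)) :
    volume S = ENNReal.ofReal |cv Z k| *
      volume {x : Fin (d+1) → ℝ | phi Z k (x 0) (fun i => x i.succ) ∈ S} := by
  set A : Matrix (Fin (d+1)) (Fin (d+1)) ℝ := Matrix.of (Matrix.vecCons (Pi.single k 1) Z) with hA
  have hdet : LinearMap.det (Matrix.toLin' Aᵀ) = cv Z k := by
    rw [LinearMap.det_toLin', Matrix.det_transpose]; rfl
  have h1 := Measure.addHaar_preimage_linearMap (volume : Measure (Fin (d+1) → ℝ))
    (f := Matrix.toLin' Aᵀ) (by rwa [hdet]) S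
  have h2 : {x : Fin (d+1) → ℝ | phi Z k (x 0) (fun i => x i.succ) ∈ S} =
      (Matrix.toLin' Aᵀ) ⁻¹' S := by
    ext x
    simp only [Set.mem_preimage]
    have : phi Z k (x 0) (fun i => x i.succ) = Matrix.toLin' Aᵀ x := by
      ext j
      simp only [Matrix.toLin'_apply, Matrix.mulVec, dotProduct, Matrix.transpose_apply, phi]
      rw [Fin.sum_univ_succ]
      simp [hA, mul_comm]
    rw [← this]; rfl
  rw [h2, h1, hdet, ← mul_assoc, ← ENNReal.ofReal_mul (abs_nonneg _), abs_inv,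
    mul_inv_cancel₀ (by simpa using hk)]
  simp

theorem strip_vol {d : ℕ} (a : ℝ) (W : Set (Fin d → ℝ)) (hW : MeasurableSet W) :
    volume {x : Fin (d+1) → ℝ | |x 0| ≤ a ∧ (fun i => x i.succ) ∈ W} ≤
      ENNReal.ofReal (2 * a) * volume W := by
  refine slice _ ?_ 0 W _ ?_ ?_
  · refine MeasurableSet.inter (s₁ := {x : Fin (d+1) → ℝ | |x 0| ≤ a})
      (s₂ := {x : Fin (d+1) → ℝ | (fun i : Fin d => x i.succ) ∈ W}) ?_ ?_
    · exact (isClosed_le (by fun_prop) (by fun_prop)).measurableSet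
    · exact (show Measurable (fun (x : Fin (d+1) → ℝ) (i : Fin d) => x i.succ) by fun_prop) hW
  · intro Z hZ
    exact hZ.2
  · intro w
    rw [← Real.volume_closedBall 0 a]
    apply measure_mono
    intro y hy
    have := hy.1
    rw [mem_closedBall_zero_iff]
    simpa using this

theorem lemB {d : ℕ} (Z : Fin d → Fin (d+1) → ℝ) :
    ENNReal.ofReal (‖cv Z‖⁻¹) ≤ ENNReal.ofReal (2 * (d + 1)) *
      volume {θ : Fin d → ℝ | ∀ j, |∑ i, θ i * Z i j| ≤ d + 2} := by
  by_cases hc : ‖cv Z‖ = 0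
  · rw [hc]; simp
  have hc0 : 0 < ‖cv Z‖ := lt_of_le_of_ne (norm_nonneg _) (Ne.symm hc)
  obtain ⟨k, hk⟩ := exists_norm_eq_abs (cv Z)
  have hck : cv Z k ≠ 0 := by
    intro h; rw [hk, h] at hc; simp at hc
  have h1 := phi_vol Z k hck (Metric.closedBall 0 1)
  rw [Real.volume_pi_closedBall _ (by norm_num)] at h1
  set W := {θ : Fin d → ℝ | ∀ j, |∑ i, θ i * Z i j| ≤ d + 2} with hW
  have hWm : MeasurableSet W := by
    rw [show W = ⋂ j, {θ | |∑ i, θ i * Z i j| ≤ d + 2} by ext; simp [hW]]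
    exact (isClosed_iInter fun j => isClosed_le (by fun_prop) (by fun_prop)).measurableSet
  have h2 : {x : Fin (d+1) → ℝ | phi Z k (x 0) (fun i => x i.succ) ∈ Metric.closedBall 0 1} ⊆
      {x : Fin (d+1) → ℝ | |x 0| ≤ d + 1 ∧ (fun i => x i.succ) ∈ W} := by
    intro x hx
    have hx : phi Z k (x 0) (fun i => x i.succ) ∈ Metric.closedBall 0 1 := hx
    rw [mem_closedBall_zero_iff, pi_norm_le_iff_of_nonneg (by norm_num)] at hx
    have hx0 : |x 0| ≤ d + 1 := by
      have h3 := phi_det Z k (x 0) (fun i => x i.succ)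
      have h4 : |x 0| * ‖cv Z‖ ≤ (d + 1) * ‖cv Z‖ := by
        rw [hk, ← abs_mul, ← h3, ← hk]
        refine (Finset.abs_sum_le_sum_abs _ _).trans ?_
        calc _ ≤ ∑ j : Fin (d+1), 1 * ‖cv Z‖ := by
              refine Finset.sum_le_sum fun j _ => ?_
              rw [abs_mul]
              exact mul_le_mul (hx j) (norm_le_pi_norm (cv Z) j) (abs_nonneg _) (by norm_num)
          _ = _ := by simp
      exact le_of_mul_le_mul_right h4 hc0
    refine ⟨hx0, fun j => ?_⟩
    have h5 := hx j
    rw [Real.norm_eq_abs] at h5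
    have h6 : |x 0 * (Pi.single k 1 : Fin (d+1) → ℝ) j| ≤ d + 1 := by
      rw [abs_mul]
      refine le_trans ?_ hx0
      apply mul_le_of_le_one_right (abs_nonneg _)
      rw [Pi.single_apply]; split_ifs <;> simp
    have h7 : ∑ i, x (Fin.succ i) * Z i j = phi Z k (x 0) (fun i => x i.succ) j -
      x 0 * (Pi.single k 1 : Fin (d+1) → ℝ) j := by unfold phi; ring
    rw [h7]
    refine (abs_sub _ _).trans ?_
    linarith
  have h3 := (measure_mono (μ := volume) h2).trans (strip_vol _ W hWm)
  have h4 : (1 : ENNReal) ≤ ENNReal.ofReal ‖cv Z‖ * (ENNReal.ofReal (2 * (d+1)) * volume W) := by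
    calc (1 : ENNReal) ≤ ENNReal.ofReal ((2 * 1) ^ Fintype.card (Fin (d+1))) := by
          rw [ENNReal.one_le_ofReal]
          exact one_le_pow₀ (by norm_num)
      _ = _ := h1
      _ ≤ _ := by rw [← hk]; gcongr
  calc ENNReal.ofReal (‖cv Z‖⁻¹) = ENNReal.ofReal (‖cv Z‖⁻¹) * 1 := by simp
    _ ≤ ENNReal.ofReal (‖cv Z‖⁻¹) * (ENNReal.ofReal ‖cv Z‖ * (ENNReal.ofReal (2 * (d+1)) * volume W)) := by
      gcongr
    _ = _ := by
      rw [← mul_assoc, ← ENNReal.ofReal_mul (by positivity), inv_mul_cancel₀ hc]; simp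

theorem tonelli_g (d : ℕ) (R S : ℝ) (W : Set (Fin d → ℝ)) (hW : MeasurableSet W) :
    ∫⁻ Z, volume {θ : Fin d → ℝ | θ ∈ W ∧ Z ∈ gset d R S θ} =
      ∫⁻ θ in W, volume (gset d R S θ) := by
  have hP : MeasurableSet ({p : (Fin d → ℝ) × (Fin d → Fin (d+1) → ℝ) | p.2 ∈ gset d R S p.1} ∩
      (W ×ˢ Set.univ)) :=
    (gset_closed d R S).measurableSet.inter (hW.prod MeasurableSet.univ)
  have h1 := Measure.prod_apply (μ := (volume : Measure (Fin d → ℝ)))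
    (ν := (volume : Measure (Fin d → Fin (d+1) → ℝ))) hP
  have h2 := Measure.prod_apply_symm (μ := (volume : Measure (Fin d → ℝ)))
    (ν := (volume : Measure (Fin d → Fin (d+1) → ℝ))) hP
  rw [h1] at h2
  rw [← lintegral_indicator hW]
  convert h2.symm using 1
  · refine lintegral_congr fun Z => ?_
    congr 1
    ext θ; simp; tauto
  · refine lintegral_congr fun θ => ?_
    by_cases hθ : θ ∈ W
    · rw [Set.indicator_of_mem hθ]
      congr 1
      ext Z; simp [hθ]
    · rw [Set.indicator_of_notMem hθ]
      symm
      convert measure_empty (μ := (volume : Measure (Fin d → Fin (d+1) → ℝ))) using 2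
      ext Z; simp [hθ]

noncomputable def IR (d : ℕ) (R : ℝ) : ENNReal :=
  ∫⁻ Z in Metric.closedBall (0 : Fin d → Fin (d+1) → ℝ) R, ENNReal.ofReal (‖cv Z‖⁻¹)

theorem lemC (d : ℕ) (hd : 1 ≤ d) (R : ℝ) : IR d R < ⊤ := by
  unfold IR
  rw [← lintegral_indicator Metric.isClosed_closedBall.measurableSet]
  have hfin := g_int d hd R (d + 2) (by positivity)
  have ht := tonelli_g d R (d+2) Set.univ MeasurableSet.univ
  rw [Measure.restrict_univ] at ht
  calc _ ≤ ∫⁻ Z, ENNReal.ofReal (2 * (d + 1)) *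
        volume {θ : Fin d → ℝ | θ ∈ Set.univ ∧ Z ∈ gset d R (d+2) θ} := by
        refine lintegral_mono fun Z => ?_
        by_cases hZ : Z ∈ Metric.closedBall (0 : Fin d → Fin (d+1) → ℝ) R
        · rw [Set.indicator_of_mem hZ]
          refine (lemB Z).trans ?_
          gcongr
          intro h2
          exact ⟨Set.mem_univ _, mem_closedBall_zero_iff.1 hZ, h2⟩
        · rw [Set.indicator_of_notMem hZ]; simp
    _ = ENNReal.ofReal (2 * (d + 1)) * ∫⁻ θ, volume (gset d R (d+2) θ) := by
        rw [lintegral_const_mul' _ _ ENNReal.ofReal_ne_top, ht]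
    _ < ⊤ := ENNReal.mul_lt_top ENNReal.ofReal_lt_top hfin

theorem cv_ae (d : ℕ) : ∀ᵐ Z : Fin d → Fin (d+1) → ℝ, cv Z ≠ 0 := by
  let J : Fin d → Fin (d+1) → ℝ := fun i j => if j = i.succ then 1 else 0
  let L : ℝ →ₗ[ℝ] (Fin d → Fin (d+1) → ℝ) := LinearMap.toSpanSingleton ℝ _ J
  have hs : MeasurableSet {Z : Fin d → Fin (d+1) → ℝ | cv Z ≠ 0} :=
    (isOpen_ne_fun cv_cont continuous_const).measurableSet
  refine ae_mem_of_ae_add_linearMap_mem L volume volume hs fun Z => ?_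
  set W : Matrix (Fin d) (Fin d) ℝ := (Matrix.of Z).submatrix id (Fin.succAbove 0) with hWd
  have hfin : {t : ℝ | (-W).charpoly.eval t = 0}.Finite := by
    have h0 : (-W).charpoly ≠ 0 := (Matrix.charpoly_monic _).ne_zero
    refine ((-W).charpoly.roots.toFinset.finite_toSet).subset fun t ht => ?_
    simp only [Finset.mem_coe, Multiset.mem_toFinset]
    rw [Polynomial.mem_roots h0]
    exact ht
  have hae : ∀ᵐ t : ℝ, t ∉ {t : ℝ | (-W).charpoly.eval t = 0} :=
    measure_eq_zero_iff_ae_notMem.1 (hfin.measure_zero _)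
  filter_upwards [hae] with t ht
  intro h
  apply ht
  have h1 := congrFun h 0
  rw [cv_eq] at h1
  show (-W).charpoly.eval t = 0
  rw [Matrix.eval_charpoly]
  simp only [Fin.val_zero, pow_zero, one_mul, Pi.zero_apply] at h1
  rw [← h1]
  congr 1
  ext i j
  simp [hWd, L, J, Matrix.diagonal_apply, Fin.succ_inj, eq_comm, add_comm]

theorem vol_rows {d : ℕ} (V : Set (Fin (d+1) → Fin (d+1) → ℝ)) (hV : MeasurableSet V) :
    volume V = ∫⁻ Z : Fin d → Fin (d+1) → ℝ,
      volume {y : Fin (d+1) → ℝ | (Matrix.vecCons y Z : Fin (d+1) → Fin (d+1) → ℝ) ∈ V} := by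
  have hp := (volume_preserving_piFinSuccAbove (fun _ : Fin (d+1) => Fin (d+1) → ℝ) 0).symm
  have hT' := (MeasurableEquiv.piFinSuccAbove (fun _ : Fin (d+1) => Fin (d+1) → ℝ) 0).symm.measurable hV
  rw [← hp.measure_preimage hV.nullMeasurableSet, Measure.volume_eq_prod,
    Measure.prod_apply_symm hT']
  refine lintegral_congr fun Z => ?_
  congr 1
  ext y
  have : (MeasurableEquiv.piFinSuccAbove (fun _ : Fin (d+1) => Fin (d+1) → ℝ) 0).symm (y, Z) =
      (Matrix.vecCons y Z : Fin (d+1) → Fin (d+1) → ℝ) := by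
    show (Fin.insertNth 0 y Z : Fin (d+1) → Fin (d+1) → ℝ) = _
    rw [Fin.insertNth_zero']; rfl
  simp only [Set.mem_preimage, this]
  rfl

end C3

end PartC3

section PartC4

open Polynomial Matrix
open MeasureTheory
open scoped Pointwise

section C4

theorem lemEF {d : ℕ} (V : Set (Fin (d+1) → Fin (d+1) → ℝ)) (hVm : MeasurableSet V)
    (Ws : Set (Fin d → Fin (d+1) → ℝ)) (hWs : MeasurableSet Ws)
    (b : (Fin d → Fin (d+1) → ℝ) → Fin (d+1) → ℝ) (s δ : ℝ) (hs : 0 ≤ s) (hδ : 0 ≤ δ)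
    (hV : ∀ y Z, (Matrix.vecCons y Z : Fin (d+1) → Fin (d+1) → ℝ) ∈ V →
      Z ∈ Ws ∧ (∀ j, |y j - b Z j| ≤ s) ∧ |∑ j, y j * cv Z j| ≤ δ) :
    volume V ≤ ENNReal.ofReal ((2 * s) ^ d * (2 * δ)) *
      ∫⁻ Z in Ws, ENNReal.ofReal (‖cv Z‖⁻¹) := by
  rw [vol_rows V hVm, ← lintegral_const_mul' _ _ ENNReal.ofReal_ne_top, ← lintegral_indicator hWs]
  refine lintegral_mono_ae ?_
  filter_upwards [cv_ae d] with Z hZ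
  by_cases hW : Z ∈ Ws
  · rw [Set.indicator_of_mem hW]
    refine le_trans (measure_mono ?_) (lemE (cv Z) (b Z) (by simpa using hZ) s δ hs hδ)
    intro y hy
    exact (hV y Z hy).2
  · rw [Set.indicator_of_notMem hW]
    have : {y : Fin (d+1) → ℝ | (Matrix.vecCons y Z : Fin (d+1) → Fin (d+1) → ℝ) ∈ V} = ∅ := by
      ext y
      simp only [Set.mem_empty_iff_false, iff_false]
      intro hy
      exact hW (hV y Z hy).1
    rw [this]; simp

theorem tail_small (d : ℕ) (hd : 1 ≤ d) (R κ : ℝ) (hκ : 0 < κ) : ∃ η : ℝ, 0 < η ∧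
    ∫⁻ Z in (Metric.closedBall (0 : Fin d → Fin (d+1) → ℝ) R ∩ {Z | ‖cv Z‖ ≤ η}),
      ENNReal.ofReal (‖cv Z‖⁻¹) < ENNReal.ofReal κ := by
  set bl := Metric.closedBall (0 : Fin d → Fin (d+1) → ℝ) R with hbl
  have hblm : MeasurableSet bl := Metric.isClosed_closedBall.measurableSet
  have hcm : Measurable (fun Z : Fin d → Fin (d+1) → ℝ => ‖cv Z‖) := cv_cont.norm.measurable
  let ν : Measure (Fin d → Fin (d+1) → ℝ) :=
    (volume.restrict bl).withDensity (fun Z => ENNReal.ofReal (‖cv Z‖⁻¹))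
  let s : ℕ → Set (Fin d → Fin (d+1) → ℝ) := fun N => {Z | ‖cv Z‖ ≤ 1 / ((N:ℝ) + 1)}
  have hsm : ∀ N, MeasurableSet (s N) := fun N => measurableSet_le hcm measurable_const
  have hν : ∀ N, ν (s N) = ∫⁻ Z in (bl ∩ s N), ENNReal.ofReal (‖cv Z‖⁻¹) := by
    intro N
    rw [withDensity_apply _ (hsm N), Measure.restrict_restrict (hsm N), Set.inter_comm]
  have hanti : Antitone s := by
    intro a c hac Z hZ
    have hZ : ‖cv Z‖ ≤ 1 / ((c:ℝ) + 1) := hZ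
    show ‖cv Z‖ ≤ 1 / ((a:ℝ) + 1)
    refine hZ.trans ?_
    gcongr
  have hlim := tendsto_measure_iInter_atTop (μ := ν) (fun N => (hsm N).nullMeasurableSet) hanti
    ⟨0, by
      rw [hν]
      refine ((lintegral_mono_set Set.inter_subset_left).trans_lt (lemC d hd R)).ne⟩
  have h0 : ν (⋂ N, s N) = 0 := by
    rw [withDensity_apply _ (MeasurableSet.iInter hsm)]
    rw [setLIntegral_congr_fun (g := fun _ => 0) (MeasurableSet.iInter hsm)]
    · simp
    · intro Z hZ
      have hz : ‖cv Z‖ = 0 := by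
        apply le_antisymm _ (norm_nonneg _)
        have h1 : ∀ N : ℕ, ‖cv Z‖ ≤ 1 / ((N:ℝ) + 1) := fun N => Set.mem_iInter.1 hZ N
        exact ge_of_tendsto' tendsto_one_div_add_atTop_nhds_zero_nat h1
      simp [hz]
  rw [h0] at hlim
  obtain ⟨N, hN⟩ := (hlim.eventually (gt_mem_nhds (ENNReal.ofReal_pos.2 hκ))).exists
  refine ⟨1 / ((N:ℝ)+1), by positivity, ?_⟩
  simp only [Function.comp] at hN
  rw [hν] at hN
  exact hN

def tl {d : ℕ} (Y : Fin (d+1) → Fin (d+1) → ℝ) : Fin d → Fin (d+1) → ℝ := fun i => Y i.succ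

theorem det_tl {d : ℕ} (Y : Fin (d+1) → Fin (d+1) → ℝ) :
    (Matrix.of Y).det = ∑ k, Y 0 k * cv (tl Y) k := by
  rw [← det_cons]
  congr 2
  ext i
  refine Fin.cases ?_ (fun i => ?_) i <;> simp [tl]

theorem norm_tl {d : ℕ} (Y : Fin (d+1) → Fin (d+1) → ℝ) (R : ℝ) (h : ‖Y‖ ≤ R) : ‖tl Y‖ ≤ R := by
  have hR : 0 ≤ R := (norm_nonneg _).trans h
  rw [pi_norm_le_iff_of_nonneg hR]
  intro i
  exact (norm_le_pi_norm Y i.succ).trans h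

theorem norm_entry {d e : ℕ} (Y : Fin d → Fin e → ℝ) (R : ℝ) (h : ‖Y‖ ≤ R) (i j) : |Y i j| ≤ R :=
  (norm_le_pi_norm (Y i) j).trans ((norm_le_pi_norm Y i).trans h)

theorem norm_le_of_entry {d e : ℕ} (Y : Fin d → Fin e → ℝ) (R : ℝ) (hR : 0 ≤ R)
    (h : ∀ i j, |Y i j| ≤ R) : ‖Y‖ ≤ R := by
  rw [pi_norm_le_iff_of_nonneg hR]
  intro i
  rw [pi_norm_le_iff_of_nonneg hR]
  exact h i

theorem tl_cont {d : ℕ} : Continuous (tl : (Fin (d+1) → Fin (d+1) → ℝ) → _) := by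
  unfold tl; fun_prop

theorem detof_cont {d : ℕ} : Continuous (fun Y : Fin d → Fin d → ℝ => (Matrix.of Y).det) := by
  apply Continuous.matrix_det
  exact continuous_id

theorem lemF (d : ℕ) (hd : 1 ≤ d) (R κ : ℝ) (hR : 0 ≤ R) (hκ : 0 < κ) : ∃ η : ℝ, 0 < η ∧
    ∀ δ : ℝ, 0 ≤ δ → volume {Y : Fin (d+1) → Fin (d+1) → ℝ | ‖Y‖ ≤ R ∧ |(Matrix.of Y).det| ≤ δ ∧
      ‖cv (tl Y)‖ ≤ η} ≤ ENNReal.ofReal (κ * δ) := by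
  obtain ⟨η, hη, h⟩ := tail_small d hd R (κ / (2 * (2 * R + 1) ^ d)) (by positivity)
  refine ⟨η, hη, fun δ hδ => ?_⟩
  have hVm : MeasurableSet {Y : Fin (d+1) → Fin (d+1) → ℝ | ‖Y‖ ≤ R ∧ |(Matrix.of Y).det| ≤ δ ∧
      ‖cv (tl Y)‖ ≤ η} := by
    refine IsClosed.measurableSet ?_
    refine IsClosed.and (isClosed_le (by fun_prop) (by fun_prop)) (IsClosed.and ?_ ?_)
    · exact isClosed_le detof_cont.abs continuous_const
    · exact isClosed_le (cv_cont.comp tl_cont).norm continuous_const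
  have := lemEF _ hVm (Metric.closedBall (0 : Fin d → Fin (d+1) → ℝ) R ∩ {Z | ‖cv Z‖ ≤ η})
    (Metric.isClosed_closedBall.inter (isClosed_le cv_cont.norm continuous_const)).measurableSet
    (fun _ => 0) R δ hR hδ (by
      rintro y Z ⟨h1, h2, h3⟩
      have htl : tl (Matrix.vecCons y Z : Fin (d+1) → Fin (d+1) → ℝ) = Z := by
        ext i j; simp [tl]
      refine ⟨⟨mem_closedBall_zero_iff.2 (by rw [← htl]; exact norm_tl _ _ h1), ?_⟩, ?_, ?_⟩
      · rw [htl] at h3; exact h3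
      · intro j
        have := norm_entry _ _ h1 0 j
        simpa using this
      · rw [← det_cons]; exact h2)
  refine this.trans ?_
  calc _ ≤ ENNReal.ofReal ((2 * R) ^ d * (2 * δ)) * ENNReal.ofReal (κ / (2 * (2 * R + 1) ^ d)) := by
        gcongr
    _ ≤ _ := by
        rw [← ENNReal.ofReal_mul (by positivity)]
        apply ENNReal.ofReal_le_ofReal
        calc (2 * R) ^ d * (2 * δ) * (κ / (2 * (2 * R + 1) ^ d))
            ≤ (2 * R + 1) ^ d * (2 * δ) * (κ / (2 * (2 * R + 1) ^ d)) := by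
              gcongr; linarith
          _ = κ * δ := by field_simp

theorem lem2 (d : ℕ) (R : ℝ) (q : ℝ) (hq : 0 < q) (p : Fin d → ℝ) (s δ : ℝ)
    (hs : 0 ≤ s) (hδ : 0 ≤ δ) :
    volume {Y : Fin (d+1) → Fin (d+1) → ℝ | ‖Y‖ ≤ R ∧ |(Matrix.of Y).det| ≤ δ ∧
      ∀ j, |q * Y 0 j + ∑ i, p i * Y i.succ j| ≤ s} ≤
      ENNReal.ofReal ((2 * (s / q)) ^ d * (2 * δ)) * IR d R := by
  have hVm : MeasurableSet {Y : Fin (d+1) → Fin (d+1) → ℝ | ‖Y‖ ≤ R ∧ |(Matrix.of Y).det| ≤ δ ∧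
      ∀ j, |q * Y 0 j + ∑ i, p i * Y i.succ j| ≤ s} := by
    refine IsClosed.measurableSet ?_
    refine IsClosed.and (isClosed_le (by fun_prop) (by fun_prop)) (IsClosed.and ?_ ?_)
    · exact isClosed_le detof_cont.abs continuous_const
    · simp only [Set.ofPred_forall]
      exact isClosed_iInter fun j => isClosed_le (by fun_prop) (by fun_prop)
  refine lemEF _ hVm (Metric.closedBall (0 : Fin d → Fin (d+1) → ℝ) R)
    Metric.isClosed_closedBall.measurableSet
    (fun Z j => -(∑ i, p i * Z i j) / q) (s / q) δ (by positivity) hδ ?_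
  rintro y Z ⟨h1, h2, h3⟩
  have htl : tl (Matrix.vecCons y Z : Fin (d+1) → Fin (d+1) → ℝ) = Z := by
    ext i j; simp [tl]
  refine ⟨mem_closedBall_zero_iff.2 (by rw [← htl]; exact norm_tl _ _ h1), ?_, ?_⟩
  · intro j
    have := h3 j
    simp only [Matrix.cons_val_zero, Matrix.cons_val_succ] at this
    rw [le_div_iff₀ hq, ← abs_of_pos hq, ← abs_mul, abs_of_pos hq]
    rw [show (y j - -(∑ i, p i * Z i j) / q) * q = q * y j + ∑ i, p i * Z i j by
      rw [sub_mul, div_mul_cancel₀ _ hq.ne']; ring]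
    exact this
  · rw [← det_cons]; exact h2

theorem lem1 (d : ℕ) (R η δ : ℝ) (hη : 0 < η) (hδ : 0 ≤ δ) (hδη : δ ≤ η)
    (V : Set (Fin (d+1) → Fin (d+1) → ℝ)) (hVm : MeasurableSet V)
    (W : Set (Fin d → ℝ)) (hW : MeasurableSet W)
    (hV : ∀ Y ∈ V, ‖Y‖ ≤ R ∧ |(Matrix.of Y).det| ≤ δ ∧ η ≤ ‖cv (tl Y)‖ ∧
      ∀ k τ θ, Y 0 = phi (tl Y) k τ θ → |τ| ≤ δ / η → θ ∈ W) :
    volume V ≤ ENNReal.ofReal (2 * δ) * ∫⁻ θ in W, volume (gset d R (R+1) θ) := by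
  rw [vol_rows V hVm, ← tonelli_g d R (R+1) W hW, ← lintegral_const_mul' _ _ ENNReal.ofReal_ne_top]
  refine lintegral_mono fun Z => ?_
  have htl : ∀ y, tl (Matrix.vecCons y Z : Fin (d+1) → Fin (d+1) → ℝ) = Z := by
    intro y; ext i j; simp [tl]
  by_cases hne : η ≤ ‖cv Z‖
  swap
  · have : {y : Fin (d+1) → ℝ | (Matrix.vecCons y Z : Fin (d+1) → Fin (d+1) → ℝ) ∈ V} = ∅ := by
      ext y
      simp only [Set.mem_empty_iff_false, iff_false]
      intro hy
      have := (hV _ hy).2.2.1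
      rw [htl] at this
      exact hne this
    rw [this]; simp
  obtain ⟨k, hk⟩ := exists_norm_eq_abs (cv Z)
  have hc0 : 0 < |cv Z k| := by rw [← hk]; linarith
  have hck : cv Z k ≠ 0 := abs_pos.1 hc0
  rw [phi_vol Z k hck]
  have hWm : MeasurableSet {θ : Fin d → ℝ | θ ∈ W ∧ Z ∈ gset d R (R+1) θ} := by
    refine MeasurableSet.inter hW (?_ : MeasurableSet {θ : Fin d → ℝ | Z ∈ gset d R (R+1) θ})
    exact ((gset_closed d R (R+1)).preimage (f := fun θ => (θ, Z)) (by fun_prop)).measurableSet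
  have hsub : {x : Fin (d+1) → ℝ | phi Z k (x 0) (fun i => x i.succ) ∈
        {y : Fin (d+1) → ℝ | (Matrix.vecCons y Z : Fin (d+1) → Fin (d+1) → ℝ) ∈ V}} ⊆
      {x : Fin (d+1) → ℝ | |x 0| ≤ δ / |cv Z k| ∧ (fun i : Fin d => x i.succ) ∈
        {θ : Fin d → ℝ | θ ∈ W ∧ Z ∈ gset d R (R+1) θ}} := by
    intro x hx
    obtain ⟨h1, h2, h3, h4⟩ := hV _ hx
    have hx0 : |x 0| ≤ δ / |cv Z k| := by
      rw [le_div_iff₀ hc0, ← abs_mul, ← phi_det Z k (x 0) (fun i => x i.succ), ← det_cons]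
      exact h2
    have hx1 : |x 0| ≤ δ / η := hx0.trans (by rw [← hk]; gcongr)
    have hx2 : |x 0| ≤ 1 := hx1.trans (by rw [div_le_one hη]; exact hδη)
    refine ⟨hx0, ?_, ?_, ?_⟩
    · refine h4 k (x 0) _ ?_ hx1
      rw [htl]; simp
    · rw [← htl]; exact norm_tl _ _ h1
    · intro j
      have h5 := norm_entry _ _ h1 0 j
      simp only [Matrix.cons_val_zero] at h5
      have h6 : |x 0 * (Pi.single k 1 : Fin (d+1) → ℝ) j| ≤ 1 := by
        rw [abs_mul]
        refine le_trans ?_ hx2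
        apply mul_le_of_le_one_right (abs_nonneg _)
        rw [Pi.single_apply]; split_ifs <;> simp
      have h7 : ∑ i, x (Fin.succ i) * Z i j = phi Z k (x 0) (fun i => x i.succ) j -
        x 0 * (Pi.single k 1 : Fin (d+1) → ℝ) j := by unfold phi; ring
      show |∑ i, x (Fin.succ i) * Z i j| ≤ R + 1
      rw [h7]
      refine (abs_sub _ _).trans ?_
      linarith
  calc _ ≤ ENNReal.ofReal |cv Z k| * (ENNReal.ofReal (2 * (δ / |cv Z k|)) *
        volume {θ : Fin d → ℝ | θ ∈ W ∧ Z ∈ gset d R (R+1) θ}) := by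
        gcongr
        exact (measure_mono hsub).trans (strip_vol _ _ hWm)
    _ = _ := by
        rw [← mul_assoc, ← ENNReal.ofReal_mul hc0.le]
        congr 2
        field_simp

end C4

end PartC4

section PartC5

open Polynomial Matrix
open MeasureTheory
open scoped Pointwise

section C5

noncomputable def C0 (d : ℕ) : ℝ := (d+1).factorial * 2 ^ (d+1)

theorem C0_pos (d : ℕ) : 0 < C0 d := by unfold C0; positivity

theorem Ub_entry {d : ℕ} (u) (hu : u ∈ Ub (d+1)) (i j) : |u i j| ≤ 2 := by
  have h1 := ball_entry hu i j
  have h2 : (1 / (4 * ((d+1:ℕ):ℝ)) : ℝ) ≤ 1 := by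
    rw [div_le_one (by positivity)]
    push_cast
    linarith [show (0:ℝ) ≤ d by positivity]
  have h3 : |idf (d+1) i j| ≤ 1 := by
    unfold idf; rw [Matrix.one_apply]; split_ifs <;> simp
  have := abs_sub_abs_le_abs_sub (u i j) (idf (d+1) i j)
  linarith

theorem Ub_det {d : ℕ} (u) (hu : u ∈ Ub (d+1)) : |(Matrix.of u).det| ≤ C0 d := by
  have := det_bound (Matrix.of u) (fun _ => 2) (fun i j => Ub_entry u hu i j)
  simpa [C0] using this

theorem X_norm {d : ℕ} (B : ℕ) (hB : 1 ≤ B) (M) (hM : InT d B M) (u) (hu : u ∈ Ub (d+1)) :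
    ‖(B:ℝ)⁻¹ • lm (rc M) u‖ ≤ 2 := by
  have hB' : (0:ℝ) < B := by exact_mod_cast hB
  apply norm_le_of_entry _ _ (by norm_num)
  intro i j
  have h1 := mul_near (Nat.succ_pos d) (fun k => (M i k : ℝ)) B
    (fun k => by exact_mod_cast hM.2 i k) u hu j
  have h2 : |(M i j : ℝ)| ≤ B := by exact_mod_cast hM.2 i j
  have h3 : ((B:ℝ)⁻¹ • lm (rc M) u) i j = (∑ k, (M i k : ℝ) * u k j) / B := by
    simp [lm, div_eq_inv_mul]
  rw [h3, abs_div, abs_of_pos hB', div_le_iff₀ hB']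
  have := abs_sub_abs_le_abs_sub (∑ k, (M i k : ℝ) * u k j) (M i j : ℝ)
  linarith

theorem X_det {d : ℕ} (B : ℕ) (hB : 1 ≤ B) (M) (hM : InT d B M) (u) (hu : u ∈ Ub (d+1)) :
    |(Matrix.of ((B:ℝ)⁻¹ • lm (rc M) u)).det| ≤ C0 d / (B:ℝ) ^ (d+1) := by
  have h1 : Matrix.of ((B:ℝ)⁻¹ • lm (rc M) u) = (B:ℝ)⁻¹ • (rc M * Matrix.of u) := by
    rw [← lm_eq]; rfl
  rw [h1, Matrix.det_smul, Matrix.det_mul, ← cast_det, hM.1, abs_mul]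
  simp only [Fintype.card_fin, Int.cast_one, one_mul]
  rw [abs_of_pos (by positivity), inv_pow, div_eq_inv_mul]
  gcongr
  exact Ub_det u hu

/-- `m ᵥ* X` in coordinates -/
def mv {d : ℕ} (m : Fin (d+1) → ℤ) (Y : Fin (d+1) → Fin (d+1) → ℝ) (j : Fin (d+1)) : ℝ :=
  ∑ k, (m k : ℝ) * Y k j

theorem X_mv {d : ℕ} (B : ℕ) (_hB : 1 ≤ B) (M : Matrix (Fin (d+1)) (Fin (d+1)) ℤ) (m u) (j) :
    mv m ((B:ℝ)⁻¹ • lm (rc M) u) j = (∑ k, (((m ᵥ* M) k : ℤ) : ℝ) * u k j) / B := by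
  unfold mv
  simp only [Pi.smul_apply, lm, smul_eq_mul, Matrix.vecMul, dotProduct, Int.cast_sum, Int.cast_mul,
    Matrix.map_apply, Finset.sum_mul, Finset.mul_sum, div_eq_inv_mul]
  rw [Finset.sum_comm]
  refine Finset.sum_congr rfl fun k _ => Finset.sum_congr rfl fun l _ => by ring

theorem Ub_vol_pos (d : ℕ) : 0 < volume (Ub (d+1)) := by
  apply Metric.measure_ball_pos
  positivity

theorem Ub_vol_lt (d : ℕ) : volume (Ub (d+1)) < ⊤ := measure_ball_lt_top

theorem count_of_vol (d : ℕ) : ∃ C : ℝ, 0 < C ∧ ∀ (S : Finset (Matrix (Fin (d+1)) (Fin (d+1)) ℤ))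
    (B : ℕ), 1 ≤ B → (∀ M ∈ S, M.det = 1) →
    ∀ (V : Set (Fin (d+1) → Fin (d+1) → ℝ)) (v : ℝ), 0 ≤ v →
    (∀ M ∈ S, ∀ u ∈ Ub (d+1), (B:ℝ)⁻¹ • lm (rc M) u ∈ V) →
    volume V ≤ ENNReal.ofReal (v * (C0 d / (B:ℝ) ^ (d+1))) →
    (S.card : ℝ) ≤ C * v * (B:ℝ) ^ ((d+1)*d) := by
  set w := (volume (Ub (d+1))).toReal with hw
  have hw0 : 0 < w := ENNReal.toReal_pos (Ub_vol_pos d).ne' (Ub_vol_lt d).ne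
  have hwe : volume (Ub (d+1)) = ENNReal.ofReal w := (ENNReal.ofReal_toReal (Ub_vol_lt d).ne).symm
  refine ⟨C0 d / w, div_pos (C0_pos d) hw0, fun S B hB hS V v hv h hV => ?_⟩
  have hB' : (0:ℝ) < B := by exact_mod_cast hB
  have h1 := thicken (Nat.succ_pos d) S hS B hB' V h
  have h2 := h1.trans (mul_le_mul_right hV _)
  have hC := C0_pos d
  have e1 : (S.card : ENNReal) * volume (Ub (d+1)) = ENNReal.ofReal ((S.card : ℝ) * w) := by
    rw [hwe, ENNReal.ofReal_mul (Nat.cast_nonneg _), ENNReal.ofReal_natCast]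
  have hnn : 0 ≤ (B:ℝ) ^ ((d+1) * (d+1)) * (v * (C0 d / (B:ℝ) ^ (d+1))) := by positivity
  have hnn2 : 0 ≤ (B:ℝ) ^ ((d+1) * (d+1)) := by positivity
  rw [e1, ← ENNReal.ofReal_mul hnn2, ENNReal.ofReal_le_ofReal_iff hnn] at h2
  have h3 : (S.card : ℝ) ≤ ((B:ℝ) ^ ((d+1) * (d+1)) * (v * (C0 d / (B:ℝ) ^ (d+1)))) / w := by
    rw [le_div_iff₀ hw0]; exact h2
  refine h3.trans (le_of_eq ?_)
  rw [show (d+1)*(d+1) = (d+1)*d + (d+1) by ring, pow_add]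
  field_simp

theorem mv_split {d : ℕ} (m : Fin (d+1) → ℤ) (Y : Fin (d+1) → Fin (d+1) → ℝ) (j) :
    mv m Y j = (m 0 : ℝ) * Y 0 j + ∑ i : Fin d, (m i.succ : ℝ) * Y i.succ j := by
  unfold mv; rw [Fin.sum_univ_succ]

theorem count2 (d : ℕ) (hd : 1 ≤ d) : ∃ C : ℝ, 0 < C ∧ ∀ (m : Fin (d+1) → ℤ), 0 < m 0 → ∀ s : ℝ,
    0 ≤ s → ∀ B : ℕ, 1 ≤ B → ∀ S : Finset (Matrix (Fin (d+1)) (Fin (d+1)) ℤ),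
    (∀ N ∈ S, InT d (2 * B) N ∧ ∀ j, |(((m ᵥ* N) j : ℤ) : ℝ)| ≤ s * B) →
    (S.card : ℝ) ≤ C * (s / m 0) ^ d * (B:ℝ) ^ ((d+1)*d) := by
  obtain ⟨C, hC, h⟩ := count_of_vol d
  have hI := lemC d hd 2
  set I := (IR d 2).toReal with hIdef
  have hIe : IR d 2 = ENNReal.ofReal I := (ENNReal.ofReal_toReal hI.ne).symm
  have hI0 : 0 ≤ I := ENNReal.toReal_nonneg
  refine ⟨C * (2 ^ d * 2 * (I + 1)) * 2 ^ ((d+1)*d), by positivity, ?_⟩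
  intro m hm s hs B hB S hS
  have hm' : (0:ℝ) < m 0 := by exact_mod_cast hm
  have hB' : (0:ℝ) < B := by exact_mod_cast hB
  have hC0 := C0_pos d
  have := h S (2 * B) (by omega) (fun M hM => (hS M hM).1.1)
    {Y : Fin (d+1) → Fin (d+1) → ℝ | ‖Y‖ ≤ 2 ∧
      |(Matrix.of Y).det| ≤ C0 d / ((2 * B : ℕ):ℝ) ^ (d+1) ∧
      ∀ j, |(m 0 : ℝ) * Y 0 j + ∑ i : Fin d, (m i.succ : ℝ) * Y i.succ j| ≤ s}
    ((2 * (s / m 0)) ^ d * 2 * I) (by positivity)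
    (by
      intro M hM u hu
      refine ⟨X_norm _ (by omega) M (hS M hM).1 u hu, X_det _ (by omega) M (hS M hM).1 u hu, ?_⟩
      intro j
      rw [← mv_split, X_mv _ (by omega), abs_div, div_le_iff₀ (by rw [abs_pos]; positivity)]
      have h1 := mul_near (Nat.succ_pos d) (fun k => (((m ᵥ* M) k : ℤ) : ℝ)) (s * B)
        (fun k => (hS M hM).2 k) u hu j
      have h2 := (hS M hM).2 j
      have h3 := abs_sub_abs_le_abs_sub (∑ k, (((m ᵥ* M) k : ℤ) : ℝ) * u k j) (((m ᵥ* M) j : ℤ) : ℝ)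
      rw [abs_of_pos (show (0:ℝ) < ((2 * B : ℕ) : ℝ) by positivity)]
      push_cast
      have : 0 ≤ s * B := by positivity
      linarith)
    (by
      refine (lem2 d 2 (m 0) hm' (fun i => (m i.succ : ℝ)) s _ hs (by positivity)).trans ?_
      rw [hIe, ← ENNReal.ofReal_mul (by positivity)]
      apply ENNReal.ofReal_le_ofReal
      apply le_of_eq; ring)
  refine this.trans ?_
  push_cast
  rw [mul_pow, mul_pow]
  calc C * (2 ^ d * (s / m 0) ^ d * 2 * I) * (2 ^ ((d+1)*d) * (B:ℝ) ^ ((d+1)*d))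
      = C * (2 ^ d * 2 * I) * 2 ^ ((d+1)*d) * (s / m 0) ^ d * (B:ℝ) ^ ((d+1)*d) := by ring
    _ ≤ _ := by gcongr; linarith

theorem count1 (d : ℕ) (hd : 1 ≤ d) : ∃ C : ℝ, 0 < C ∧ ∀ κ : ℝ, 0 < κ →
    ∀ (ι : Type) (F : Finset ι) (m : ι → Fin (d+1) → ℤ) (s : ι → ℝ),
    (∀ i ∈ F, 0 < m i 0) → (∀ i ∈ F, 0 < s i) →
    (∫⁻ θ in {θ : Fin d → ℝ | ∀ i ∈ F, θ ∉ Metric.closedBall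
        (fun k : Fin d => -(m i k.succ : ℝ) / m i 0) (s i / (8 * d * m i 0))},
      volume (gset d 2 3 θ)) ≤ ENNReal.ofReal κ →
    ∃ B0 : ℕ, ∀ B ≥ B0, ∀ S : Finset (Matrix (Fin (d+1)) (Fin (d+1)) ℤ),
    (∀ N ∈ S, InT d B N ∧ ∀ i ∈ F, ∃ j, s i * B < |(((m i ᵥ* N) j : ℤ) : ℝ)|) →
    (S.card : ℝ) ≤ C * κ * (B:ℝ) ^ ((d+1)*d) := by
  obtain ⟨C, hC, h⟩ := count_of_vol d
  refine ⟨C * 3, by positivity, ?_⟩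
  intro κ hκ ι F m s hm hs hintg
  obtain ⟨η, hη, hF⟩ := lemF d hd 2 κ (by norm_num) hκ
  have hC0 := C0_pos d
  -- δ small
  have hδ : Filter.Tendsto (fun B : ℕ => C0 d / (B:ℝ) ^ (d+1)) Filter.atTop (nhds 0) := by
    apply Filter.Tendsto.const_div_atTop
    exact (Filter.tendsto_pow_atTop (by omega)).comp tendsto_natCast_atTop_atTop
  have hev1 : ∀ᶠ B : ℕ in Filter.atTop, C0 d / (B:ℝ) ^ (d+1) < η := hδ.eventually (gt_mem_nhds hη)
  have hev2 : ∀ᶠ B : ℕ in Filter.atTop, ∀ i ∈ F,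
      C0 d / (B:ℝ) ^ (d+1) < η * (s i / (4 * m i 0)) := by
    rw [Filter.eventually_all_finset]
    intro i hi
    have : (0:ℝ) < m i 0 := by exact_mod_cast hm i hi
    have := hs i hi
    exact hδ.eventually (gt_mem_nhds (by positivity))
  obtain ⟨B0, hB0⟩ := Filter.eventually_atTop.1 (hev1.and (hev2.and (Filter.eventually_ge_atTop 1)))
  refine ⟨B0, fun B hB S hS => ?_⟩
  obtain ⟨hb1, hb2, hB1⟩ := hB0 B hB
  have hB' : (0:ℝ) < B := by exact_mod_cast hB1
  set δ := C0 d / (B:ℝ) ^ (d+1) with hδd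
  have hδ0 : 0 < δ := by positivity
  let V1 : Set (Fin (d+1) → Fin (d+1) → ℝ) := {Y | (‖Y‖ ≤ 2 ∧ |(Matrix.of Y).det| ≤ δ ∧
      η ≤ ‖cv (tl Y)‖) ∧ ∀ i ∈ F, s i / 2 ≤ ‖mv (m i) Y‖}
  let V2 : Set (Fin (d+1) → Fin (d+1) → ℝ) := {Y | ‖Y‖ ≤ 2 ∧ |(Matrix.of Y).det| ≤ δ ∧
      ‖cv (tl Y)‖ ≤ η}
  let W : Set (Fin d → ℝ) := {θ : Fin d → ℝ | ∀ i ∈ F, θ ∉ Metric.closedBall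
        (fun k : Fin d => -(m i k.succ : ℝ) / m i 0) (s i / (8 * d * m i 0))}
  have hWm : MeasurableSet W := by
    have : W = ⋂ i ∈ F, (Metric.closedBall
        (fun k : Fin d => -(m i k.succ : ℝ) / m i 0) (s i / (8 * d * m i 0)))ᶜ := by
      ext; simp [W]
    rw [this]
    exact Finset.measurableSet_biInter _ fun i _ => Metric.isClosed_closedBall.measurableSet.compl
  have hmvc : ∀ i, Continuous (fun Y => mv (m i) Y) := by
    intro i; unfold mv; fun_prop
  have hV1m : MeasurableSet V1 := by
    refine IsClosed.measurableSet ?_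
    refine IsClosed.and (IsClosed.and (isClosed_le (by fun_prop) (by fun_prop)) (IsClosed.and ?_ ?_)) ?_
    · exact isClosed_le detof_cont.abs continuous_const
    · exact isClosed_le continuous_const (cv_cont.comp tl_cont).norm
    · simp only [Set.ofPred_forall]
      exact isClosed_iInter fun i => isClosed_iInter fun _ =>
        isClosed_le continuous_const (hmvc i).norm
  have hV1 : volume V1 ≤ ENNReal.ofReal (2 * δ) * ∫⁻ θ in W, volume (gset d 2 (2+1) θ) := by
    refine lem1 d 2 η δ hη hδ0.le hb1.le V1 hV1m W hWm ?_
    rintro Y ⟨⟨h1, h2, h3⟩, h4⟩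
    refine ⟨h1, h2, h3, ?_⟩
    intro k τ θ hY hτ i hi hθ
    have hm0 : (0:ℝ) < m i 0 := by exact_mod_cast hm i hi
    have hs0 := hs i hi
    have hd' : (0:ℝ) < d := by exact_mod_cast hd
    have h5 := h4 i hi
    have h6 := hb2 i hi
    obtain ⟨j, hj⟩ := exists_norm_eq_abs (mv (m i) Y)
    rw [hj, mv_split, hY] at h5
    have h7 : (m i 0 : ℝ) * phi (tl Y) k τ θ j + ∑ l : Fin d, (m i l.succ : ℝ) * Y l.succ j =
        m i 0 * τ * (Pi.single k 1 : Fin (d+1) → ℝ) j +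
        ∑ l : Fin d, (m i 0 * (θ l - -(m i l.succ : ℝ) / m i 0)) * Y l.succ j := by
      unfold phi tl
      rw [mul_add, Finset.mul_sum, add_assoc, ← Finset.sum_add_distrib]
      congr 1
      · ring
      · refine Finset.sum_congr rfl fun l _ => ?_
        field_simp
        ring
    rw [h7] at h5
    have h8 : |m i 0 * τ * (Pi.single k 1 : Fin (d+1) → ℝ) j| < s i / 4 := by
      have ha : |(Pi.single k 1 : Fin (d+1) → ℝ) j| ≤ 1 := by
        rw [Pi.single_apply]; split_ifs <;> simp
      rw [abs_mul, abs_mul, abs_of_pos hm0]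
      calc m i 0 * |τ| * |(Pi.single k 1 : Fin (d+1) → ℝ) j| ≤ m i 0 * (δ / η) * 1 := by gcongr
        _ < m i 0 * ((η * (s i / (4 * m i 0))) / η) * 1 := by gcongr
        _ = s i / 4 := by field_simp
    have h9 : |∑ l : Fin d, (m i 0 * (θ l - -(m i l.succ : ℝ) / m i 0)) * Y l.succ j| ≤ s i / 4 := by
      refine (Finset.abs_sum_le_sum_abs _ _).trans ?_
      calc _ ≤ ∑ l : Fin d, m i 0 * (s i / (8 * d * m i 0)) * 2 := by
            refine Finset.sum_le_sum fun l _ => ?_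
            rw [abs_mul, abs_mul, abs_of_pos hm0]
            have hb : |θ l - -(m i l.succ : ℝ) / m i 0| ≤ s i / (8 * d * m i 0) := by
              have := (dist_pi_le_iff (by positivity)).1 (Metric.mem_closedBall.1 hθ) l
              rwa [Real.dist_eq] at this
            have := norm_entry Y 2 h1 l.succ j
            gcongr
        _ = s i / 4 := by
            simp; field_simp; norm_num
    have := (abs_add_le _ _).trans_lt (add_lt_add_of_lt_of_le h8 h9)
    linarith
  have hV2 := hF δ hδ0.le
  have := h S B hB1 (fun M hM => (hS M hM).1.1) (V1 ∪ V2) (3 * κ) (by positivity)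
    (by
      intro M hM u hu
      have hx1 := X_norm B hB1 M (hS M hM).1 u hu
      have hx2 := X_det B hB1 M (hS M hM).1 u hu
      by_cases hc : ‖cv (tl ((B:ℝ)⁻¹ • lm (rc M) u))‖ ≤ η
      · exact Or.inr ⟨hx1, hx2, hc⟩
      · refine Or.inl ⟨⟨hx1, hx2, (not_le.1 hc).le⟩, fun i hi => ?_⟩
        obtain ⟨j0, hj0⟩ := (hS M hM).2 i hi
        obtain ⟨j, hj⟩ := exists_norm_eq_abs (fun k => (((m i ᵥ* M) k : ℤ) : ℝ))
        set b := ‖(fun k => (((m i ᵥ* M) k : ℤ) : ℝ))‖ with hb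
        have hle : ∀ k, |(((m i ᵥ* M) k : ℤ) : ℝ)| ≤ b := fun k =>
          norm_le_pi_norm (fun k => (((m i ᵥ* M) k : ℤ) : ℝ)) k
        have h1 := mul_near (Nat.succ_pos d) _ b hle u hu j
        have h2 : s i * B < b := hj0.trans_le (hle j0)
        have h3 := abs_sub_abs_le_abs_sub (((m i ᵥ* M) j : ℤ) : ℝ)
          (∑ k, (((m i ᵥ* M) k : ℤ) : ℝ) * u k j)
        rw [abs_sub_comm] at h3
        refine le_trans ?_ (norm_le_pi_norm _ j)
        rw [X_mv B hB1, Real.norm_eq_abs, abs_div, abs_of_pos hB', le_div_iff₀ hB']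
        have := hs i hi
        have : 0 < s i * B := by positivity
        linarith)
    (by
      refine (measure_union_le _ _).trans ?_
      refine (add_le_add hV1 hV2).trans ?_
      calc _ ≤ ENNReal.ofReal (2 * δ) * ENNReal.ofReal κ + ENNReal.ofReal (κ * δ) := by
            gcongr
            norm_num
            exact hintg
        _ = _ := by
            rw [← ENNReal.ofReal_mul (by positivity), ← ENNReal.ofReal_add (by positivity) (by positivity)]
            congr 1; ring)
  refine this.trans (le_of_eq (by ring))

end C5

end PartC5

section PartC6

open Polynomial Matrix
open MeasureTheory
open scoped Pointwise

section C6

theorem cv_adj {d : ℕ} (Y : Fin (d+1) → Fin (d+1) → ℝ) (k) :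
    cv (tl Y) k = (Matrix.of Y).adjugate k 0 := by
  rw [Matrix.adjugate_apply]
  unfold cv
  congr 1
  ext i j
  refine Fin.cases ?_ (fun i => ?_) i
  · simp
  · simp [tl]

theorem count_deg (d : ℕ) (hd : 1 ≤ d) (m : Fin (d+1) → ℤ) (hm : m 0 ≠ 0) (κ : ℝ) (hκ : 0 < κ) :
    ∃ η : ℝ, 0 < η ∧ ∀ B : ℕ, 1 ≤ B → ∀ S : Finset (Matrix (Fin (d+1)) (Fin (d+1)) ℤ),
    (∀ N ∈ S, InT d B N ∧ ∀ j, |(((N.updateRow j m).det : ℤ) : ℝ)| < η * (B:ℝ) ^ d) →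
    (S.card : ℝ) ≤ κ * (B:ℝ) ^ ((d+1)*d) := by
  obtain ⟨C, hC, h⟩ := count_of_vol d
  have hm' : (m 0 : ℝ) ≠ 0 := by exact_mod_cast hm
  have hC0 := C0_pos d
  let mr : Fin (d+1) → ℝ := fun i => (m i : ℝ)
  let a : Fin (d+1) → ℝ := fun i => if i = 0 then 0 else (m i : ℝ) / m 0
  let e0 : Fin (d+1) → ℝ := Pi.single 0 1
  have hea : e0 ⬝ᵥ a = 0 := by simp [e0, a]
  let hh : Matrix (Fin (d+1)) (Fin (d+1)) ℝ := 1 - (1:ℝ) • vecMulVec a e0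
  have hdet : hh.det = 1 := by
    have := det_move e0 a hea (1:ℝ) 1
    rw [Matrix.mul_one] at this
    rw [show hh = 1 - (1:ℝ) • vecMulVec a e0 from rfl, this, Matrix.det_one]
  have hhm : hh *ᵥ mr = (m 0 : ℝ) • e0 := by
    have h1 : hh *ᵥ mr = mr - (e0 ⬝ᵥ mr) • a := by
      simp only [hh, one_smul, Matrix.sub_mulVec, Matrix.one_mulVec]
      congr 1
      ext i
      simp [vecMulVec, Matrix.mulVec, dotProduct, Finset.mul_sum, Finset.sum_mul, mul_assoc, mul_comm]
      exact Finset.sum_congr rfl fun _ _ => by ring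
    rw [h1]
    ext i
    simp only [e0, single_one_dotProduct, Pi.sub_apply, Pi.smul_apply, smul_eq_mul, a, mr]
    by_cases hi : i = 0
    · subst hi; simp
    · simp [hi]; field_simp; simp
  set R : ℝ := 2 + ‖a‖ * 2 with hR
  obtain ⟨η', hη', hF⟩ := lemF d hd R (κ / C) (by positivity) (by positivity)
  refine ⟨η' * |(m 0 : ℝ)| / ((d+1) * C0 d), by positivity, ?_⟩
  intro B hB S hS
  have hB' : (0:ℝ) < B := by exact_mod_cast hB
  set δ := C0 d / (B:ℝ) ^ (d+1) with hδ
  have hδ0 : 0 < δ := by positivity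
  let V2 : Set (Fin (d+1) → Fin (d+1) → ℝ) := {Y | ‖Y‖ ≤ R ∧ |(Matrix.of Y).det| ≤ δ ∧
      ‖cv (tl Y)‖ ≤ η'}
  have hV2m : MeasurableSet V2 := by
    refine IsClosed.measurableSet ?_
    refine IsClosed.and (isClosed_le (by fun_prop) (by fun_prop)) (IsClosed.and ?_ ?_)
    · exact isClosed_le detof_cont.abs continuous_const
    · exact isClosed_le (cv_cont.comp tl_cont).norm continuous_const
  have hV2 : volume V2 ≤ ENNReal.ofReal (κ / C * δ) := hF δ hδ0.le
  classical
  have hcard : (S.image Matrix.transpose).card = S.card :=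
    Finset.card_image_of_injective _ Matrix.transpose_injective
  have := h (S.image Matrix.transpose) B hB
    (by
      intro M hM
      obtain ⟨N, hN, rfl⟩ := Finset.mem_image.1 hM
      rw [Matrix.det_transpose]; exact (hS N hN).1.1)
    (lm hh ⁻¹' V2) (κ / C) (by positivity)
    (by
      intro L hL u hu
      obtain ⟨N, hN, rfl⟩ := Finset.mem_image.1 hL
      obtain ⟨hT, hdeg⟩ := hS N hN
      have hTt : InT d B Nᵀ := ⟨by rw [Matrix.det_transpose]; exact hT.1, fun i j => hT.2 j i⟩
      have hx1 := X_norm B hB _ hTt u hu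
      have hx2 := X_det B hB _ hTt u hu
      set X := (B:ℝ)⁻¹ • lm (rc Nᵀ) u with hX
      refine ⟨?_, ?_, ?_⟩
      · apply norm_le_of_entry _ _ (by positivity)
        intro i j
        have : lm hh X i j = X i j - a i * X 0 j := by
          simp only [lm, hh, one_smul, Matrix.sub_apply, Matrix.one_apply, vecMulVec_apply, sub_mul,
            Finset.sum_sub_distrib]
          congr 1
          · simp
          · simp [e0, Pi.single_apply]
        rw [this]
        refine (abs_sub _ _).trans ?_
        rw [abs_mul]
        have h1 := norm_entry X 2 hx1 i j
        have h2 := norm_entry X 2 hx1 0 j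
        have h3 : |a i| ≤ ‖a‖ := norm_le_pi_norm a i
        rw [hR]
        gcongr
      · rw [lm_eq, Matrix.det_mul, hdet, one_mul]; exact hx2
      · rw [pi_norm_le_iff_of_nonneg hη'.le]
        intro k
        have e1 : (m 0 : ℝ) * cv (tl (lm hh X)) k = ((Matrix.of X).adjugate *ᵥ mr) k := by
          have e2 : (Matrix.of (lm hh X)).adjugate *ᵥ (hh *ᵥ mr) = (Matrix.of X).adjugate *ᵥ mr := by
            rw [lm_eq, Matrix.adjugate_mul_distrib, Matrix.mulVec_mulVec, Matrix.mul_assoc,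
              Matrix.adjugate_mul, hdet, one_smul, Matrix.mul_one]
          rw [← e2, hhm, Matrix.mulVec_smul, cv_adj]
          simp [e0]
        have e3 : (Matrix.of X).adjugate *ᵥ mr =
            ((B:ℝ)⁻¹ ^ d) • ((Matrix.of u).adjugate *ᵥ ((rc Nᵀ).adjugate *ᵥ mr)) := by
          have : Matrix.of X = (B:ℝ)⁻¹ • (rc Nᵀ * Matrix.of u) := by
            rw [← lm_eq]; rfl
          rw [this, Matrix.adjugate_smul, Matrix.adjugate_mul_distrib, Matrix.mulVec_mulVec,
            Matrix.smul_mulVec]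
          simp
        have e4 : ∀ j, ((rc Nᵀ).adjugate *ᵥ mr) j = (((N.updateRow j m).det : ℤ) : ℝ) := by
          intro j
          rw [← Matrix.cramer_eq_adjugate_mulVec, cast_det,
            show rc Nᵀ = (rc N)ᵀ from rfl, Matrix.cramer_transpose_apply]
          congr 1
          ext i l
          simp only [Matrix.updateRow_apply, Matrix.map_apply, mr]
          split_ifs <;> rfl
        have e5 : |((Matrix.of u).adjugate *ᵥ ((rc Nᵀ).adjugate *ᵥ mr)) k| ≤
            η' * |(m 0 : ℝ)| * (B:ℝ)^d := by
          rw [Matrix.mulVec, dotProduct]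
          refine (Finset.abs_sum_le_sum_abs _ _).trans ?_
          calc _ ≤ ∑ j : Fin (d+1), C0 d * (η' * |(m 0 : ℝ)| / ((d+1) * C0 d) * (B:ℝ)^d) := by
                refine Finset.sum_le_sum fun j _ => ?_
                rw [abs_mul, e4]
                refine mul_le_mul ?_ (hdeg j).le (abs_nonneg _) hC0.le
                rw [Matrix.adjugate_apply]
                have := det_bound ((Matrix.of u).updateRow j (Pi.single k 1)) (fun _ => 2) (by
                  intro i l
                  rw [Matrix.updateRow_apply]
                  split_ifs
                  · rw [Pi.single_apply]; split_ifs <;> simp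
                  · exact Ub_entry u hu i l)
                simpa [C0] using this
            _ = _ := by
                simp; field_simp
        have e6 : |(m 0 : ℝ)| * |cv (tl (lm hh X)) k| ≤ |(m 0 : ℝ)| * η' := by
          rw [← abs_mul, e1, e3, Pi.smul_apply, smul_eq_mul, abs_mul, abs_of_pos (by positivity)]
          calc _ ≤ (B:ℝ)⁻¹ ^ d * (η' * |(m 0 : ℝ)| * (B:ℝ)^d) := by gcongr
            _ = _ := by rw [inv_pow]; field_simp
        exact le_of_mul_le_mul_left e6 (abs_pos.2 hm'))
    (by
      rw [(lm_mp hh hdet).measure_preimage hV2m.nullMeasurableSet]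
      exact hV2)
  rw [hcard] at this
  refine this.trans (le_of_eq ?_)
  field_simp

theorem count_psi (d : ℕ) (hd : 1 ≤ d) (P : MvPolynomial (Fin d) ℚ) (hP : P ≠ 0)
    (m ξ : Fin (d+1) → ℤ) (hm : m 0 ≠ 0) (hξ : ξ ≠ 0) (h0 : m ⬝ᵥ ξ = 0) (κ : ℝ) (hκ : 0 < κ) :
    ∃ B0 : ℕ, ∀ B ≥ B0, ∀ S : Finset (Matrix (Fin (d+1)) (Fin (d+1)) ℤ),
    (∀ N ∈ S, InT d B N ∧
      MvPolynomial.eval (fun i : Fin d => (((F1 m ξ N).coeff i : ℤ) : ℚ)) P = 0) →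
    (S.card : ℝ) ≤ κ * (B:ℝ) ^ ((d+1)*d) := by
  classical
  obtain ⟨η, hη, h1⟩ := count_deg d hd m hm (κ/2) (by positivity)
  obtain ⟨K, h2⟩ := count_nondeg hd P hP m ξ hm hξ h0 η hη
  obtain ⟨B0, hB0⟩ := exists_nat_ge (2 * K / κ)
  refine ⟨B0 + 1, fun B hB S hS => ?_⟩
  have hB1 : 1 ≤ B := by omega
  have hS1 := h1 B hB1
    (S.filter fun N => ∀ j, |(((N.updateRow j m).det : ℤ) : ℝ)| < η * (B:ℝ) ^ d) (by
      intro N hN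
      rw [Finset.mem_filter] at hN
      exact ⟨(hS N hN.1).1, hN.2⟩)
  have hS2 := h2 B hB1
    (S.filter fun N => ¬ ∀ j, |(((N.updateRow j m).det : ℤ) : ℝ)| < η * (B:ℝ) ^ d) (by
      intro N hN
      rw [Finset.mem_filter] at hN
      refine ⟨(hS N hN.1).1, ?_, (hS N hN.1).2⟩
      have := hN.2
      push Not at this
      exact this)
  have hsum : (S.filter fun N => ∀ j, |(((N.updateRow j m).det : ℤ) : ℝ)| < η * (B:ℝ) ^ d).card +
    (S.filter fun N => ¬ ∀ j, |(((N.updateRow j m).det : ℤ) : ℝ)| < η * (B:ℝ) ^ d).card = S.card :=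
      Finset.card_filter_add_card_filter_not _
  rw [← hsum, Nat.cast_add]
  have hS2' : ((S.filter fun N => ¬ ∀ j, |(((N.updateRow j m).det : ℤ) : ℝ)| <
      η * (B:ℝ) ^ d).card : ℝ) ≤ K * (B:ℝ) ^ ((d+1)*d-1) := by exact_mod_cast hS2
  have hpos : 1 ≤ (d+1)*d := Nat.mul_pos (by omega) hd
  have hB0' : 2 * K / κ ≤ B := hB0.trans (by exact_mod_cast (by omega : B0 ≤ B))
  have h3 : (K:ℝ) ≤ κ / 2 * B := by
    rw [div_le_iff₀ hκ] at hB0'; linarith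
  have h4 : (K:ℝ) * (B:ℝ) ^ ((d+1)*d-1) ≤ κ / 2 * (B:ℝ) ^ ((d+1)*d) := by
    calc (K:ℝ) * (B:ℝ) ^ ((d+1)*d-1) ≤ κ / 2 * B * (B:ℝ) ^ ((d+1)*d-1) := by gcongr
      _ = κ / 2 * (B:ℝ) ^ ((d+1)*d) := by
        rw [mul_assoc, ← pow_succ', Nat.sub_add_cancel hpos]
  linarith

end C6

end PartC6

section PartD1

open Polynomial Matrix
open MeasureTheory
open scoped Pointwise

section D1

theorem dirichlet (d : ℕ) (θ : Fin d → ℝ) (H : ℕ) (hH : 1 ≤ H) :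
    ∃ (q : ℕ) (p : Fin d → ℤ), 1 ≤ q ∧ q ≤ H ^ d ∧ ∀ k, |(q:ℝ) * θ k - p k| ≤ 1 / H := by
  classical
  have hH0 : (0:ℝ) < H := by exact_mod_cast hH
  let f : ℕ → (Fin d → ℕ) := fun q k => ⌊(H:ℝ) * Int.fract ((q:ℝ) * θ k)⌋₊
  have hmaps : ∀ q ∈ Finset.range (H ^ d + 1), f q ∈ Fintype.piFinset (fun _ : Fin d => Finset.range H) := by
    intro q _
    rw [Fintype.mem_piFinset]
    intro k
    rw [Finset.mem_range]
    have h0 := Int.fract_nonneg ((q:ℝ) * θ k)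
    have h1 := Int.fract_lt_one ((q:ℝ) * θ k)
    rw [Nat.floor_lt (by positivity)]
    nlinarith
  have hcard : (Fintype.piFinset (fun _ : Fin d => Finset.range H)).card < (Finset.range (H ^ d + 1)).card := by
    simp
  obtain ⟨x, hx, y, hy, hxy, hf⟩ := Finset.exists_ne_map_eq_of_card_lt_of_maps_to hcard hmaps
  rw [Finset.mem_range] at hx hy
  have key : ∀ x y : ℕ, x < y → y < H ^ d + 1 → f x = f y →
    ∃ (q : ℕ) (p : Fin d → ℤ), 1 ≤ q ∧ q ≤ H ^ d ∧ ∀ k, |(q:ℝ) * θ k - p k| ≤ 1 / H := by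
    intro x y hxy hy hf
    refine ⟨y - x, fun k => ⌊(y:ℝ) * θ k⌋ - ⌊(x:ℝ) * θ k⌋, by omega, by omega, fun k => ?_⟩
    have hk := congrFun hf k
    simp only [f] at hk
    have a1 := Int.fract_nonneg ((x:ℝ) * θ k)
    have a2 := Int.fract_nonneg ((y:ℝ) * θ k)
    have b1 := Nat.floor_le (mul_nonneg hH0.le a1)
    have b2 := Nat.floor_le (mul_nonneg hH0.le a2)
    have c1 := Nat.lt_floor_add_one ((H:ℝ) * Int.fract ((x:ℝ) * θ k))
    have c2 := Nat.lt_floor_add_one ((H:ℝ) * Int.fract ((y:ℝ) * θ k))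
    rw [hk] at b1 c1
    have e1 := Int.fract_add_floor ((x:ℝ) * θ k)
    have e2 := Int.fract_add_floor ((y:ℝ) * θ k)
    rw [Nat.cast_sub hxy.le]
    push_cast
    have : ((y:ℝ) - x) * θ k - (⌊(y:ℝ) * θ k⌋ - ⌊(x:ℝ) * θ k⌋) =
      Int.fract ((y:ℝ) * θ k) - Int.fract ((x:ℝ) * θ k) := by linarith
    rw [this, le_div_iff₀ hH0, ← abs_of_pos hH0, ← abs_mul, abs_le]
    constructor <;> nlinarith
  rcases lt_or_gt_of_ne hxy with h | h
  · exact key x y h hy hf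
  · exact key y x h hx hf.symm

theorem siegel (d : ℕ) (hd : 1 ≤ d) (m : Fin (d+1) → ℤ) (A H : ℝ) (hA : 1 ≤ A) (hH : 1 ≤ H)
    (hm : ∀ k, |(m k : ℝ)| ≤ A * H ^ d) :
    ∃ ξ : Fin (d+1) → ℤ, ξ ≠ 0 ∧ m ⬝ᵥ ξ = 0 ∧ ∀ k, |(ξ k : ℝ)| ≤ (d+1) * A * H := by
  obtain ⟨t, ht, h0, hn⟩ := Int.Matrix.exists_ne_zero_int_vec_norm_le (Matrix.of (fun _ : Unit => m))
    (by simp; omega) (by simp)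
  refine ⟨t, ht, ?_, fun k => ?_⟩
  · have := congrFun h0 ()
    simpa [Matrix.mulVec] using this
  have h1 : |(t k : ℝ)| ≤ ‖t‖ := by
    have := norm_le_pi_norm t k
    rwa [Int.norm_eq_abs] at this
  refine h1.trans (hn.trans ?_)
  have hd0 : (0:ℝ) < d := by exact_mod_cast hd
  have hAH : 1 ≤ A * H ^ d := one_le_mul_of_one_le_of_one_le hA (one_le_pow₀ hH)
  have e : ((Fintype.card Unit : ℕ) : ℝ) / ((Fintype.card (Fin (d+1)) : ℕ) - (Fintype.card Unit : ℕ)) = 1 / d := by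
    simp
  rw [e]
  have hnorm : max 1 (@norm _ Matrix.seminormedAddCommGroup.toNorm (Matrix.of (fun _ : Unit => m))) ≤ A * H ^ d := by
    refine max_le hAH ?_
    rw [Matrix.norm_le_iff (by linarith)]
    intro i j
    rw [Int.norm_eq_abs]
    exact hm j
  have hb : ((Fintype.card (Fin (d+1)) : ℕ) : ℝ) * max 1 (@norm _ Matrix.seminormedAddCommGroup.toNorm (Matrix.of (fun _ : Unit => m))) ≤ ((d+1) * A * H) ^ d := by
    have h2 : ((d:ℝ)+1) * A ≤ ((d+1) * A) ^ d := by
      apply le_self_pow₀ _ (by omega)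
      nlinarith
    calc _ ≤ ((d:ℝ)+1) * (A * H ^ d) := by
          rw [Fintype.card_fin]; push_cast; gcongr
      _ = ((d:ℝ)+1) * A * H ^ d := by ring
      _ ≤ ((d+1) * A) ^ d * H ^ d := by gcongr
      _ = _ := by rw [mul_pow _ H]
  refine (Real.rpow_le_rpow (by positivity) hb (by positivity)).trans ?_
  rw [one_div, Real.pow_rpow_inv_natCast (by positivity) (by omega)]

theorem good_vec (d : ℕ) (hd : 1 ≤ d) (Θ : ℝ) (hΘ : 0 ≤ Θ) : ∃ K : ℝ, 1 ≤ K ∧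
    ∀ θ : Fin d → ℝ, ‖θ‖ ≤ Θ → ∀ H : ℕ, 1 ≤ H → ∃ m ξ : Fin (d+1) → ℤ,
      0 < m 0 ∧ (∀ k : Fin d, |(m 0 : ℝ) * θ k + m k.succ| ≤ 1 / H) ∧ ξ ≠ 0 ∧ m ⬝ᵥ ξ = 0 ∧
      ∀ k, |(ξ k : ℝ)| ≤ K * H := by
  refine ⟨(d+1) * (Θ + 1), by nlinarith [(Nat.cast_nonneg d : (0:ℝ) ≤ d)], fun θ hθ H hH => ?_⟩
  obtain ⟨q, p, hq1, hq2, hqp⟩ := dirichlet d θ H hH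
  have hH1 : (1:ℝ) ≤ H := by exact_mod_cast hH
  have hq1' : (1:ℝ) ≤ q := by exact_mod_cast hq1
  have hq2' : (q:ℝ) ≤ (H:ℝ)^d := by exact_mod_cast hq2
  let m : Fin (d+1) → ℤ := Fin.cons (q:ℤ) (fun k => - p k)
  have hm : ∀ k, |(m k : ℝ)| ≤ (Θ+1) * (H:ℝ) ^ d := by
    intro k
    refine Fin.cases ?_ (fun k => ?_) k
    · simp only [m, Fin.cons_zero, Int.cast_natCast]
      rw [abs_of_nonneg (by linarith)]
      nlinarith
    · simp only [m, Fin.cons_succ, Int.cast_neg, abs_neg]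
      have h1 := hqp k
      have h2 : |θ k| ≤ Θ := (norm_le_pi_norm θ k).trans hθ
      have h3 : |(p k : ℝ)| ≤ |(q:ℝ) * θ k - p k| + |(q:ℝ) * θ k| := by
        have := abs_sub (((q:ℝ) * θ k)) ((q:ℝ) * θ k - p k)
        rw [sub_sub_cancel] at this
        linarith
      have h4 : 1 / (H:ℝ) ≤ 1 := by rw [div_le_one (by linarith)]; exact hH1
      rw [abs_mul, abs_of_nonneg (by linarith : (0:ℝ) ≤ q)] at h3
      nlinarith [mul_le_mul_of_nonneg_left h2 (by linarith : (0:ℝ) ≤ q)]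
  obtain ⟨ξ, h1, h2, h3⟩ := siegel d hd m (Θ+1) H (by linarith) hH1 hm
  refine ⟨m, ξ, by simp [m]; omega, fun k => ?_, h1, h2, h3⟩
  have := hqp k
  simpa [m, sub_eq_add_neg] using this

end D1

end PartD1

section PartD2

open Polynomial Matrix
open MeasureTheory
open scoped Pointwise

section D2

theorem finite_sub {α E : Type} [Nonempty α] [MeasurableSpace E] (ν : Measure E) [IsFiniteMeasure ν]
    (u : Set α) (hu : u.Countable) (Bl : α → Set E) (hB : ∀ a ∈ u, MeasurableSet (Bl a))
    (s : Set E) (hs : MeasurableSet s) (h0 : ν (s \ ⋃ a ∈ u, Bl a) = 0) (ε : ENNReal) (hε : 0 < ε) :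
    ∃ F : Finset α, (∀ a ∈ F, a ∈ u) ∧ ν (s \ ⋃ a ∈ F, Bl a) < ε := by
  classical
  obtain ⟨f, hf⟩ := Set.countable_iff_exists_subset_range.1 hu
  let Fn : ℕ → Finset α := fun n => ((Finset.range n).image f).filter (· ∈ u)
  have hFu : ∀ n, ∀ a ∈ Fn n, a ∈ u := fun n a ha => (Finset.mem_filter.1 ha).2
  have hmono : Antitone (fun n => s \ ⋃ a ∈ Fn n, Bl a) := by
    intro a b hab
    apply Set.sdiff_subset_sdiff_right
    apply Set.biUnion_subset_biUnion_left
    intro x hx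
    replace hx : x ∈ Fn a := hx
    simp only [Fn, Finset.mem_image, Finset.mem_range, Finset.mem_filter] at hx
    obtain ⟨⟨k, hk, rfl⟩, hx2⟩ := hx
    have : f k ∈ Fn b := by
      simp only [Fn, Finset.mem_filter, Finset.mem_image, Finset.mem_range]
      exact ⟨⟨k, by omega, rfl⟩, hx2⟩
    exact this
  have ht := tendsto_measure_iInter_atTop (μ := ν) (s := fun n => s \ ⋃ a ∈ Fn n, Bl a)
    (fun n => (hs.diff (Finset.measurableSet_biUnion _ fun a ha => hB a (hFu n a ha))).nullMeasurableSet)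
    hmono ⟨0, measure_ne_top _ _⟩
  have hI : (⋂ n, s \ ⋃ a ∈ Fn n, Bl a) ⊆ s \ ⋃ a ∈ u, Bl a := by
    intro x hx
    rw [Set.mem_iInter] at hx
    refine ⟨(hx 0).1, fun hx' => ?_⟩
    rw [Set.mem_iUnion₂] at hx'
    obtain ⟨a, ha, hxa⟩ := hx'
    obtain ⟨k, rfl⟩ := hf ha
    refine (hx (k+1)).2 ?_
    rw [Set.mem_iUnion₂]
    refine ⟨f k, ?_, hxa⟩
    simp only [Fn, Finset.mem_filter, Finset.mem_image, Finset.mem_range]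
    exact ⟨⟨k, by omega, rfl⟩, ha⟩
  rw [measure_mono_null hI h0] at ht
  obtain ⟨n, hn⟩ := (ht.eventually (gt_mem_nhds hε)).exists
  exact ⟨Fn n, hFu n, hn⟩

theorem dioph (d : ℕ) (hd : 1 ≤ d) (κ : ℝ) (hκ : 0 < κ) : ∃ CΘ : ℝ, 0 < CΘ ∧ ∀ Q : ℕ, 1 ≤ Q →
    ∃ (ι : Type) (F : Finset ι) (m ξ : ι → Fin (d+1) → ℤ) (s : ι → ℝ),
    (∀ i ∈ F, 0 < m i 0) ∧ (∀ i ∈ F, 0 < s i) ∧ (∀ i ∈ F, ξ i ≠ 0) ∧ (∀ i ∈ F, m i ⬝ᵥ ξ i = 0) ∧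
    (∀ i ∈ F, ∀ k, Q * |(ξ i k : ℝ)| * s i ≤ 1) ∧
    (∫⁻ θ in {θ : Fin d → ℝ | ∀ i ∈ F, θ ∉ Metric.closedBall
        (fun k : Fin d => -(m i k.succ : ℝ) / m i 0) (s i / (8 * d * m i 0))},
      volume (gset d 2 3 θ)) ≤ ENNReal.ofReal κ ∧
    ∑ i ∈ F, (s i / m i 0) ^ d ≤ CΘ := by
  classical
  let ν : Measure (Fin d → ℝ) := volume.withDensity (fun θ => volume (gset d 2 3 θ))
  have : IsFiniteMeasure ν := isFiniteMeasure_withDensity (g_int d hd 2 3 (by norm_num)).ne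
  have hac : ν ≪ volume := withDensity_absolutelyContinuous _ _
  -- choose Θ
  have hκ2 : 0 < ENNReal.ofReal (κ/2) := by rw [ENNReal.ofReal_pos]; positivity
  obtain ⟨Θ, hΘ⟩ : ∃ Θ : ℕ, ν (Metric.closedBall 0 (Θ:ℝ))ᶜ < ENNReal.ofReal (κ/2) := by
    have ht := tendsto_measure_iInter_atTop (μ := ν) (s := fun n : ℕ => (Metric.closedBall (0: Fin d → ℝ) (n:ℝ))ᶜ)
      (fun n => (Metric.isClosed_closedBall.measurableSet.compl).nullMeasurableSet)
      (by
        intro a b hab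
        apply Set.compl_subset_compl.2
        apply Metric.closedBall_subset_closedBall
        exact_mod_cast hab) ⟨0, measure_ne_top _ _⟩
    have hI : (⋂ n : ℕ, (Metric.closedBall (0: Fin d → ℝ) (n:ℝ))ᶜ) = ∅ := by
      rw [← Set.compl_iUnion, Metric.iUnion_closedBall_nat, Set.compl_univ]
    rw [hI, measure_empty] at ht
    exact (ht.eventually (gt_mem_nhds hκ2)).exists
  obtain ⟨K, hK, hgood⟩ := good_vec d hd Θ (Nat.cast_nonneg _)
  have hd0 : (0:ℝ) < d := by exact_mod_cast hd
  have hd1 : (1:ℝ) ≤ d := by exact_mod_cast hd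
  refine ⟨(4 * d) ^ d * (2 * (Θ + 4)) ^ d, by positivity, fun Q hQ => ?_⟩
  have hQ1 : (1:ℝ) ≤ Q := by exact_mod_cast hQ
  let ι := (Fin d → ℝ) × (Fin (d+1) → ℤ) × (Fin (d+1) → ℤ) × ℕ
  let θ' : ι → (Fin d → ℝ) := fun a => a.1
  let m : ι → Fin (d+1) → ℤ := fun a => a.2.1
  let ξ : ι → Fin (d+1) → ℤ := fun a => a.2.2.1
  let H : ι → ℕ := fun a => a.2.2.2
  let s : ι → ℝ := fun a => 1 / (Q * K * H a)
  let t : Set ι := {a | ‖θ' a‖ ≤ Θ ∧ 1 ≤ H a ∧ 0 < m a 0 ∧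
    (∀ k : Fin d, |(m a 0 : ℝ) * θ' a k + m a k.succ| ≤ 1 / H a) ∧ ξ a ≠ 0 ∧ m a ⬝ᵥ ξ a = 0 ∧
      ∀ k, |(ξ a k : ℝ)| ≤ K * H a}
  let Bl : ι → Set (Fin d → ℝ) := fun a => Metric.closedBall
        (fun k : Fin d => -(m a k.succ : ℝ) / m a 0) (s a / (8 * d * m a 0))
  let r : ι → ℝ := fun a => 2 / (m a 0 * H a)
  have hH1 : ∀ a ∈ t, (1:ℝ) ≤ H a := fun a ha => by exact_mod_cast ha.2.1
  have hm1 : ∀ a ∈ t, (1:ℝ) ≤ m a 0 := fun a ha => by exact_mod_cast ha.2.2.1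
  have hspos : ∀ a ∈ t, 0 < s a := fun a ha => by
    have := hH1 a ha; positivity
  have hrad : ∀ a ∈ t, 0 < s a / (8 * d * m a 0) := fun a ha => by
    have := hm1 a ha; have := hspos a ha; positivity
  have hrad2 : ∀ a ∈ t, s a / (8 * d * m a 0) ≤ 1 / (m a 0 * H a) := fun a ha => by
    have h1 := hm1 a ha
    have h2 := hH1 a ha
    simp only [s]
    rw [div_div]
    apply one_div_le_one_div_of_le (by positivity)
    have : 1 ≤ Q * K * (8 * d) := by
      have : 1 ≤ Q * K := one_le_mul_of_one_le_of_one_le hQ1 hK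
      nlinarith
    calc (m a 0 : ℝ) * H a = 1 * (m a 0 * H a) := by ring
      _ ≤ (Q * K * (8 * d)) * (m a 0 * H a) := by gcongr
      _ = _ := by ring
  have hBsub : ∀ a ∈ t, Bl a ⊆ Metric.closedBall (θ' a) (r a) := by
    intro a ha
    have h1 := hm1 a ha
    have h2 := hH1 a ha
    apply Metric.closedBall_subset_closedBall'
    have : dist (fun k : Fin d => -(m a k.succ : ℝ) / m a 0) (θ' a) ≤ 1 / (m a 0 * H a) := by
      rw [dist_pi_le_iff (by positivity)]
      intro k
      have h3 := ha.2.2.2.1 k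
      rw [dist_comm, Real.dist_eq]
      have e : θ' a k - -(m a k.succ : ℝ) / m a 0 = ((m a 0 : ℝ) * θ' a k + m a k.succ) / m a 0 := by
        field_simp; ring
      rw [e, abs_div, abs_of_pos (by linarith : (0:ℝ) < m a 0), mul_comm (m a 0 : ℝ) (H a : ℝ), ← div_div]
      gcongr
    have h4 := hrad2 a ha
    have : r a = 1 / (m a 0 * H a) + 1 / (m a 0 * H a) := by simp only [r]; ring
    linarith
  have hvol : ∀ a ∈ t, volume (Bl a) = ENNReal.ofReal ((2 * (s a / (8 * d * m a 0))) ^ d) := by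
    intro a ha
    rw [Real.volume_pi_closedBall _ (hrad a ha).le, Fintype.card_fin]
  obtain ⟨u, hut, huc, hud, hu0⟩ := Vitali.exists_disjoint_covering_ae (volume : Measure (Fin d → ℝ))
    (Metric.closedBall 0 (Θ:ℝ)) t (Real.toNNReal ((48 * d * Q * K) ^ d)) r θ' Bl hBsub
    (by
      intro a ha
      have h1 := hm1 a ha
      have h2 := hH1 a ha
      rw [hvol a ha, Real.volume_pi_closedBall _ (by positivity), Fintype.card_fin]
      rw [← ENNReal.ofReal, ← ENNReal.ofReal_mul (by positivity), ← mul_pow]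
      apply le_of_eq
      congr 2
      simp only [r, s]
      field_simp
      norm_num)
    (by
      intro a ha
      refine Set.Nonempty.mono (interior_mono Metric.ball_subset_closedBall) ?_
      rw [Metric.isOpen_ball.interior_eq]
      exact Metric.nonempty_ball.2 (hrad a ha))
    (fun a _ => Metric.isClosed_closedBall)
    (by
      intro x hx ε hε
      obtain ⟨H0, hH0⟩ := exists_nat_ge (2/ε)
      have hx' : ‖x‖ ≤ Θ := by simpa using hx
      obtain ⟨m', ξ', g1, g2, g3, g4, g5⟩ := hgood x hx' (H0+1) (by omega)
      refine ⟨(x, m', ξ', H0+1), ⟨hx', by simp [H], g1, g2, g3, g4, g5⟩, ?_, rfl⟩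
      simp only [r, m, H]
      have hm' : (1:ℝ) ≤ m' 0 := by exact_mod_cast g1
      have h3 : 2 / ε ≤ (m' 0 : ℝ) * ((H0 + 1 : ℕ) : ℝ) := by
        push_cast
        have : (0:ℝ) ≤ H0 := Nat.cast_nonneg _
        nlinarith
      have h4 : (0:ℝ) < (m' 0 : ℝ) * ((H0 + 1 : ℕ) : ℝ) := by positivity
      rw [div_le_iff₀ h4]
      rw [div_le_iff₀ hε] at h3
      linarith)
  obtain ⟨F, hFu, hF⟩ := finite_sub ν u huc Bl (fun a _ => Metric.isClosed_closedBall.measurableSet)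
    _ Metric.isClosed_closedBall.measurableSet (hac hu0) _ hκ2
  have hFt : ∀ a ∈ F, a ∈ t := fun a ha => hut (hFu a ha)
  refine ⟨ι, F, m, ξ, s, fun i hi => (hFt i hi).2.2.1, fun i hi => hspos i (hFt i hi),
    fun i hi => (hFt i hi).2.2.2.2.1, fun i hi => (hFt i hi).2.2.2.2.2.1, ?_, ?_, ?_⟩
  · intro i hi k
    have h1 := (hFt i hi).2.2.2.2.2.2 k
    have h2 := hH1 i (hFt i hi)
    simp only [s]
    rw [mul_one_div, div_le_one (by positivity), mul_assoc]
    gcongr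
  · have hW : MeasurableSet {θ : Fin d → ℝ | ∀ i ∈ F, θ ∉ Bl i} := by
      have : {θ : Fin d → ℝ | ∀ i ∈ F, θ ∉ Bl i} = ⋂ i ∈ F, (Bl i)ᶜ := by
        ext x; simp
      rw [this]
      exact Finset.measurableSet_biInter _ fun i _ => Metric.isClosed_closedBall.measurableSet.compl
    have e := withDensity_apply (μ := volume) (fun θ => volume (gset d 2 3 θ)) hW
    refine e.symm.le.trans ?_
    have hsub : {θ : Fin d → ℝ | ∀ i ∈ F, θ ∉ Bl i} ⊆
      (Metric.closedBall 0 (Θ:ℝ))ᶜ ∪ (Metric.closedBall 0 (Θ:ℝ) \ ⋃ a ∈ F, Bl a) := by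
      intro x hx
      by_cases h : x ∈ Metric.closedBall (0 : Fin d → ℝ) (Θ:ℝ)
      · right
        refine ⟨h, ?_⟩
        rw [Set.mem_iUnion₂]
        rintro ⟨a, ha, hxa⟩
        exact hx a ha hxa
      · left; exact h
    calc ν _ ≤ _ := measure_mono hsub
      _ ≤ _ := measure_union_le _ _
      _ ≤ ENNReal.ofReal (κ/2) + ENNReal.ofReal (κ/2) := add_le_add hΘ.le hF.le
      _ = ENNReal.ofReal κ := by
        rw [← ENNReal.ofReal_add (by positivity) (by positivity)]; congr 1; ring
  · have hsum : ∑ a ∈ F, volume (Bl a) ≤ volume (Metric.closedBall (0 : Fin d → ℝ) (Θ+4)) := by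
      rw [← measure_biUnion_finset (fun a ha b hb hab => hud (hFu a ha) (hFu b hb) hab)
        (fun a _ => Metric.isClosed_closedBall.measurableSet)]
      apply measure_mono
      rw [Set.iUnion₂_subset_iff]
      intro a ha
      refine (hBsub a (hFt a ha)).trans ?_
      apply Metric.closedBall_subset_closedBall'
      have h1 := hm1 a (hFt a ha)
      have h2 := hH1 a (hFt a ha)
      have h3 : r a ≤ 2 := by
        simp only [r]
        rw [div_le_iff₀ (by positivity)]
        nlinarith [one_le_mul_of_one_le_of_one_le h1 h2]
      have h4 := (hFt a ha).1
      rw [dist_zero_right]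
      linarith
    rw [Real.volume_pi_closedBall _ (by positivity), Fintype.card_fin,
      Finset.sum_congr rfl (fun a ha => hvol a (hFt a ha)), ← ENNReal.ofReal_sum_of_nonneg
        (fun a ha => pow_nonneg (by have := hrad a (hFt a ha); positivity) _),
      ENNReal.ofReal_le_ofReal_iff (by positivity)] at hsum
    refine le_trans (le_of_eq ?_) (mul_le_mul_of_nonneg_left hsum (by positivity : (0:ℝ) ≤ (4*d)^d))
    rw [Finset.mul_sum]
    refine Finset.sum_congr rfl fun a ha => ?_
    rw [← mul_pow]
    congr 1
    have h1 : (m a 0 : ℝ) ≠ 0 := by have := hm1 a (hFt a ha); positivity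
    field_simp
    ring

end D2

end PartD2

section PartE1

open Polynomial Matrix
open MeasureTheory
open scoped Pointwise

section E1

noncomputable def bx (k b : ℕ) : Finset (Fin k → ℤ) := Fintype.piFinset (fun _ => Finset.Icc (-(b:ℤ)) b)

theorem mem_bx {k b : ℕ} {x : Fin k → ℤ} : x ∈ bx k b ↔ ∀ i, |x i| ≤ (b:ℤ) := by
  simp [bx, Fintype.mem_piFinset, abs_le]

theorem card_bx (k b : ℕ) : (bx k b).card = (2*b+1)^k := by
  rw [bx, Fintype.card_piFinset]
  simp only [Int.card_Icc, Finset.prod_const, Finset.card_univ, Fintype.card_fin]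
  congr 1
  omega

theorem res_count (b p : ℕ) (hp : 0 < p) (A : Finset ℤ) (hA : ∀ z ∈ A, |z| ≤ (b:ℤ))
    (hc : ∀ z ∈ A, ∀ w ∈ A, (p:ℤ) ∣ z - w) : A.card ≤ (2*b+1)/p + 1 := by
  have hp' : (0:ℤ) < p := by exact_mod_cast hp
  have : A.card ≤ (Finset.range ((2*b+1)/p+1)).card := by
    apply Finset.card_le_card_of_injOn (fun z : ℤ => ((z + b) / p).toNat)
    · intro z hz
      have h1 := abs_le.1 (hA z hz)
      simp only [Finset.coe_range, Set.mem_Iio]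
      have h2 : (z + b) / p ≤ ((2*b+1 : ℕ) : ℤ) / p := Int.ediv_le_ediv hp' (by push_cast; omega)
      have h3 : (((2*b+1 : ℕ) : ℤ) / p).toNat = (2*b+1)/p := by
        rw [← Int.natCast_div, Int.toNat_natCast]
      have h4 := Int.toNat_le_toNat h2
      omega
    · intro z hz w hw h
      have h1 := abs_le.1 (hA z hz)
      have h2 := abs_le.1 (hA w hw)
      simp only at h
      have e1 : 0 ≤ (z + b) / p := Int.ediv_nonneg (by omega) hp'.le
      have e2 : 0 ≤ (w + b) / p := Int.ediv_nonneg (by omega) hp'.le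
      have h3 : (z + b) / p = (w + b) / p := by omega
      have h4 : (z + b) % p = (w + b) % p := by
        apply Int.emod_eq_emod_iff_emod_sub_eq_zero.2
        apply Int.emod_eq_zero_of_dvd
        have := hc z hz w hw
        rwa [show z + b - (w + b) = z - w by ring]
      have a1 := Int.mul_ediv_add_emod (z+b) p
      have a2 := Int.mul_ediv_add_emod (w+b) p
      rw [h3, h4] at a1
      linarith
  simpa using this

theorem line_count (k b p : ℕ) (hp : p.Prime) (e : Fin (k+1) → ℤ) (j : Fin (k+1)) (hj : ¬ (p:ℤ) ∣ e j) :
    ((bx (k+1) b).filter (fun x => (p:ℤ) ∣ x ⬝ᵥ e)).card ≤ ((2*b+1)/p+1) * (2*b+1)^k := by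
  classical
  set S := (bx (k+1) b).filter (fun x => (p:ℤ) ∣ x ⬝ᵥ e)
  have h1 : S.card ≤ ((2*b+1)/p+1) * (S.image (fun x => j.removeNth x)).card := by
    apply Finset.card_le_mul_card_image
    intro y _
    rw [← Finset.card_image_of_injOn (f := fun x : Fin (k+1) → ℤ => x j)]
    · apply res_count b p hp.pos
      · intro z hz
        simp only [Finset.mem_image, Finset.mem_filter, S] at hz
        obtain ⟨x, ⟨⟨hx, _⟩, _⟩, rfl⟩ := hz
        exact mem_bx.1 hx j
      · intro z hz w hw
        simp only [Finset.mem_image, Finset.mem_filter, S] at hz hw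
        obtain ⟨x, ⟨⟨_, hx⟩, hxy⟩, rfl⟩ := hz
        obtain ⟨x', ⟨⟨_, hx'⟩, hxy'⟩, rfl⟩ := hw
        have hd := dvd_sub hx hx'
        have : x ⬝ᵥ e - x' ⬝ᵥ e = (x j - x' j) * e j := by
          simp only [dotProduct]
          rw [Fin.sum_univ_succAbove _ j, Fin.sum_univ_succAbove (fun i => x' i * e i) j]
          have : ∀ i, x (j.succAbove i) = x' (j.succAbove i) := fun i =>
            congrFun (hxy.trans hxy'.symm) i
          simp only [this]
          ring
        rw [this] at hd
        exact (((Nat.prime_iff_prime_int.1 hp).dvd_mul.1 hd).resolve_right hj)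
    · intro x hx x' hx' h
      simp only [Finset.coe_filter, Set.mem_ofPred_eq] at hx hx'
      have h2 := hx.2.trans hx'.2.symm
      ext i
      by_cases hij : i = j
      · rw [hij]; exact h
      · obtain ⟨i', rfl⟩ := Fin.exists_succAbove_eq hij
        exact congrFun h2 i'
  refine h1.trans ?_
  gcongr
  rw [← card_bx k b]
  apply Finset.card_le_card
  intro y hy
  simp only [Finset.mem_image, Finset.mem_filter, S] at hy
  obtain ⟨x, ⟨hx, _⟩, rfl⟩ := hy
  rw [mem_bx] at hx ⊢
  intro i
  exact hx _

theorem sum_sq (W : ℕ) : ∑ k ∈ Finset.Icc 2 W, (1:ℝ) / (k:ℝ)^2 ≤ 3/4 := by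
  have key : ∀ W : ℕ, 2 ≤ W → ∑ k ∈ Finset.Icc 2 W, (1:ℝ) / (k:ℝ)^2 ≤ 3/4 - 1 / W := by
    intro W hW
    induction W, hW using Nat.le_induction with
    | base => simp; norm_num
    | succ n hn ih =>
      rw [Finset.sum_Icc_succ_top (by omega)]
      have hn0 : (0:ℝ) < n := by positivity
      have : (1:ℝ) / ((n+1:ℕ):ℝ)^2 ≤ 1 / n - 1 / ((n+1:ℕ):ℝ) := by
        push_cast
        rw [div_sub_div _ _ (by positivity) (by positivity), div_le_div_iff₀ (by positivity) (by positivity)]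
        nlinarith
      linarith
  by_cases h : 2 ≤ W
  · have := key W h
    have h2 : (0:ℝ) ≤ 1 / W := by positivity
    linarith
  · rw [Finset.Icc_eq_empty (by omega)]; norm_num

theorem big_primes (k W : ℕ) (hW : (k+1).factorial ≤ W) (hW1 : 1 ≤ W) (l : ℕ) (hl : l ≠ 0) (hl2 : l < (k+1).factorial * W^(k+1)) :
    (l.primeFactors.filter (fun p => W < p)).card ≤ k + 1 := by
  by_contra hcon
  push Not at hcon
  have h1 : ∏ p ∈ l.primeFactors.filter (fun p => W < p), p ∣ l :=
    (Finset.prod_dvd_prod_of_subset _ _ _ (Finset.filter_subset _ _)).trans (Nat.prod_primeFactors_dvd l)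
  have h2 := Nat.le_of_dvd (Nat.pos_of_ne_zero hl) h1
  have h3 := Finset.pow_card_le_prod (l.primeFactors.filter (fun p => W < p)) (fun p => p) W
    (fun p hp => (Finset.mem_filter.1 hp).2.le)
  have h4 : W ^ (k+2) ≤ W ^ (l.primeFactors.filter (fun p => W < p)).card := Nat.pow_le_pow_right hW1 hcon
  have h5 : (k+1).factorial * W^(k+1) ≤ W ^ (k+2) := by
    rw [pow_succ' W (k+1)]; gcongr
  omega

theorem pair_count (k : ℕ) : ∃ b0 : ℕ, ∀ b ≥ b0, ∀ e : Fin (k+1) → ℤ, (∃ t, t ⬝ᵥ e = 1) →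
    (∀ x ∈ bx (k+1) b, |x ⬝ᵥ e| < (((k+1).factorial * (2*b+1)^(k+1) : ℕ) : ℤ)) →
    (1/12 : ℝ) * ((2*b+1:ℕ):ℝ)^(2*(k+1)) ≤
      ((((bx (k+1) b) ×ˢ (bx (k+1) b)).filter (fun z => IsCoprime (z.1 ⬝ᵥ e) (z.2 ⬝ᵥ e))).card : ℝ) := by
  classical
  refine ⟨(k+1).factorial + 12 * (2 * (k+1) + 12), fun b hb e he hbd => ?_⟩
  obtain ⟨t, ht⟩ := he
  set W := 2*b+1 with hW
  set X := bx (k+1) b with hX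
  let Xp : ℕ → Finset (Fin (k+1) → ℤ) := fun p => X.filter (fun x => (p:ℤ) ∣ x ⬝ᵥ e)
  have hXc : X.card = W^(k+1) := card_bx _ _
  have hW0 : (0:ℝ) < W := by rw [hW]; positivity
  have hXp : ∀ p : ℕ, p.Prime → (Xp p).card ≤ (W/p+1) * W^k := by
    intro p hp
    have : ∃ j, ¬ (p:ℤ) ∣ e j := by
      by_contra hcon
      push Not at hcon
      have : (p:ℤ) ∣ t ⬝ᵥ e := Finset.dvd_sum fun i _ => (hcon i).mul_left _
      rw [ht] at this
      have := Int.isUnit_iff_natAbs_eq.1 (isUnit_of_dvd_one this)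
      simp at this
      exact hp.one_lt.ne' this
    obtain ⟨j, hj⟩ := this
    exact line_count k b p hp e j hj
  have hXbig : ∀ p : ℕ, p.Prime → W < p → ((Xp p).card : ℝ) ≤ (W:ℝ)^k := by
    intro p hp h
    have := hXp p hp
    rw [Nat.div_eq_of_lt h] at this
    have h2 : (Xp p).card ≤ W^k := by simpa using this
    exact_mod_cast h2
  have hXsm : ∀ p : ℕ, p.Prime → ((Xp p).card : ℝ) ≤ ((W:ℝ)/p+1) * (W:ℝ)^k := by
    intro p hp
    have h1 : ((Xp p).card : ℝ) ≤ (((W/p+1) * W^k : ℕ) : ℝ) := by exact_mod_cast hXp p hp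
    refine h1.trans ?_
    push_cast
    gcongr
    exact Nat.cast_div_le
  let Z := X.filter (fun x => x ⬝ᵥ e = 0)
  have hZ : (Z.card : ℝ) ≤ (W:ℝ)^k := by
    obtain ⟨p, hp1, hp2⟩ := Nat.exists_infinite_primes (W+1)
    refine le_trans ?_ (hXbig p hp2 (by omega))
    norm_cast
    apply Finset.card_le_card
    intro x hx
    simp only [Z, Xp, Finset.mem_filter] at hx ⊢
    exact ⟨hx.1, by rw [hx.2]; exact dvd_zero _⟩
  let P1 := (Finset.Icc 2 W).filter Nat.Prime
  let P2 : (Fin (k+1) → ℤ) → Finset ℕ := fun x => (x ⬝ᵥ e).natAbs.primeFactors.filter (fun p => W < p)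
  let Bad := (X ×ˢ X).filter (fun z => ¬ IsCoprime (z.1 ⬝ᵥ e) (z.2 ⬝ᵥ e))
  let X' := X.filter (fun x => x ⬝ᵥ e ≠ 0)
  have hsub : Bad ⊆ (Z ×ˢ X) ∪ (P1.biUnion (fun p => Xp p ×ˢ Xp p)) ∪
      (X'.biUnion fun x => (P2 x).biUnion fun p => {x} ×ˢ Xp p) := by
    intro z hz
    simp only [Bad, Finset.mem_filter, Finset.mem_product] at hz
    obtain ⟨⟨hz1, hz2⟩, hz3⟩ := hz
    by_cases h0 : z.1 ⬝ᵥ e = 0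
    · apply Finset.mem_union_left; apply Finset.mem_union_left
      simp only [Z, Finset.mem_product, Finset.mem_filter]
      exact ⟨⟨hz1, h0⟩, hz2⟩
    rw [Int.isCoprime_iff_gcd_eq_one, Int.gcd] at hz3
    obtain ⟨p, hp, hp1, hp2⟩ := Nat.Prime.not_coprime_iff_dvd.1 hz3
    have hp1' := Int.natCast_dvd.2 hp1
    have hp2' := Int.natCast_dvd.2 hp2
    by_cases hpW : p ≤ W
    · apply Finset.mem_union_left; apply Finset.mem_union_right
      rw [Finset.mem_biUnion]
      refine ⟨p, ?_, ?_⟩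
      · simp only [P1, Finset.mem_filter, Finset.mem_Icc]
        exact ⟨⟨hp.two_le, hpW⟩, hp⟩
      · simp only [Xp, Finset.mem_product, Finset.mem_filter]
        exact ⟨⟨hz1, hp1'⟩, hz2, hp2'⟩
    · apply Finset.mem_union_right
      rw [Finset.mem_biUnion]
      refine ⟨z.1, Finset.mem_filter.2 ⟨hz1, h0⟩, ?_⟩
      rw [Finset.mem_biUnion]
      refine ⟨p, ?_, ?_⟩
      · simp only [P2, Finset.mem_filter, Nat.mem_primeFactors]
        exact ⟨⟨hp, hp1, by simpa using h0⟩, by omega⟩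
      · simp only [Xp, Finset.mem_product, Finset.mem_filter, Finset.mem_singleton]
        exact ⟨trivial, hz2, hp2'⟩
  have hc1 : ((Z ×ˢ X).card : ℝ) ≤ (W:ℝ)^k * (W:ℝ)^(k+1) := by
    rw [Finset.card_product, hXc]; push_cast; gcongr
  have hc2 : ((P1.biUnion (fun p => Xp p ×ˢ Xp p)).card : ℝ) ≤
      (5/6 + 10 / W) * ((W:ℝ)^(k+1))^2 := by
    have h1 : ((P1.biUnion (fun p => Xp p ×ˢ Xp p)).card : ℝ) ≤ ∑ p ∈ P1, ((Xp p ×ˢ Xp p).card : ℝ) := by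
      exact_mod_cast Finset.card_biUnion_le
    have h2 : ∀ p ∈ P1, ((Xp p ×ˢ Xp p).card : ℝ) ≤
        (10/9 * (1/(p:ℝ)^2) + 10 / (W:ℝ)^2) * ((W:ℝ)^(k+1))^2 := by
      intro p hp
      have hpp := (Finset.mem_filter.1 hp).2
      have hp0 : (0:ℝ) < p := by exact_mod_cast hpp.pos
      rw [Finset.card_product]
      push_cast
      have h3 := hXsm p hpp
      calc ((Xp p).card : ℝ) * (Xp p).card ≤ (((W:ℝ)/p+1) * (W:ℝ)^k) * (((W:ℝ)/p+1) * (W:ℝ)^k) := by gcongr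
        _ = (1/p + 1/W)^2 * ((W:ℝ)^(k+1))^2 := by field_simp; ring
        _ ≤ _ := by
          gcongr
          have : 10/9 * (1/(p:ℝ)^2) + 10 / (W:ℝ)^2 - (1/p + 1/W)^2 = (1/3 * (1/p) - 3 * (1/W))^2 := by
            field_simp; ring
          nlinarith [sq_nonneg (1/3 * (1/(p:ℝ)) - 3 * (1/(W:ℝ)))]
    refine h1.trans ((Finset.sum_le_sum h2).trans ?_)
    have h4 : ∑ p ∈ P1, (10/9 * (1/(p:ℝ)^2) + 10 / (W:ℝ)^2) * ((W:ℝ)^(k+1))^2 ≤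
        ∑ p ∈ Finset.Icc 2 W, (10/9 * (1/(p:ℝ)^2) + 10 / (W:ℝ)^2) * ((W:ℝ)^(k+1))^2 := by
      apply Finset.sum_le_sum_of_subset_of_nonneg (Finset.filter_subset _ _)
      intros; positivity
    refine h4.trans ?_
    rw [← Finset.sum_mul, Finset.sum_add_distrib, ← Finset.mul_sum, Finset.sum_const, nsmul_eq_mul]
    gcongr ?_ * _
    have h5 := sum_sq W
    have h6 : (((Finset.Icc 2 W).card : ℕ) : ℝ) * (10 / (W:ℝ)^2) ≤ 10 / W := by
      have : (((Finset.Icc 2 W).card : ℕ) : ℝ) ≤ W := by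
        rw [Nat.card_Icc]; norm_cast; omega
      calc _ ≤ (W:ℝ) * (10 / (W:ℝ)^2) := by gcongr
        _ = _ := by field_simp
    linarith
  have hc3 : ((X'.biUnion fun x => (P2 x).biUnion fun p => {x} ×ˢ Xp p).card : ℝ) ≤
      (W:ℝ)^(k+1) * ((k+1) * (W:ℝ)^k) := by
    have h1 : ((X'.biUnion fun x => (P2 x).biUnion fun p => {x} ×ˢ Xp p).card : ℝ) ≤
      ∑ x ∈ X', (((P2 x).biUnion fun p => {x} ×ˢ Xp p).card : ℝ) := by exact_mod_cast Finset.card_biUnion_le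
    have h2 : ∀ x ∈ X', (((P2 x).biUnion fun p => {x} ×ˢ Xp p).card : ℝ) ≤ (k+1) * (W:ℝ)^k := by
      intro x hx
      obtain ⟨hx1, hx2⟩ := Finset.mem_filter.1 hx
      have h3 : (((P2 x).biUnion fun p => {x} ×ˢ Xp p).card : ℝ) ≤ ∑ p ∈ P2 x, ((({x} : Finset _) ×ˢ Xp p).card : ℝ) := by
        exact_mod_cast Finset.card_biUnion_le
      refine h3.trans ?_
      have h4 : ∀ p ∈ P2 x, ((({x} : Finset (Fin (k+1) → ℤ)) ×ˢ Xp p).card : ℝ) ≤ (W:ℝ)^k := by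
        intro p hp
        rw [Finset.card_product, Finset.card_singleton, one_mul]
        simp only [P2, Finset.mem_filter, Nat.mem_primeFactors] at hp
        exact hXbig p hp.1.1 hp.2
      refine (Finset.sum_le_card_nsmul _ _ _ h4).trans ?_
      rw [nsmul_eq_mul]
      gcongr
      have h5 : (P2 x).card ≤ k + 1 := by
        apply big_primes k W (by omega) (by omega)
        · simpa using hx2
        · have := hbd x hx1
          rw [Int.abs_eq_natAbs] at this
          exact_mod_cast this
      exact_mod_cast h5
    refine h1.trans ((Finset.sum_le_card_nsmul _ _ _ h2).trans ?_)
    rw [nsmul_eq_mul]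
    gcongr
    have : X'.card ≤ W^(k+1) := by rw [← hXc]; exact Finset.card_filter_le _ _
    exact_mod_cast this
  have hbad : (Bad.card : ℝ) ≤ (W:ℝ)^k * (W:ℝ)^(k+1) + (5/6 + 10 / W) * ((W:ℝ)^(k+1))^2 + (W:ℝ)^(k+1) * ((k+1) * (W:ℝ)^k) := by
    have h1 : (Bad.card : ℝ) ≤ ((Z ×ˢ X).card + (P1.biUnion (fun p => Xp p ×ˢ Xp p)).card +
       (X'.biUnion fun x => (P2 x).biUnion fun p => {x} ×ˢ Xp p).card : ℕ) := by
      norm_cast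
      refine (Finset.card_le_card hsub).trans ((Finset.card_union_le _ _).trans ?_)
      gcongr
      exact Finset.card_union_le _ _
    push_cast at h1
    linarith
  have hsum := Finset.card_filter_add_card_filter_not (s := X ×ˢ X) (fun z => IsCoprime (z.1 ⬝ᵥ e) (z.2 ⬝ᵥ e))
  rw [Finset.card_product, hXc] at hsum
  have hsum' : ((((X ×ˢ X).filter (fun z => IsCoprime (z.1 ⬝ᵥ e) (z.2 ⬝ᵥ e))).card : ℕ) : ℝ) + (Bad.card : ℝ) = (W:ℝ)^(k+1) * (W:ℝ)^(k+1) := by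
    exact_mod_cast hsum
  have hWb : (12:ℝ) * (2 * (k+1) + 12) ≤ W := by
    have : 12 * (2 * (k+1) + 12) ≤ W := by omega
    exact_mod_cast this
  have hfin : (W:ℝ)^k * (W:ℝ)^(k+1) + (5/6 + 10 / W) * ((W:ℝ)^(k+1))^2 + (W:ℝ)^(k+1) * ((k+1) * (W:ℝ)^k) ≤ 11/12 * ((W:ℝ)^(k+1) * (W:ℝ)^(k+1)) := by
    have e1 : (W:ℝ)^k * (W:ℝ)^(k+1) + (5/6 + 10 / W) * ((W:ℝ)^(k+1))^2 + (W:ℝ)^(k+1) * ((k+1) * (W:ℝ)^k) =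
      (5/6 + (k + 12) / W) * ((W:ℝ)^(k+1) * (W:ℝ)^(k+1)) := by
      rw [pow_succ]; field_simp; ring
    rw [e1]
    gcongr
    have : ((k:ℝ) + 12) / W ≤ 1/12 := by
      rw [div_le_iff₀ hW0]; nlinarith [(Nat.cast_nonneg k : (0:ℝ) ≤ k)]
    linarith
  have e2 : (W:ℝ)^(2*(k+1)) = (W:ℝ)^(k+1) * (W:ℝ)^(k+1) := by rw [two_mul, pow_add]
  rw [e2]
  linarith

end E1

end PartE1

section PartE2

open Polynomial Matrix
open MeasureTheory
open scoped Pointwise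

section E2

def cm {k : ℕ} (x : Fin (k+1) → ℤ) (E : Fin k → Fin (k+1) → ℤ) : Matrix (Fin (k+1)) (Fin (k+1)) ℤ :=
  Matrix.of (Fin.cons x E : Fin (k+1) → Fin (k+1) → ℤ)

def ev {k : ℕ} (E : Fin k → Fin (k+1) → ℤ) (i : Fin (k+1)) : ℤ := (cm (Pi.single i 1) E).det

theorem cm_upd {k : ℕ} (x y : Fin (k+1) → ℤ) (E : Fin k → Fin (k+1) → ℤ) :
    (cm x E).updateRow 0 y = cm y E := by
  ext i j
  refine Fin.cases ?_ (fun i => ?_) i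
  · simp [cm]
  · simp [cm]

theorem ev_adj {k : ℕ} (x : Fin (k+1) → ℤ) (E : Fin k → Fin (k+1) → ℤ) (i : Fin (k+1)) :
    (cm x E).adjugate i 0 = ev E i := by
  rw [Matrix.adjugate_apply, cm_upd, ev]

theorem det_cm {k : ℕ} (x : Fin (k+1) → ℤ) (E : Fin k → Fin (k+1) → ℤ) :
    (cm x E).det = x ⬝ᵥ ev E := by
  rw [Matrix.det_eq_sum_mul_adjugate_row _ 0]
  simp only [dotProduct, ev_adj]
  rfl

/-- the new frame -/
def nf {k : ℕ} (x y : Fin (k+1) → ℤ) (E : Fin k → Fin (k+1) → ℤ) : Fin (k+1) → Fin (k+2) → ℤ :=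
  fun j => Fin.cons (x j) (Fin.cons (y j) (fun i => E i j))

theorem nf_det {k : ℕ} (x y : Fin (k+1) → ℤ) (E : Fin k → Fin (k+1) → ℤ) (a b : ℤ) :
    (cm (Fin.cons a (Fin.cons b 0)) (nf x y E)).det = a * (cm y E).det - b * (cm x E).det := by
  rw [Matrix.det_succ_row_zero, Fin.sum_univ_succ, Fin.sum_univ_succ]
  have h0 : ∀ i : Fin k, cm (Fin.cons a (Fin.cons b 0)) (nf x y E) 0 i.succ.succ = 0 := by
    intro i; simp [cm]
  have s0 : (cm (Fin.cons a (Fin.cons b 0)) (nf x y E)).submatrix Fin.succ (Fin.succAbove 0) = (cm y E)ᵀ := by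
    ext i j
    refine Fin.cases ?_ (fun j => ?_) j
    · simp [cm, nf]
    · simp [cm, nf]
  have s1 : (cm (Fin.cons a (Fin.cons b 0)) (nf x y E)).submatrix Fin.succ (Fin.succAbove (Fin.succ 0)) = (cm x E)ᵀ := by
    ext i j
    refine Fin.cases ?_ (fun j => ?_) j
    · simp [cm, nf]
    · simp [cm, nf]
  rw [s0, s1, Matrix.det_transpose, Matrix.det_transpose]
  simp only [h0]
  simp [cm]
  ring

theorem nf_inj {k : ℕ} {x y x' y' : Fin (k+1) → ℤ} {E E' : Fin k → Fin (k+1) → ℤ} (h : nf x y E = nf x' y' E') :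
    E = E' ∧ x = x' ∧ y = y' := by
  refine ⟨?_, ?_, ?_⟩
  · ext i j
    have := congrFun (congrFun h j) i.succ.succ
    simpa [nf] using this
  · ext j
    have := congrFun (congrFun h j) 0
    simpa [nf] using this
  · ext j
    have := congrFun (congrFun h j) (Fin.succ 0)
    simpa [nf] using this

theorem frames (k : ℕ) : ∃ c : ℝ, 0 < c ∧ ∃ b0 : ℕ, ∀ b ≥ b0, ∃ S : Finset (Fin k → Fin (k+1) → ℤ),
    (∀ E ∈ S, (∃ t, t ⬝ᵥ ev E = 1) ∧ ∀ i j, |E i j| ≤ (b:ℤ)) ∧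
    c * ((2*b+1:ℕ):ℝ)^((k+1)*k) ≤ (S.card : ℝ) := by
  classical
  induction k with
  | zero =>
    refine ⟨1, one_pos, 0, fun b _ => ⟨{fun i => Fin.elim0 i}, ?_, by simp⟩⟩
    intro E hE
    refine ⟨⟨fun _ => 1, ?_⟩, fun i => Fin.elim0 i⟩
    rw [← det_cm]
    simp [cm]
  | succ k ih =>
    obtain ⟨c, hc, b0, h⟩ := ih
    obtain ⟨b1, h1⟩ := pair_count k
    refine ⟨c * (1/12), by positivity, max b0 (max b1 1), fun b hb => ?_⟩
    simp only [ge_iff_le, max_le_iff] at hb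
    obtain ⟨S, hS1, hS2⟩ := h b hb.1
    let G : (Fin k → Fin (k+1) → ℤ) → Finset ((Fin (k+1) → ℤ) × (Fin (k+1) → ℤ)) := fun E =>
      ((bx (k+1) b) ×ˢ (bx (k+1) b)).filter (fun z => IsCoprime (z.1 ⬝ᵥ ev E) (z.2 ⬝ᵥ ev E))
    refine ⟨(S.sigma G).image (fun a => nf a.2.1 a.2.2 a.1), ?_, ?_⟩
    · intro E' hE'
      rw [Finset.mem_image] at hE'
      obtain ⟨⟨E, x, y⟩, ha, rfl⟩ := hE'
      rw [Finset.mem_sigma] at ha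
      obtain ⟨hE, hxy⟩ := ha
      simp only [G, Finset.mem_filter, Finset.mem_product, mem_bx] at hxy
      obtain ⟨⟨hx, hy⟩, u, v, huv⟩ := hxy
      constructor
      · refine ⟨Fin.cons v (Fin.cons (-u) 0), ?_⟩
        rw [← det_cm, nf_det, det_cm, det_cm]
        linarith
      · intro i j
        refine Fin.cases ?_ (fun j => Fin.cases ?_ (fun j => ?_) j) j
        · simpa [nf] using hx i
        · simpa [nf] using hy i
        · simpa [nf] using (hS1 E hE).2 j i
    · rw [Finset.card_image_of_injOn, Finset.card_sigma]
      · have hG : ∀ E ∈ S, (1/12 : ℝ) * ((2*b+1:ℕ):ℝ)^(2*(k+1)) ≤ ((G E).card : ℝ) := by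
          intro E hE
          refine h1 b hb.2.1 (ev E) (hS1 E hE).1 ?_
          intro x hx
          rw [← det_cm]
          have := det_bound ((cm x E).map (fun z : ℤ => (z:ℝ))) (fun _ => (b:ℝ)) (by
            intro i j
            have : |cm x E i j| ≤ (b:ℤ) := by
              refine Fin.cases ?_ (fun i => ?_) i
              · simpa [cm] using mem_bx.1 hx j
              · simpa [cm] using (hS1 E hE).2 i j
            simp only [Matrix.map_apply]
            exact_mod_cast this)
          rw [← cast_det] at this
          simp only [Finset.prod_const, Finset.card_univ, Fintype.card_fin] at this
          have h2 : |(cm x E).det| ≤ (((k+1).factorial * b^(k+1) : ℕ) : ℤ) := by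
            have : |(((cm x E).det : ℤ) : ℝ)| ≤ (((k+1).factorial * b^(k+1) : ℕ) : ℝ) := by
              rw [Nat.cast_mul, Nat.cast_pow]; exact this
            exact_mod_cast this
          refine h2.trans_lt ?_
          norm_cast
          apply Nat.mul_lt_mul_of_pos_left _ (Nat.factorial_pos _)
          exact Nat.pow_lt_pow_left (by omega) (by omega)
        push_cast
        calc c * (1/12) * (2 * (b:ℝ) + 1)^((k+1+1)*(k+1)) =
            (c * (2 * (b:ℝ) + 1)^((k+1)*k)) * ((1/12) * (2 * (b:ℝ) + 1)^(2*(k+1))) := by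
              rw [show (k+1+1)*(k+1) = (k+1)*k + 2*(k+1) by ring, pow_add]; ring
          _ ≤ S.card * ((1/12) * (2 * (b:ℝ) + 1)^(2*(k+1))) := by
              push_cast at hS2
              gcongr
          _ ≤ _ := by
              rw [← nsmul_eq_mul]
              apply Finset.card_nsmul_le_sum
              intro E hE
              have := hG E hE
              push_cast at this
              exact this
      · rintro ⟨E, x, y⟩ _ ⟨E', x', y'⟩ _ h
        obtain ⟨rfl, rfl, rfl⟩ := nf_inj h
        rfl

theorem complete {d b : ℕ} (hb : 1 ≤ b) (E : Fin d → Fin (d+1) → ℤ) (hE : ∃ t, t ⬝ᵥ ev E = 1) (hEb : ∀ i j, |E i j| ≤ (b:ℤ)) :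
    ∃ t, InT d ((d+1)*b) (cm t E) := by
  obtain ⟨t, ht⟩ := hE
  have hj : ∃ j, ev E j ≠ 0 := by
    by_contra hcon
    push Not at hcon
    have : ev E = 0 := funext hcon
    rw [this] at ht
    simp at ht
  obtain ⟨j, hj⟩ := hj
  let g := cm t E
  have hdet : g.det = 1 := by rw [det_cm, ht]
  -- adjugate relation
  have hadj : g.adjugate * g = 1 := by rw [Matrix.adjugate_mul, hdet, one_smul]
  let x : ℝ := 1 / (ev E j : ℝ)
  have hx : |x| ≤ 1 := by
    have : (1:ℝ) ≤ |(ev E j : ℝ)| := by exact_mod_cast Int.one_le_abs hj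
    simp only [x]
    rw [abs_div, abs_one]
    exact div_le_one_of_le₀ this (abs_nonneg _)
  let c : Fin (d+1) → ℝ := fun l => x * (g.adjugate j l : ℝ)
  have hc0 : c 0 = 1 := by
    have : (ev E j : ℝ) ≠ 0 := by exact_mod_cast hj
    simp only [c, g, ev_adj, x]
    field_simp
  have hrel : ∀ l, ∑ i, c i * (g i l : ℝ) = if j = l then x else 0 := by
    intro l
    have := congrFun (congrFun hadj j) l
    rw [Matrix.mul_apply, Matrix.one_apply] at this
    have h2 : ∑ i, (g.adjugate j i : ℝ) * (g i l : ℝ) = if j = l then 1 else 0 := by exact_mod_cast this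
    simp only [c, mul_assoc]
    rw [← Finset.mul_sum, h2]
    split_ifs <;> simp
  let t' : Fin (d+1) → ℤ := fun l => t l + ∑ i : Fin d, ⌊c i.succ⌋ * E i l
  refine ⟨t', ?_, ?_⟩
  · rw [det_cm]
    have h0 : ∀ i : Fin d, E i ⬝ᵥ ev E = 0 := by
      intro i
      rw [← det_cm]
      apply Matrix.det_zero_of_row_eq (i := 0) (j := i.succ) (Fin.succ_ne_zero i).symm
      ext l
      simp [cm]
    have : t' = t + ∑ i : Fin d, ⌊c i.succ⌋ • E i := by
      ext l; simp [t', Finset.sum_apply]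
    rw [this, add_dotProduct, ht, sum_dotProduct]
    simp only [smul_dotProduct, h0, smul_zero, Finset.sum_const_zero, add_zero]
  · intro i l
    refine Fin.cases ?_ (fun i => ?_) i
    · have e : cm t' E 0 l = t' l := by simp [cm]
      rw [e]
      have h1 := hrel l
      rw [Fin.sum_univ_succ, hc0] at h1
      have g0 : g 0 l = t l := by simp [g, cm]
      have gs : ∀ i : Fin d, g i.succ l = E i l := by intro i; simp [g, cm]
      simp only [g0, gs, one_mul] at h1
      have h2 : (t' l : ℝ) = (if j = l then x else 0) - ∑ i : Fin d, Int.fract (c i.succ) * E i l := by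
        rw [← h1]
        simp only [t', Int.fract, sub_mul, Finset.sum_sub_distrib]
        push_cast
        ring
      have h3 : |(t' l : ℝ)| ≤ 1 + d * b := by
        rw [h2]
        refine (abs_sub _ _).trans ?_
        gcongr
        · split_ifs
          · exact hx
          · simp
        · refine (Finset.abs_sum_le_sum_abs _ _).trans ?_
          have : ∀ i ∈ (Finset.univ : Finset (Fin d)), |Int.fract (c i.succ) * (E i l : ℝ)| ≤ b := by
            intro i _
            rw [abs_mul, abs_of_nonneg (Int.fract_nonneg _)]
            have h4 : |(E i l : ℝ)| ≤ b := by exact_mod_cast hEb i l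
            have h5 := (Int.fract_lt_one (c i.succ)).le
            calc _ ≤ 1 * |(E i l : ℝ)| := by gcongr
              _ ≤ b := by linarith
          refine (Finset.sum_le_card_nsmul _ _ _ this).trans ?_
          simp
      have h4 : |t' l| ≤ 1 + d * b := by exact_mod_cast h3
      refine h4.trans ?_
      push_cast
      have : (1:ℤ) ≤ b := by exact_mod_cast hb
      linarith
    · have : |E i l| ≤ (b:ℤ) := hEb i l
      simp only [cm, Matrix.of_apply, Fin.cons_succ]
      refine this.trans ?_
      push_cast
      nlinarith [(Int.natCast_nonneg b), (Int.natCast_nonneg d)]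

theorem lower (d : ℕ) : ∃ c : ℝ, 0 < c ∧ ∃ B0 : ℕ, ∀ B ≥ B0, ∃ S : Finset (Matrix (Fin (d+1)) (Fin (d+1)) ℤ),
    (∀ N ∈ S, InT d B N) ∧ c * (B:ℝ)^((d+1)*d) ≤ (S.card : ℝ) := by
  classical
  obtain ⟨c, hc, b0, h⟩ := frames d
  refine ⟨c * (1/(d+1))^((d+1)*d), by positivity, (d+1) * (b0+1), fun B hB => ?_⟩
  let b := B / (d+1)
  have hb : b0 + 1 ≤ b := by
    rw [Nat.le_div_iff_mul_le (by omega)]; linarith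
  have hb1 : 1 ≤ b := by omega
  obtain ⟨S, hS1, hS2⟩ := h b (by omega)
  have hcomp := fun E : S => complete hb1 E.1 (hS1 E.1 E.2).1 (hS1 E.1 E.2).2
  choose t ht using hcomp
  refine ⟨Finset.univ.image (fun E : S => cm (t E) E.1), ?_, ?_⟩
  · intro N hN
    rw [Finset.mem_image] at hN
    obtain ⟨E, _, rfl⟩ := hN
    refine ⟨(ht E).1, fun i j => ((ht E).2 i j).trans ?_⟩
    have := Nat.mul_div_le B (d+1)
    exact_mod_cast this
  · rw [Finset.card_image_of_injective]
    · simp only [Finset.card_univ, Fintype.card_coe]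
      refine le_trans ?_ hS2
      rw [mul_assoc, ← mul_pow]
      gcongr
      have : B < (d+1) * (b + 1) := Nat.lt_mul_div_succ B (by omega)
      have h1 : (B:ℝ) ≤ (d+1) * (b+1) := by exact_mod_cast this.le
      rw [one_div, inv_mul_le_iff₀ (by positivity)]
      push_cast
      refine h1.trans ?_
      gcongr
      have : (0:ℝ) ≤ b := by positivity
      linarith
    · intro E E' h
      apply Subtype.ext
      ext i j
      have := congrFun (congrFun h i.succ) j
      simpa [cm] using this

end E2

end PartE2

section PartG1

open Polynomial Matrix
open MeasureTheory
open scoped Pointwise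

section G1

theorem fib (d : ℕ) (P : MvPolynomial (Fin d) ℚ)
    (hP : ∀ f : ℤ[X], f.Monic → f.natDegree = d+1 →
      f.coeff 0 * f.coeff 0 = 1 → ¬ Irreducible (f.map (algebraMap ℤ ℚ)) →
      MvPolynomial.eval (fun i : Fin d => (f.coeff (i+1) : ℚ)) P = 0)
    (m ξ : Fin (d+1) → ℤ) (h0 : m ⬝ᵥ ξ = 0) (s : ℝ) (Q : ℕ)
    (hs0 : 0 < s) (hs : ∀ k, Q * |(ξ k : ℝ)| * s ≤ 1) (B : ℕ)
    (S : Finset (Matrix (Fin (d+1)) (Fin (d+1)) ℤ))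
    (hS : ∀ M ∈ S, InT d B M ∧ ¬ Irreducible ((Matrix.charpoly M).map (algebraMap ℤ ℚ)) ∧
      ∀ j, |(((m ᵥ* M) j : ℤ) : ℝ)| ≤ s * B) :
    ∃ S1 S0 : Finset (Matrix (Fin (d+1)) (Fin (d+1)) ℤ),
      (∀ N ∈ S1, InT d (2*B) N ∧ ∀ j, |(((m ᵥ* N) j : ℤ) : ℝ)| ≤ s * B) ∧
      (∀ N ∈ S0, InT d (2*B) N ∧ MvPolynomial.eval (fun i : Fin d => (((F1 m ξ N).coeff i : ℤ) : ℚ))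
        (MvPolynomial.homogeneousComponent P.totalDegree P) = 0) ∧
      Q * S.card ≤ P.totalDegree * S1.card + Q * S0.card := by
  classical
  let f : Matrix (Fin (d+1)) (Fin (d+1)) ℤ × ℕ → Matrix (Fin (d+1)) (Fin (d+1)) ℤ :=
    fun u => (1 - (-(u.2:ℤ)) • vecMulVec ξ m) * u.1
  have hVV : vecMulVec ξ m * vecMulVec ξ m = 0 := by
    rw [vecMulVec_mul_vecMulVec, h0, zero_smul, vecMulVec_zero]
  have hinv : ∀ u, (1 - (u.2:ℤ) • vecMulVec ξ m) * f u = u.1 := by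
    intro u
    simp only [f]
    rw [← Matrix.mul_assoc]
    have : (1 - (u.2:ℤ) • vecMulVec ξ m) * (1 - (-(u.2:ℤ)) • vecMulVec ξ m) = 1 := by
      simp only [Matrix.sub_mul, Matrix.mul_sub, Matrix.smul_mul, Matrix.mul_smul, hVV]
      simp
    rw [this, Matrix.one_mul]
  have hf : ∀ u ∈ S ×ˢ Finset.range Q, InT d (2*B) (f u) ∧ ∀ j, |(((m ᵥ* (f u)) j : ℤ) : ℝ)| ≤ s * B := by
    intro u hu
    rw [Finset.mem_product, Finset.mem_range] at hu
    obtain ⟨⟨hM1, hM2⟩, _, hM3⟩ := hS u.1 hu.1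
    refine ⟨⟨?_, ?_⟩, ?_⟩
    · simp only [f]; rw [det_move m ξ h0, hM1]
    · intro i j
      have e : f u i j = u.1 i j + (u.2:ℤ) * (ξ i * (m ᵥ* u.1) j) := by
        simp only [f]
        rw [Matrix.sub_mul, Matrix.one_mul, Matrix.smul_mul, vecMulVec_mul]
        simp [vecMulVec]
      rw [e]
      have h1 : |(u.1 i j : ℝ)| ≤ B := by exact_mod_cast hM2 i j
      have h2 := hM3 j
      have h3 : (u.2 : ℝ) ≤ Q := by exact_mod_cast hu.2.le
      have h4 : |((u.1 i j + (u.2:ℤ) * (ξ i * (m ᵥ* u.1) j) : ℤ) : ℝ)| ≤ 2 * B := by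
        push_cast
        refine (abs_add_le _ _).trans ?_
        have : |(u.2:ℝ) * ((ξ i : ℝ) * (((m ᵥ* u.1) j : ℤ) : ℝ))| ≤ B := by
          rw [abs_mul, abs_mul, abs_of_nonneg (Nat.cast_nonneg _)]
          calc (u.2:ℝ) * (|(ξ i : ℝ)| * |(((m ᵥ* u.1) j : ℤ) : ℝ)|) ≤ Q * (|(ξ i : ℝ)| * (s * B)) := by gcongr
            _ = (Q * |(ξ i : ℝ)| * s) * B := by ring
            _ ≤ 1 * B := by gcongr; exact hs i
            _ = B := one_mul _
        linarith
      exact_mod_cast h4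
    · simp only [f]
      rw [vecMul_move m ξ h0]
      exact hM3
  let Ψ : Matrix (Fin (d+1)) (Fin (d+1)) ℤ → Prop := fun N =>
    MvPolynomial.eval (fun i : Fin d => (((F1 m ξ N).coeff i : ℤ) : ℚ))
        (MvPolynomial.homogeneousComponent P.totalDegree P) = 0
  let U := S ×ˢ Finset.range Q
  let U1 := U.filter (fun u => ¬ Ψ (f u))
  let U0 := U.filter (fun u => Ψ (f u))
  refine ⟨U1.image f, U0.image f, ?_, ?_, ?_⟩
  · intro N hN
    obtain ⟨u, hu, rfl⟩ := Finset.mem_image.1 hN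
    exact hf u (Finset.mem_filter.1 hu).1
  · intro N hN
    obtain ⟨u, hu, rfl⟩ := Finset.mem_image.1 hN
    exact ⟨(hf u (Finset.mem_filter.1 hu).1).1, (Finset.mem_filter.1 hu).2⟩
  have hinj : ∀ N, ∀ W : Finset (Matrix (Fin (d+1)) (Fin (d+1)) ℤ × ℕ), Set.InjOn (fun u : Matrix (Fin (d+1)) (Fin (d+1)) ℤ × ℕ => u.2)
      (W.filter (fun u => f u = N) : Finset _) := by
    intro N W u hu u' hu' h
    simp only [Finset.coe_filter, Set.mem_ofPred_eq] at hu hu'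
    simp only at h
    have h1 := hinv u
    have h2 := hinv u'
    rw [hu.2, h] at h1
    rw [hu'.2] at h2
    exact Prod.ext (h1.symm.trans h2) h
  have c1 : U1.card ≤ P.totalDegree * (U1.image f).card := by
    apply Finset.card_le_mul_card_image
    intro N hN
    obtain ⟨u0, hu0, hu0N⟩ := Finset.mem_image.1 hN
    have hΨ : ¬ Ψ N := hu0N ▸ (Finset.mem_filter.1 hu0).2
    rw [← Finset.card_image_of_injOn (hinj N U1)]
    refine le_trans (Finset.card_le_card ?_) (few_zeros P (fun i : Fin d => ((N.charpoly.coeff (i+1) : ℤ) : ℚ))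
      (fun i : Fin d => (((F1 m ξ N).coeff i : ℤ) : ℚ)) hΨ Q)
    intro a ha
    obtain ⟨u, hu, rfl⟩ := Finset.mem_image.1 ha
    obtain ⟨hu1, huN⟩ := Finset.mem_filter.1 hu
    have huU := (Finset.mem_filter.1 hu1).1
    rw [Finset.mem_product] at huU
    obtain ⟨hM1, hM2, _⟩ := hS u.1 huU.1
    rw [Finset.mem_filter]
    refine ⟨huU.2, ?_⟩
    have hch : u.1.charpoly = N.charpoly + C (u.2:ℤ) * X * F1 m ξ N := by
      rw [← charpoly_move m ξ h0, ← huN, hinv]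
    have hz := hP u.1.charpoly (Matrix.charpoly_monic _) (by rw [Matrix.charpoly_natDegree_eq_dim, Fintype.card_fin]) (by
      have h1 := Matrix.det_eq_sign_charpoly_coeff u.1
      rw [hM1.1] at h1
      have h2 : ((-1:ℤ)^(Fintype.card (Fin (d+1)))) * ((-1:ℤ)^(Fintype.card (Fin (d+1)))) = 1 := by
        rw [← mul_pow]; simp
      calc u.1.charpoly.coeff 0 * u.1.charpoly.coeff 0 = (((-1:ℤ)^(Fintype.card (Fin (d+1)))) * ((-1:ℤ)^(Fintype.card (Fin (d+1))))) * (u.1.charpoly.coeff 0 * u.1.charpoly.coeff 0) := by rw [h2, one_mul]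
        _ = ((-1:ℤ)^(Fintype.card (Fin (d+1))) * u.1.charpoly.coeff 0) * ((-1:ℤ)^(Fintype.card (Fin (d+1))) * u.1.charpoly.coeff 0) := by ring
        _ = 1 := by rw [← h1]; norm_num) hM2
    rw [← hz]
    congr 2
    ext i
    rw [hch, Polynomial.coeff_add, mul_assoc, Polynomial.coeff_C_mul, Polynomial.coeff_X_mul]
    push_cast
    ring
  have c0 : U0.card ≤ Q * (U0.image f).card := by
    apply Finset.card_le_mul_card_image
    intro N hN
    rw [← Finset.card_image_of_injOn (hinj N U0)]
    refine le_trans (Finset.card_le_card (t := Finset.range Q) ?_) (by simp)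
    intro a ha
    obtain ⟨u, hu, rfl⟩ := Finset.mem_image.1 ha
    exact (Finset.mem_product.1 (Finset.mem_filter.1 (Finset.mem_filter.1 hu).1).1).2
  have hU : U0.card + U1.card = U.card := Finset.card_filter_add_card_filter_not _
  have hU2 : U.card = S.card * Q := by simp [U]
  rw [mul_comm Q S.card]
  omega

theorem upper (d : ℕ) (hd : 1 ≤ d) (ε : ℝ) (hε : 0 < ε) : ∃ B0 : ℕ, ∀ B ≥ B0,
    ∀ S : Finset (Matrix (Fin (d+1)) (Fin (d+1)) ℤ),
    (∀ M ∈ S, InT d B M ∧ ¬ Irreducible ((Matrix.charpoly M).map (algebraMap ℤ ℚ))) →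
    (S.card : ℝ) ≤ ε * (B:ℝ)^((d+1)*d) := by
  classical
  obtain ⟨P, hP0, hP⟩ := exists_P d
  obtain ⟨C1, hC1, h1⟩ := count1 d hd
  obtain ⟨C2, hC2, h2⟩ := count2 d hd
  set D := P.totalDegree
  obtain ⟨CΘ, hCΘ, hdi⟩ := dioph d hd (ε / (4 * C1)) (by positivity)
  obtain ⟨Q0, hQ0⟩ := exists_nat_ge (D * C2 * CΘ * 4 / ε)
  have hQpos : (0:ℝ) < ((Q0 + 1 : ℕ) : ℝ) := by positivity
  have hQ : D * C2 * CΘ * 4 / ε ≤ ((Q0 + 1 : ℕ) : ℝ) := by push_cast; linarith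
  set Q := Q0 + 1 with hQdef
  obtain ⟨ι, F, m, ξ, s, g1, g2, g3, g4, g5, g6, g7⟩ := hdi Q (by omega)
  obtain ⟨B1, hB1⟩ := h1 _ (by positivity) ι F m s g1 g2 g6
  set κ' : ℝ := ε / (4 * (F.card + 1) * 2^((d+1)*d)) with hκ'
  have hκ'pos : 0 < κ' := by positivity
  have hψ : ∀ᶠ B : ℕ in Filter.atTop, ∀ i ∈ F, ∀ S : Finset (Matrix (Fin (d+1)) (Fin (d+1)) ℤ),
    (∀ N ∈ S, InT d B N ∧
      MvPolynomial.eval (fun k : Fin d => (((F1 (m i) (ξ i) N).coeff k : ℤ) : ℚ))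
        (MvPolynomial.homogeneousComponent P.totalDegree P) = 0) →
    (S.card : ℝ) ≤ κ' * (B:ℝ) ^ ((d+1)*d) := by
    rw [Filter.eventually_all_finset]
    intro i hi
    rw [Filter.eventually_atTop]
    exact count_psi d hd _ (top_ne_zero P hP0) (m i) (ξ i) (g1 i hi).ne' (g3 i hi) (g4 i hi) κ' hκ'pos
  rw [Filter.eventually_atTop] at hψ
  obtain ⟨B2, hB2⟩ := hψ
  refine ⟨B1 + B2 + 1, fun B hB S hS => ?_⟩
  set Y : ℝ := (B:ℝ)^((d+1)*d) with hY
  have hYpos : 0 ≤ Y := by positivity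
  let A : ι → Finset (Matrix (Fin (d+1)) (Fin (d+1)) ℤ) := fun i =>
    S.filter (fun M => ∀ j, |(((m i ᵥ* M) j : ℤ) : ℝ)| ≤ s i * B)
  let S' := S.filter (fun M => ∀ i ∈ F, ∃ j, s i * B < |(((m i ᵥ* M) j : ℤ) : ℝ)|)
  have hcov : S ⊆ S' ∪ F.biUnion A := by
    intro M hM
    by_cases h : ∀ i ∈ F, ∃ j, s i * B < |(((m i ᵥ* M) j : ℤ) : ℝ)|
    · exact Finset.mem_union_left _ (Finset.mem_filter.2 ⟨hM, h⟩)
    · push Not at h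
      obtain ⟨i, hi, hj⟩ := h
      exact Finset.mem_union_right _ (Finset.mem_biUnion.2 ⟨i, hi, Finset.mem_filter.2 ⟨hM, hj⟩⟩)
  have hcard : (S.card : ℝ) ≤ S'.card + ∑ i ∈ F, ((A i).card : ℝ) := by
    have : S.card ≤ S'.card + ∑ i ∈ F, (A i).card :=
      (Finset.card_le_card hcov).trans ((Finset.card_union_le _ _).trans
        (Nat.add_le_add_left Finset.card_biUnion_le _))
    exact_mod_cast this
  have hS' : (S'.card : ℝ) ≤ ε/4 * Y := by
    have := hB1 B (by omega) S' (by
      intro N hN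
      obtain ⟨hN1, hN2⟩ := Finset.mem_filter.1 hN
      exact ⟨(hS N hN1).1, hN2⟩)
    refine this.trans (le_of_eq ?_)
    field_simp
    rfl
  have hA : ∀ i ∈ F, ((A i).card : ℝ) ≤ D * C2 / Q * Y * (s i / m i 0)^d + ε / (4 * (F.card + 1)) * Y := by
    intro i hi
    obtain ⟨S1, S0, k1, k2, k3⟩ := fib d P hP (m i) (ξ i) (g4 i hi) (s i) Q (g2 i hi) (g5 i hi) B (A i) (by
      intro M hM
      obtain ⟨hM1, hM2⟩ := Finset.mem_filter.1 hM
      exact ⟨(hS M hM1).1, (hS M hM1).2, hM2⟩)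
    have l1 := h2 (m i) (g1 i hi) (s i) (g2 i hi).le B (by omega) S1 k1
    have l2 := hB2 (2*B) (by omega) i hi S0 k2
    have k3' : (Q:ℝ) * (A i).card ≤ D * S1.card + Q * S0.card := by exact_mod_cast k3
    have l2' : (S0.card : ℝ) ≤ ε / (4 * (F.card + 1)) * Y := by
      refine l2.trans (le_of_eq ?_)
      rw [hκ', hY]
      push_cast
      rw [mul_pow]
      field_simp
    have : (Q:ℝ) * (A i).card ≤ Q * (D * C2 / Q * Y * (s i / m i 0)^d + ε / (4 * (F.card + 1)) * Y) := by
      calc (Q:ℝ) * (A i).card ≤ D * S1.card + Q * S0.card := k3'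
        _ ≤ D * (C2 * (s i / m i 0)^d * Y) + Q * (ε / (4 * (F.card + 1)) * Y) := by gcongr
        _ = _ := by field_simp
    exact le_of_mul_le_mul_left this hQpos
  have hsum : ∑ i ∈ F, ((A i).card : ℝ) ≤ ε/4 * Y + ε/4 * Y := by
    refine (Finset.sum_le_sum hA).trans ?_
    rw [Finset.sum_add_distrib, ← Finset.mul_sum, Finset.sum_const, nsmul_eq_mul]
    gcongr ?_ + ?_
    · calc D * C2 / Q * Y * ∑ i ∈ F, (s i / (m i 0 : ℝ))^d ≤ D * C2 / Q * Y * CΘ := by gcongr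
        _ = (D * C2 * CΘ / Q) * Y := by ring
        _ ≤ ε / 4 * Y := by
          apply mul_le_mul_of_nonneg_right _ hYpos
          rw [div_le_iff₀ hQpos]
          rw [div_le_iff₀ hε] at hQ
          linarith
    · rw [← mul_assoc]
      apply mul_le_mul_of_nonneg_right _ hYpos
      have : (F.card : ℝ) ≤ F.card + 1 := by linarith
      rw [mul_div_assoc', div_le_div_iff₀ (by positivity) (by positivity)]
      nlinarith
  nlinarith

theorem finT (d B : ℕ) : Set.Finite {M : Matrix (Fin (d+1)) (Fin (d+1)) ℤ | ∀ i j, |M i j| ≤ (B:ℤ)} := by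
  refine (Finset.finite_toSet (Fintype.piFinset (fun _ : Fin (d+1) => bx (d+1) B))).subset ?_
  intro M hM
  rw [Finset.mem_coe, Fintype.mem_piFinset]
  intro i
  rw [mem_bx]
  exact hM i

end G1

end PartG1

/-- the proportion of matrices in `SL(n, ℤ)` with entries bounded
by `B` whose characteristic polynomial is reducible over `ℚ` tends to `0` as
`B → ∞`. -/
theorem stmt8 (n : ℕ) (hn : 2 ≤ n) :
    Filter.Tendsto (fun B : ℕ =>
        (Set.ncard {M : Matrix (Fin n) (Fin n) ℤ |
            M.det = 1 ∧ (∀ i j, |M i j| ≤ (B : ℤ)) ∧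
            ¬ Irreducible ((Matrix.charpoly M).map (algebraMap ℤ ℚ))} : ℝ) /
        (Set.ncard {M : Matrix (Fin n) (Fin n) ℤ |
            M.det = 1 ∧ ∀ i j, |M i j| ≤ (B : ℤ)} : ℝ))
      Filter.atTop (nhds 0) := by
  obtain ⟨d, rfl⟩ : ∃ d, n = d + 1 := ⟨n - 1, by omega⟩
  have hd : 1 ≤ d := by omega
  obtain ⟨c, hc, B1, hlow⟩ := lower d
  rw [Metric.tendsto_atTop]
  intro ε hε
  obtain ⟨B2, hup⟩ := upper d hd (ε * c / 2) (by positivity)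
  refine ⟨B1 + B2 + 1, fun B hB => ?_⟩
  rw [Real.dist_eq, sub_zero, abs_of_nonneg (by positivity)]
  have hf2 : Set.Finite {M : Matrix (Fin (d+1)) (Fin (d+1)) ℤ | M.det = 1 ∧ ∀ i j, |M i j| ≤ (B : ℤ)} :=
    (finT d B).subset fun M hM => hM.2
  have hf1 : Set.Finite {M : Matrix (Fin (d+1)) (Fin (d+1)) ℤ |
            M.det = 1 ∧ (∀ i j, |M i j| ≤ (B : ℤ)) ∧
            ¬ Irreducible ((Matrix.charpoly M).map (algebraMap ℤ ℚ))} :=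
    (finT d B).subset fun M hM => hM.2.1
  have hBpos : (0:ℝ) < B := by exact_mod_cast (by omega : 0 < B)
  have e1 := hup B (by omega) hf1.toFinset (by
    intro M hM
    rw [Set.Finite.mem_toFinset] at hM
    exact ⟨⟨hM.1, hM.2.1⟩, hM.2.2⟩)
  obtain ⟨S, hS1, hS2⟩ := hlow B (by omega)
  have e2 : (S.card : ℝ) ≤ (hf2.toFinset.card : ℝ) := by
    norm_cast
    apply Finset.card_le_card
    intro M hM
    rw [Set.Finite.mem_toFinset]
    exact hS1 M hM
  rw [Set.ncard_eq_toFinset_card _ hf1, Set.ncard_eq_toFinset_card _ hf2]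
  have hY : (0:ℝ) < (B:ℝ)^((d+1)*d) := by positivity
  have hcY : 0 < c * (B:ℝ)^((d+1)*d) := by positivity
  rw [div_lt_iff₀ (by linarith)]
  calc (hf1.toFinset.card : ℝ) ≤ ε * c / 2 * (B:ℝ)^((d+1)*d) := e1
    _ < ε * (c * (B:ℝ)^((d+1)*d)) := by nlinarith [mul_pos hε hcY]
    _ ≤ ε * (hf2.toFinset.card : ℝ) := by gcongr; linarith
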